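/- Every finite-dimensional irreducible U'_q(L(sl₂))-module of type (1,1) with dimension at least 2 is isomorphic, as a U'_q(L(sl₂))-module, to a tensor product V(ℓ) ⊗ V(ℓ₁,a₁) ⊗ ⋯ ⊗ V(ℓₙ,aₙ) of evaluation modules for some ℓ ∈ ℤ≥0, n ∈ ℤ≥0, ℓᵢ ∈ ℤ≥1, aᵢ ∈ ℂ∖{0}. -/

import Mathlib

/-!
Write `x = E₀⁺`, `e = E₁⁺`, `f = E₁⁻`. With respect to the `K₀`-grading, `x` and `f` raise the weight and
`e` lowers it; a module of type `(1,1)` has `K₀`-weights among `-d, -d+2, …, d`.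

The argument is based on vectors `v` of lowest `K₀`-weight. The two `q`-Serre
relations allow every word in `e` and `x` to be straightened into irreducible words, in which no
exponent is at most its left neighbour and smaller than its right one (`local_rel`, `zigzag`). For
weight reasons, an irreducible word with equally many letters of both kinds kills `v` unless it is a
product of blocks `e^i x^i`. So if `v` is a common eigenvector of all `e^i x^i`, the part of lowest
weight of the submodule generated by `v` is the line through `v`. Applied to the submodule of `V × T`
generated by a pair of such vectors with equal eigenvalues, this shows that it is the graph of an
isomorphism of the irreducible modules `V` and `T` (`uniq`). Up to factors `([i]!)²`, the eigenvalues
are the coefficients of a polynomial `P` with constant term `1` and degree at most `d`, a version of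
the Drinfeld polynomial (`HasP`).

For the realization of all `P`, the lowest weight vector `v₀ ⊗ w₀` of `V(ℓ,a) ⊗ W` is considered.
Drinfeld polynomials multiply (`hP_T`), and `V(ℓ,a) ⊗ W` is irreducible if the Drinfeld polynomial of
`W` avoids two factors determined by `(ℓ,a)` (`cyclic_T`, `cocyclic_T`, `good_T`). The polynomial of
`V(ℓ,a)` is a `q`-string, so splitting off maximal `q`-strings realizes every polynomial with constant
term `1` by an irreducible tensor product of evaluation modules (`exists_good`).

A common eigenvector of the `e^i x^i` exists because these operators commute on the lowest weight
space (`S_comm`): the straightening of `e^b x^b e^a x^a`, `b ≤ a`, has universal coefficients, which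
can be computed in the tensor products just constructed, where the lowest weight space is a line.
These modules have enough Drinfeld polynomials to show that `e^a x^a e^b x^b` is the only surviving
term.

Finally, a factor `V(d - deg P, 0)`, whose Drinfeld polynomial is `1`, corrects the lowest weight of the
tensor product attached to `P`, and `uniq` applies.
-/

open scoped TensorProduct

noncomputable section

/-- The `q`-integer `[t] = (q^t - q^(-t))/(q - q⁻¹)`. -/
def qnum (q : ℂ) (t : ℤ) : ℂ := (q ^ t - q ^ (-t)) / (q - q⁻¹)

/-- The `q`-factorial `[t]! = [t][t-1]⋯[1]`. -/
def qfac (q : ℂ) (t : ℕ) : ℂ := ∏ k ∈ Finset.range t, qnum q ((k : ℤ) + 1)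

/-- Commutator `[X,Y] = XY - YX`. -/
def brk {V : Type*} [AddCommGroup V] [Module ℂ V] (X Y : Module.End ℂ V) :
    Module.End ℂ V := X * Y - Y * X

/-- `q`-commutator `[X,Y]_t = t XY - t⁻¹ YX`. -/
def brkq {V : Type*} [AddCommGroup V] [Module ℂ V] (t : ℂ) (X Y : Module.End ℂ V) :
    Module.End ℂ V := t • (X * Y) - t⁻¹ • (Y * X)

/-- A `U'_q(L(sl₂))`-module structure on a complex vector space `V`:
operators `(E₀⁺, E₁⁺, E₁⁻, K₀, K₁)` with `K₀, K₁` mutually inverse (hence invertible) and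
the defining relations; `K₀ = K₁⁻¹` throughout. -/
structure IsUqpRep (q : ℂ) {V : Type*} [AddCommGroup V] [Module ℂ V]
    (E0 E1p E1m K0 K1 : Module.End ℂ V) : Prop where
  K0K1 : K0 * K1 = 1
  K1K0 : K1 * K0 = 1
  K0E0 : K0 * E0 = q ^ 2 • (E0 * K0)
  K1E1p : K1 * E1p = q ^ 2 • (E1p * K1)
  K1E1m : K1 * E1m = (q ^ 2)⁻¹ • (E1m * K1)
  K1E0 : K1 * E0 = (q ^ 2)⁻¹ • (E0 * K1)
  K0E1p : K0 * E1p = (q ^ 2)⁻¹ • (E1p * K0)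
  K0E1m : K0 * E1m = q ^ 2 • (E1m * K0)
  e1comm : E1p * E1m - E1m * E1p = (q - q⁻¹)⁻¹ • (K1 - K0)
  e0e1m : E0 * E1m = E1m * E0
  serre01 : brk E0 (brkq q⁻¹ E0 (brkq q E0 E1p)) = 0
  serre10 : brk E1p (brkq q⁻¹ E1p (brkq q E1p E0)) = 0

/-- `K₀` of the evaluation module `V(ℓ,a)`: `K₀ vᵢ = q^(2i-ℓ) vᵢ`. -/
def evalK0 (q : ℂ) (ℓ : ℕ) : Module.End ℂ (Fin (ℓ + 1) → ℂ) :=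
  (Matrix.diagonal fun i : Fin (ℓ + 1) => q ^ (2 * (i : ℤ) - ℓ)).mulVecLin

/-- `K₁` of the evaluation module `V(ℓ,a)`: `K₁ vᵢ = q^(ℓ-2i) vᵢ`. -/
def evalK1 (q : ℂ) (ℓ : ℕ) : Module.End ℂ (Fin (ℓ + 1) → ℂ) :=
  (Matrix.diagonal fun i : Fin (ℓ + 1) => q ^ ((ℓ : ℤ) - 2 * i)).mulVecLin

/-- `E₀⁺` of the evaluation module `V(ℓ,a)`: `E₀⁺ vᵢ = a q [i+1] vᵢ₊₁`. -/
def evalE0 (q a : ℂ) (ℓ : ℕ) : Module.End ℂ (Fin (ℓ + 1) → ℂ) :=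
  (Matrix.of fun j i : Fin (ℓ + 1) =>
    if (j : ℕ) = (i : ℕ) + 1 then a * q * qnum q ((i : ℤ) + 1) else 0).mulVecLin

/-- `E₁⁺` of the evaluation module `V(ℓ,a)`: `E₁⁺ vᵢ = [ℓ-i+1] vᵢ₋₁`. -/
def evalE1p (q : ℂ) (ℓ : ℕ) : Module.End ℂ (Fin (ℓ + 1) → ℂ) :=
  (Matrix.of fun j i : Fin (ℓ + 1) =>
    if (i : ℕ) = (j : ℕ) + 1 then qnum q ((ℓ : ℤ) - (i : ℤ) + 1) else 0).mulVecLin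

/-- `E₁⁻` of the evaluation module `V(ℓ,a)`: `E₁⁻ vᵢ = [i+1] vᵢ₊₁`. -/
def evalE1m (q : ℂ) (ℓ : ℕ) : Module.End ℂ (Fin (ℓ + 1) → ℂ) :=
  (Matrix.of fun j i : Fin (ℓ + 1) =>
    if (j : ℕ) = (i : ℕ) + 1 then qnum q ((i : ℤ) + 1) else 0).mulVecLin

/-- Irreducibility: the only subspaces invariant under all five operators are `⊥` and `⊤`. -/
def IsIrred {V : Type*} [AddCommGroup V] [Module ℂ V]
    (E0 E1p E1m K0 K1 : Module.End ℂ V) : Prop :=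
  ∀ W : Submodule ℂ V, (∀ v ∈ W, E0 v ∈ W) → (∀ v ∈ W, E1p v ∈ W) →
    (∀ v ∈ W, E1m v ∈ W) → (∀ v ∈ W, K0 v ∈ W) → (∀ v ∈ W, K1 v ∈ W) →
    W = ⊥ ∨ W = ⊤

/-- Type `(1,1)`: `K₀` is diagonalizable with all eigenvalues of the form `q^(2i-d)`,
`0 ≤ i ≤ d`, i.e. the corresponding eigenspaces span. -/
def IsType11 (q : ℂ) {V : Type*} [AddCommGroup V] [Module ℂ V] (K0 : Module.End ℂ V) : Prop :=
  ∃ d : ℕ, ⨆ i : Fin (d + 1), Module.End.eigenspace K0 (q ^ (2 * (i : ℤ) - d)) = ⊤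

/-- `Δ(K₀) = K₀ ⊗ K₀` on `V(ℓ,a) ⊗ V(m,b)`. -/
def dK0 (q : ℂ) (ℓ m : ℕ) :
    Module.End ℂ (TensorProduct ℂ (Fin (ℓ + 1) → ℂ) (Fin (m + 1) → ℂ)) :=
  TensorProduct.map (evalK0 q ℓ) (evalK0 q m)

/-- `Δ(K₁) = K₁ ⊗ K₁` on `V(ℓ,a) ⊗ V(m,b)`. -/
def dK1 (q : ℂ) (ℓ m : ℕ) :
    Module.End ℂ (TensorProduct ℂ (Fin (ℓ + 1) → ℂ) (Fin (m + 1) → ℂ)) :=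
  TensorProduct.map (evalK1 q ℓ) (evalK1 q m)

/-- `Δ(E₀⁺) = K₀ ⊗ E₀⁺ + E₀⁺ ⊗ 1` on `V(ℓ,a) ⊗ V(m,b)`. -/
def dE0 (q : ℂ) (ℓ m : ℕ) (a b : ℂ) :
    Module.End ℂ (TensorProduct ℂ (Fin (ℓ + 1) → ℂ) (Fin (m + 1) → ℂ)) :=
  TensorProduct.map (evalK0 q ℓ) (evalE0 q b m) +
    TensorProduct.map (evalE0 q a ℓ) LinearMap.id

/-- `Δ(E₁⁺) = K₁ ⊗ E₁⁺ + E₁⁺ ⊗ 1` on `V(ℓ,a) ⊗ V(m,b)`. -/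
def dE1p (q : ℂ) (ℓ m : ℕ) :
    Module.End ℂ (TensorProduct ℂ (Fin (ℓ + 1) → ℂ) (Fin (m + 1) → ℂ)) :=
  TensorProduct.map (evalK1 q ℓ) (evalE1p q m) +
    TensorProduct.map (evalE1p q ℓ) LinearMap.id

/-- `Δ(E₁⁻) = 1 ⊗ E₁⁻ + E₁⁻ ⊗ K₁⁻¹` on `V(ℓ,a) ⊗ V(m,b)` (note `K₁⁻¹ = K₀`). -/
def dE1m (q : ℂ) (ℓ m : ℕ) :
    Module.End ℂ (TensorProduct ℂ (Fin (ℓ + 1) → ℂ) (Fin (m + 1) → ℂ)) :=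
  TensorProduct.map LinearMap.id (evalE1m q m) +
    TensorProduct.map (evalE1m q ℓ) (evalK0 q m)

/-- A linear map intertwines the five structure operators of two
`U'_q(L(sl₂))`-module structures. -/
def IntertwinesAll {V W : Type*} [AddCommGroup V] [Module ℂ V] [AddCommGroup W] [Module ℂ W]
    (σ : V →ₗ[ℂ] W) (A0 A1p A1m AK0 AK1 : Module.End ℂ V)
    (B0 B1p B1m BK0 BK1 : Module.End ℂ W) : Prop :=
  σ ∘ₗ A0 = B0 ∘ₗ σ ∧ σ ∘ₗ A1p = B1p ∘ₗ σ ∧ σ ∘ₗ A1m = B1m ∘ₗ σ ∧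
    σ ∘ₗ AK0 = BK0 ∘ₗ σ ∧ σ ∘ₗ AK1 = BK1 ∘ₗ σ

/-- The underlying space of an iterated tensor product of evaluation modules. -/
abbrev TPS {N : ℕ} (ns : Fin N → ℕ) : Type := ⨂[ℂ] i, (Fin (ns i + 1) → ℂ)

/-- `Δ(K₀)` on an iterated tensor product of evaluation modules. -/
def tpK0 (q : ℂ) {N : ℕ} (ns : Fin N → ℕ) : Module.End ℂ (TPS ns) :=
  PiTensorProduct.map fun i => evalK0 q (ns i)

/-- `Δ(K₁)` on an iterated tensor product of evaluation modules. -/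
def tpK1 (q : ℂ) {N : ℕ} (ns : Fin N → ℕ) : Module.End ℂ (TPS ns) :=
  PiTensorProduct.map fun i => evalK1 q (ns i)

/-- `Δ(E₀⁺) = Σⱼ K₀ ⊗ ⋯ ⊗ K₀ ⊗ E₀⁺ ⊗ 1 ⊗ ⋯ ⊗ 1` (iterated coproduct of
`Δ(E₀⁺) = K₀ ⊗ E₀⁺ + E₀⁺ ⊗ 1`). -/
def tpE0 (q : ℂ) {N : ℕ} (ns : Fin N → ℕ) (as : Fin N → ℂ) : Module.End ℂ (TPS ns) :=
  ∑ j : Fin N, PiTensorProduct.map fun i =>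
    if i < j then evalK0 q (ns i)
    else if i = j then evalE0 q (as i) (ns i)
    else LinearMap.id

/-- `Δ(E₁⁺) = Σⱼ K₁ ⊗ ⋯ ⊗ K₁ ⊗ E₁⁺ ⊗ 1 ⊗ ⋯ ⊗ 1`. -/
def tpE1p (q : ℂ) {N : ℕ} (ns : Fin N → ℕ) : Module.End ℂ (TPS ns) :=
  ∑ j : Fin N, PiTensorProduct.map fun i =>
    if i < j then evalK1 q (ns i)
    else if i = j then evalE1p q (ns i)
    else LinearMap.id

/-- `Δ(E₁⁻) = Σⱼ 1 ⊗ ⋯ ⊗ 1 ⊗ E₁⁻ ⊗ K₁⁻¹ ⊗ ⋯ ⊗ K₁⁻¹` (note `K₁⁻¹ = K₀`). -/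
def tpE1m (q : ℂ) {N : ℕ} (ns : Fin N → ℕ) : Module.End ℂ (TPS ns) :=
  ∑ j : Fin N, PiTensorProduct.map fun i =>
    if i < j then LinearMap.id
    else if i = j then evalE1m q (ns i)
    else evalK0 q (ns i)

namespace UqLoop

/-! ### Consequences of the `q`-Serre relation -/

section Serre
variable {R : Type*} [Ring R] [Algebra ℂ R]

/-- The twisted adjoint action `u ↦ X u - c u X`. -/
def qad (X : R) (c : ℂ) : R →ₗ[ℂ] R := LinearMap.mulLeft ℂ X - c • LinearMap.mulRight ℂ X

lemma qad_apply (X : R) (c : ℂ) (u : R) : qad X c u = X * u - c • (u * X) := rfl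

/-- The composite of the twisted adjoint actions with parameters `α, αq², …, αq^(2(p-1))`. -/
def qstr (q : ℂ) (X : R) : ℕ → ℂ → R →ₗ[ℂ] R
  | 0, _ => LinearMap.id
  | p + 1, α => qstr q X p (α * q ^ 2) ∘ₗ qad X α

lemma qstr_zero (q : ℂ) (X : R) (α : ℂ) (u : R) : qstr q X 0 α u = u := rfl

lemma qstr_succ (q : ℂ) (X : R) (p : ℕ) (α : ℂ) (u : R) :
    qstr q X (p + 1) α u = qstr q X p (α * q ^ 2) (qad X α u) := rfl

/-- The `q`-Serre relation for `X` acting on `Y`. -/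
def Serre (q : ℂ) (X Y : R) : Prop := qstr q X 3 (q ^ 2)⁻¹ Y = 0

lemma serre_iff (q : ℂ) (hq : q ≠ 0) (X Y : R) : Serre q X Y ↔
    X * (X * (X * Y)) - (q ^ 2 + 1 + (q ^ 2)⁻¹) • (X * (X * (Y * X)))
      + (q ^ 2 + 1 + (q ^ 2)⁻¹) • (X * (Y * (X * X))) - Y * (X * (X * X)) = 0 := by
  unfold Serre
  rw [qstr_succ, qstr_succ, qstr_succ, qstr_zero]
  have h2 : (q ^ 2)⁻¹ * q ^ 2 = 1 := inv_mul_cancel₀ (pow_ne_zero 2 hq)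
  rw [h2, one_mul]
  simp only [qad_apply]
  apply Eq.congr_left
  simp only [mul_sub, sub_mul, smul_sub, mul_smul_comm, smul_mul_assoc, smul_smul, mul_assoc, add_smul,
    one_smul, mul_comm (q^2) (q^2)⁻¹, h2, one_mul]
  abel

lemma serre_of_brk {V : Type*} [AddCommGroup V] [Module ℂ V] (q : ℂ) (hq : q ≠ 0)
    (X Y : Module.End ℂ V) :
    Serre q X Y ↔ brk X (brkq q⁻¹ X (brkq q X Y)) = 0 := by
  rw [serre_iff q hq]
  apply Eq.congr_left
  simp only [brk, brkq, mul_sub, sub_mul, smul_sub, mul_smul_comm, smul_mul_assoc, smul_smul, mul_assoc,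
    add_smul, inv_inv]
  have h1 : q⁻¹ * q = 1 := inv_mul_cancel₀ hq
  have h2 : q * q⁻¹ = 1 := mul_inv_cancel₀ hq
  rw [h1, h2, ← pow_two q, ← pow_two q⁻¹, inv_pow]
  simp only [one_smul]
  abel

/-- The Leibniz rule for twisted adjoint actions: if strings of lengths `p` and `r` kill `u` and
`w`, then a string of length `p + r - 1` kills `u w`. -/
lemma qstr_mul (q : ℂ) (X : R) (m : ℕ) : ∀ (p r : ℕ) (α β : ℂ) (u w : R), p + r = m + 1 →
    qstr q X p α u = 0 → qstr q X r β w = 0 → qstr q X m (α * β) (u * w) = 0 := by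
  induction m with
  | zero =>
    intro p r α β u w hpr hu hw
    rcases p with _ | p
    · rw [qstr_zero] at hu
      simp [hu]
    · obtain rfl : r = 0 := by omega
      rw [qstr_zero] at hw
      simp [hw]
  | succ m ih =>
    intro p r α β u w hpr hu hw
    rcases p with _ | p
    · rw [qstr_zero] at hu
      simp [hu]
    rcases r with _ | r
    · rw [qstr_zero] at hw
      simp [hw]
    rw [qstr_succ]
    have : qad X (α * β) (u * w) = qad X α u * w + α • (u * qad X β w) := by
      simp only [qad_apply, mul_sub, sub_mul, smul_sub, mul_smul_comm, smul_mul_assoc, smul_smul,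
        mul_assoc]
      abel
    rw [this, map_add, map_smul]
    have h1 := ih p (r + 1) (α * q ^ 2) β (qad X α u) w (by omega) (by rw [← qstr_succ]; exact hu) hw
    have h2 := ih (p + 1) r α (β * q ^ 2) u (qad X β w) (by omega) hu (by rw [← qstr_succ]; exact hw)
    have e1 : α * β * q ^ 2 = α * q ^ 2 * β := by ring
    have e2 : α * β * q ^ 2 = α * (β * q ^ 2) := by ring
    nth_rewrite 1 [e1]
    rw [h1, e2, h2]
    simp

/-- By the Leibniz rule, the `q`-Serre relation for `Y` gives a relation for `Y^b`: a string of length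
`2b + 1` starting at `q^(-2b)` kills it. -/
lemma qstr_pow (q : ℂ) (X Y : R) (h : Serre q X Y) (b : ℕ) :
    qstr q X (2 * b + 1) (((q ^ 2)⁻¹) ^ b) (Y ^ b) = 0 := by
  induction b with
  | zero => simp [qstr_succ, qstr_zero, qad_apply]
  | succ b ih =>
    rw [pow_succ _ b, pow_succ _ b]
    exact qstr_mul q X _ (2 * b + 1) 3 _ _ _ _ (by ring) ih h

/-- The noncommutative homogenization `∑ₛ gₛ X^s u X^(n-s)` of a polynomial `g`. -/
def hm (X : R) (n : ℕ) (g : Polynomial ℂ) (u : R) : R :=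
  ∑ s ∈ Finset.range (n + 1), g.coeff s • (X ^ s * u * X ^ (n - s))

lemma hm_X_sub_C_mul (X : R) (n : ℕ) (g : Polynomial ℂ) (hg : g.natDegree ≤ n) (u : R) (c : ℂ) :
    hm X (n + 1) ((Polynomial.X - Polynomial.C c) * g) u = hm X n g (qad X c u) := by
  unfold hm
  simp only [sub_mul, Polynomial.coeff_sub, sub_smul, Finset.sum_sub_distrib, qad_apply, mul_sub,
    smul_sub]
  congr 1
  · rw [Finset.sum_range_succ']
    simp only [Polynomial.coeff_X_mul, Polynomial.coeff_X_mul_zero, zero_smul, add_zero]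
    refine Finset.sum_congr rfl fun s hs => ?_
    rw [pow_succ, Nat.add_sub_add_right]
    simp only [mul_assoc]
  · rw [Finset.sum_range_succ]
    have : g.coeff (n + 1) = 0 := Polynomial.coeff_eq_zero_of_natDegree_lt (by omega)
    simp only [Polynomial.coeff_C_mul, this, mul_zero, zero_smul, add_zero]
    refine Finset.sum_congr rfl fun s hs => ?_
    have hs' := Finset.mem_range.1 hs
    have : n + 1 - s = (n - s) + 1 := by omega
    rw [this, pow_succ']
    simp only [mul_smul_comm, smul_mul_assoc, mul_assoc, smul_smul]
    rw [mul_comm]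

/-- Linear factors of a homogenized polynomial act as twisted adjoint actions, so a factor
`∏ (T - α q^(2i))` acts as a string. -/
lemma hm_prod (q : ℂ) (X : R) (k : ℕ) (h : Polynomial ℂ) (hh : h.natDegree ≤ k) (p : ℕ) :
    ∀ (α : ℂ) (u : R),
    hm X (k + p) ((∏ i ∈ Finset.range p,
      (Polynomial.X - Polynomial.C (α * q ^ (2 * i)))) * h) u = hm X k h (qstr q X p α u) := by
  induction p with
  | zero => intro α u; simp [qstr_zero]
  | succ p ih =>
    intro α u
    rw [Finset.prod_range_succ', mul_comm (Finset.prod _ _), mul_assoc, ← add_assoc]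
    have hd : ((∏ i ∈ Finset.range p,
      (Polynomial.X - Polynomial.C (α * q ^ (2 * (i + 1))))) * h).natDegree ≤ k + p := by
      refine Polynomial.natDegree_mul_le.trans ?_
      have := Polynomial.natDegree_prod_le (Finset.range p) (fun i =>
        (Polynomial.X - Polynomial.C (α * q ^ (2 * (i + 1))) : Polynomial ℂ))
      simp only [Polynomial.natDegree_X_sub_C, Finset.sum_const, Finset.card_range, smul_eq_mul,
        mul_one] at this
      omega
    rw [hm_X_sub_C_mul _ _ _ hd, qstr_succ, ← ih]
    congr 2
    · simp only [mul_add, pow_add]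
      refine Finset.prod_congr rfl fun i hi => ?_
      congr 2; ring
    · simp

/-- Lagrange interpolation at the nodes `q^(2s)`, `s ∈ S`: the monomial `X^a` agrees with a
combination of the `X^s` at the points `α q^(2i)`, `i < |S|`. -/
lemma exists_interp (q : ℂ) (hq0 : q ≠ 0) (hq : ∀ n : ℕ, 0 < n → q ^ n ≠ 1) (α : ℂ) (hα : α ≠ 0)
    (S : Finset ℕ) (a : ℕ) : ∃ c : ℕ → ℂ, ∀ i < S.card,
      ∑ s ∈ S, c s * (α * q ^ (2 * i)) ^ s = (α * q ^ (2 * i)) ^ a := by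
  classical
  set v : ℕ → ℂ := fun s => q ^ (2 * s) with hv
  have hinj : Set.InjOn v (S : Set ℕ) := by
    have key : ∀ s t : ℕ, s < t → v s ≠ v t := by
      intro s t hst h
      apply hq (2 * (t - s)) (by omega)
      have : q ^ (2 * s) * q ^ (2 * (t - s)) = q ^ (2 * s) * 1 := by
        rw [← pow_add, mul_one, show 2 * s + 2 * (t - s) = 2 * t by omega]; exact h.symm
      exact mul_left_cancel₀ (pow_ne_zero _ hq0) this
    intro s _ t _ h
    rcases lt_trichotomy s t with h1 | h1 | h1
    · exact absurd h (key _ _ h1)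
    · exact h1
    · exact absurd h.symm (key _ _ h1)
  refine ⟨fun s => α ^ a * (α ^ s)⁻¹ * (Lagrange.basis S v s).eval (v a), fun i hi => ?_⟩
  have h1 := Lagrange.eq_interpolate (s := S) (v := v) (f := (Polynomial.X ^ i : Polynomial ℂ)) hinj
    (by rw [Polynomial.degree_X_pow]; exact_mod_cast hi)
  have h2 := congrArg (Polynomial.eval (v a)) h1
  rw [Lagrange.interpolate_apply, Polynomial.eval_finsetSum] at h2
  simp only [Polynomial.eval_pow, Polynomial.eval_X, Polynomial.eval_mul, Polynomial.eval_C] at h2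
  have e : ∀ s : ℕ, (α * q ^ (2 * i)) ^ s = α ^ s * v s ^ i := by
    intro s
    rw [mul_pow, hv, ← pow_mul, ← pow_mul]
    congr 2; ring
  rw [e a, h2, Finset.mul_sum]
  refine Finset.sum_congr rfl fun s _ => ?_
  rw [e s]
  field_simp

/-- A root count: a polynomial vanishing at the distinct points `α q^(2i)`, `i < p`, is divisible by
the product of the corresponding linear factors. -/
lemma prod_dvd (q : ℂ) (hq0 : q ≠ 0) (hq : ∀ n : ℕ, 0 < n → q ^ n ≠ 1) (α : ℂ) (hα : α ≠ 0)
    (p : ℕ) (g : Polynomial ℂ) (hg : ∀ i < p, g.eval (α * q ^ (2 * i)) = 0) :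
    (∏ i ∈ Finset.range p, (Polynomial.X - Polynomial.C (α * q ^ (2 * i)))) ∣ g := by
  apply Finset.prod_dvd_of_coprime
  · intro i hi j hj hij
    apply Polynomial.isCoprime_X_sub_C_of_isUnit_sub
    rw [isUnit_iff_ne_zero, sub_ne_zero]
    intro h
    have h' := mul_left_cancel₀ hα h
    have key : ∀ s t : ℕ, s < t → q ^ (2 * s) ≠ q ^ (2 * t) := by
      intro s t hst h
      apply hq (2 * (t - s)) (by omega)
      have : q ^ (2 * s) * q ^ (2 * (t - s)) = q ^ (2 * s) * 1 := by
        rw [← pow_add, mul_one, show 2 * s + 2 * (t - s) = 2 * t by omega]; exact h.symm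
      exact mul_left_cancel₀ (pow_ne_zero _ hq0) this
    rcases lt_or_gt_of_ne hij with h1 | h1
    · exact key _ _ h1 h'
    · exact key _ _ h1 h'.symm
  · intro i hi
    rw [Polynomial.dvd_iff_isRoot]
    exact hg i (Finset.mem_range.1 hi)

/-- The local rewriting rule: when the middle exponent is at most the left one and smaller than the
right one, `X^a Y^b X^c` is a combination of words `X^s Y^b X^t`, `s + t = a + c`, in which `s < b`
or `t ≤ b`. The coefficients come from interpolation: the difference of the two sides is the
homogenization of a polynomial divisible by the linear factors of the string that kills `Y^b`. -/
lemma local_rel (q : ℂ) (hq0 : q ≠ 0) (hq : ∀ n : ℕ, 0 < n → q ^ n ≠ 1) (X Y : R)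
    (hS : Serre q X Y) (a b c : ℕ) (hab : b ≤ a) (hbc : b < c) :
    ∃ γ : ℕ → ℂ, X ^ a * Y ^ b * X ^ c =
      ∑ s ∈ (Finset.range (a + c + 1)).filter (fun s => s < b ∨ a + c - s ≤ b),
        γ s • (X ^ s * Y ^ b * X ^ (a + c - s)) := by
  classical
  set S : Finset ℕ := (Finset.range (a + c + 1)).filter (fun s => s < b ∨ a + c - s ≤ b) with hSdef
  set α : ℂ := ((q ^ 2)⁻¹) ^ b with hα
  have hα0 : α ≠ 0 := pow_ne_zero _ (inv_ne_zero (pow_ne_zero _ hq0))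
  have hcard : S.card = 2 * b + 1 := by
    have : S = Finset.range b ∪ Finset.Icc (a + c - b) (a + c) := by
      ext s; simp only [hSdef, Finset.mem_filter, Finset.mem_range, Finset.mem_union,
        Finset.mem_Icc]; omega
    rw [this, Finset.card_union_of_disjoint, Finset.card_range, Nat.card_Icc]
    · omega
    · rw [Finset.disjoint_left]
      intro s h1 h2
      simp only [Finset.mem_range, Finset.mem_Icc] at h1 h2
      omega
  obtain ⟨γ, hγ⟩ := exists_interp q hq0 hq α hα0 S a
  refine ⟨γ, ?_⟩
  set g : Polynomial ℂ := Polynomial.X ^ a - ∑ s ∈ S, Polynomial.C (γ s) * Polynomial.X ^ s with hg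
  have hdvd : (∏ i ∈ Finset.range (2 * b + 1),
      (Polynomial.X - Polynomial.C (α * q ^ (2 * i)))) ∣ g := by
    apply prod_dvd q hq0 hq α hα0
    intro i hi
    rw [hg, Polynomial.eval_sub, Polynomial.eval_finsetSum]
    simp only [Polynomial.eval_pow, Polynomial.eval_X, Polynomial.eval_mul, Polynomial.eval_C]
    rw [hγ i (by omega), sub_self]
  have hcoeff : ∀ s ∈ Finset.range (a + c + 1), g.coeff s =
      (if s = a then 1 else 0) - (if s ∈ S then γ s else 0) := by
    intro s hs
    rw [hg, Polynomial.coeff_sub, Polynomial.coeff_X_pow, Polynomial.finsetSum_coeff]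
    simp only [Polynomial.coeff_C_mul_X_pow]
    rw [Finset.sum_ite_eq]
  have hgdeg : g.natDegree ≤ a + c := by
    rw [hg]
    refine (Polynomial.natDegree_sub_le _ _).trans (max_le ?_ ?_)
    · rw [Polynomial.natDegree_X_pow]; omega
    · refine Polynomial.natDegree_sum_le_of_forall_le _ _ fun s hs => ?_
      refine (Polynomial.natDegree_C_mul_X_pow_le _ _).trans ?_
      have := (Finset.mem_filter.1 hs).1
      rw [Finset.mem_range] at this; omega
  obtain ⟨h, hh⟩ := hdvd
  have hn : a + c = (a + c - (2 * b + 1)) + (2 * b + 1) := by omega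
  have hzero : hm X (a + c) g (Y ^ b) = 0 := by
    by_cases h0 : h = 0
    · rw [hh, h0]; simp [hm]
    have hdeg : h.natDegree ≤ a + c - (2 * b + 1) := by
      rw [hh, Polynomial.natDegree_mul (Finset.prod_ne_zero_iff.2 fun i _ =>
        Polynomial.X_sub_C_ne_zero _) h0,
        Polynomial.natDegree_prod _ _ (fun i _ => Polynomial.X_sub_C_ne_zero _)] at hgdeg
      simp only [Polynomial.natDegree_X_sub_C, Finset.sum_const, Finset.card_range, smul_eq_mul,
        mul_one] at hgdeg
      omega
    rw [hh, hn, hm_prod q X _ h hdeg, qstr_pow q X Y hS]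
    simp [hm]
  unfold hm at hzero
  rw [Finset.sum_congr rfl fun s hs => by rw [hcoeff s hs]] at hzero
  simp only [sub_smul, ite_smul, one_smul, zero_smul, Finset.sum_sub_distrib] at hzero
  rw [Finset.sum_ite_eq', if_pos (Finset.mem_range.2 (by omega)), sub_eq_zero,
    show a + c - a = c by omega] at hzero
  rw [hzero, ← Finset.sum_filter]
  refine Finset.sum_congr ?_ fun _ _ => rfl
  rw [hSdef]
  ext s; simp

end Serre

/-! ### Straightening of words -/

section Words

/-- The word `e^a₁ x^b₁ e^a₂ x^b₂ ⋯` attached to a list `[(a₁,b₁), (a₂,b₂), …]`. -/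
def wd {R : Type*} [Ring R] (e x : R) (L : List (ℕ × ℕ)) : R :=
  (L.map fun p => e ^ p.1 * x ^ p.2).prod

/-- The number of letters `e` in a word. -/
def fs (L : List (ℕ × ℕ)) : ℕ := (L.map Prod.fst).sum

/-- The number of letters `x` in a word. -/
def sn (L : List (ℕ × ℕ)) : ℕ := (L.map Prod.snd).sum

/-- A word in which no exponent is at most its left neighbour and smaller than its right one. -/
def Irr (L : List (ℕ × ℕ)) : Prop :=
  ∀ pre post a b c d, L = pre ++ (a, b) :: (c, d) :: post → ¬(b ≤ a ∧ b < c) ∧ ¬(c ≤ b ∧ c < d)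

/-- The sum of the squares of the exponents of a word. -/
def sqs (L : List (ℕ × ℕ)) : ℕ := (L.map fun p => p.1 ^ 2 + p.2 ^ 2).sum

/-- A weighted sum of the exponents, which grows when mass moves to the left. -/
def wgt : List (ℕ × ℕ) → ℕ
  | [] => 0
  | p :: L => (p.1 + p.2) * (L.length + 1) + wgt L

lemma wd_nil {R : Type*} [Ring R] (e x : R) : wd e x [] = 1 := rfl

lemma wd_cons {R : Type*} [Ring R] (e x : R) (p : ℕ × ℕ) (L : List (ℕ × ℕ)) :
    wd e x (p :: L) = e ^ p.1 * x ^ p.2 * wd e x L := by simp [wd]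

lemma wd_append {R : Type*} [Ring R] (e x : R) (L L' : List (ℕ × ℕ)) :
    wd e x (L ++ L') = wd e x L * wd e x L' := by simp [wd]

lemma fs_nil : fs [] = 0 := rfl
lemma sn_nil : sn [] = 0 := rfl
lemma fs_cons (p : ℕ × ℕ) (L : List (ℕ × ℕ)) : fs (p :: L) = p.1 + fs L := by simp [fs]
lemma sn_cons (p : ℕ × ℕ) (L : List (ℕ × ℕ)) : sn (p :: L) = p.2 + sn L := by simp [sn]
lemma fs_append (L L' : List (ℕ × ℕ)) : fs (L ++ L') = fs L + fs L' := by simp [fs]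
lemma sn_append (L L' : List (ℕ × ℕ)) : sn (L ++ L') = sn L + sn L' := by simp [sn]
lemma sqs_cons (p : ℕ × ℕ) (L : List (ℕ × ℕ)) : sqs (p :: L) = p.1 ^ 2 + p.2 ^ 2 + sqs L := by
  simp [sqs]
lemma sqs_append (L L' : List (ℕ × ℕ)) : sqs (L ++ L') = sqs L + sqs L' := by simp [sqs]

lemma wgt_append (L L' : List (ℕ × ℕ)) :
    wgt (L ++ L') = wgt L + (fs L + sn L) * L'.length + wgt L' := by
  induction L with
  | nil => simp [wgt, fs, sn]
  | cons p L ih =>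
    rw [List.cons_append, wgt, ih, wgt, List.length_append, fs_cons, sn_cons]; ring

lemma wgt_le (L : List (ℕ × ℕ)) : wgt L ≤ L.length * (fs L + sn L) := by
  induction L with
  | nil => simp [wgt]
  | cons p L ih =>
    rw [wgt, List.length_cons, fs_cons, sn_cons]
    nlinarith [ih]

lemma sqs_le (L : List (ℕ × ℕ)) : sqs L ≤ (fs L + sn L) ^ 2 := by
  induction L with
  | nil => simp [sqs]
  | cons p L ih =>
    rw [sqs_cons, fs_cons, sn_cons]
    nlinarith [ih, Nat.zero_le (p.1 * p.2), Nat.zero_le (p.1 * (fs L + sn L)), Nat.zero_le (p.2 * (fs L + sn L))]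

/-- The quantity that grows under the rewriting rule: the sum of squares, refined by `wgt`. -/
def Phi (n N : ℕ) (L : List (ℕ × ℕ)) : ℕ := (n * N + 1) * sqs L + wgt L

lemma Phi_le (L : List (ℕ × ℕ)) (n N : ℕ) (hn : L.length = n) (hN : fs L + sn L = N) :
    Phi n N L ≤ (n * N + 1) * N ^ 2 + n * N := by
  have h1 := wgt_le L
  have h2 := sqs_le L
  rw [hn, hN] at h1
  rw [hN] at h2
  unfold Phi
  gcongr

lemma Phi_lt (L L' : List (ℕ × ℕ)) (n N : ℕ) (hn : L.length = n) (hN : fs L + sn L = N)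
    (h : sqs L < sqs L' ∨ (sqs L = sqs L' ∧ wgt L < wgt L')) : Phi n N L < Phi n N L' := by
  have h1 := wgt_le L
  rw [hn, hN] at h1
  unfold Phi
  rcases h with h | ⟨h, h'⟩
  · have : (n * N + 1) * (sqs L + 1) ≤ (n * N + 1) * sqs L' := Nat.mul_le_mul_left _ h
    nlinarith
  · rw [h]; omega

/-- The rewriting rule increases the sum of squares of the exponents, unless it merely exchanges the
two outer exponents; then it moves the larger one to the left. -/
lemma sq_step (a b c s t : ℕ) (hab : b ≤ a) (hbc : b < c) (hst : s + t = a + c)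
    (h : s < b ∨ t ≤ b) : a ^ 2 + c ^ 2 < s ^ 2 + t ^ 2 ∨ (s = c ∧ t = a ∧ a < c) := by
  rcases h with h | h
  · left
    obtain ⟨i, rfl⟩ := Nat.exists_eq_add_of_lt (show s < a by omega)
    obtain ⟨j, rfl⟩ := Nat.exists_eq_add_of_lt (show s < c by omega)
    obtain rfl : t = s + i + 1 + j + 1 := by omega
    nlinarith [Nat.zero_le (i * j)]
  · by_cases hta : t = a
    · right; omega
    · left
      obtain ⟨i, rfl⟩ := Nat.exists_eq_add_of_lt (show t < a by omega)
      obtain ⟨j, rfl⟩ := Nat.exists_eq_add_of_lt (show t < c by omega)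
      obtain rfl : s = t + i + 1 + j + 1 := by omega
      nlinarith [Nat.zero_le (i * j)]

/-- Every word is a combination of irreducible words with the same number of blocks and the same
numbers of letters: the rewriting rule terminates because it increases the bounded quantity `Phi`. -/
theorem zigzag {R : Type*} [Ring R] [Algebra ℂ R] (q : ℂ) (hq0 : q ≠ 0)
    (hq : ∀ n : ℕ, 0 < n → q ^ n ≠ 1) (e x : R) (h1 : Serre q e x) (h2 : Serre q x e)
    (n A B : ℕ) (L : List (ℕ × ℕ)) (hn : L.length = n) (hA : fs L = A) (hB : sn L = B) :
    wd e x L ∈ Submodule.span ℂ (wd e x '' {L' | L'.length = n ∧ fs L' = A ∧ sn L' = B ∧ Irr L'}) := by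
  induction hk : (n * (A + B) + 1) * (A + B) ^ 2 + n * (A + B) - Phi n (A + B) L
    using Nat.strong_induction_on generalizing L with
  | _ k ih =>
  by_cases hI : Irr L
  · exact Submodule.subset_span ⟨L, ⟨hn, hA, hB, hI⟩, rfl⟩
  unfold Irr at hI
  push Not at hI
  obtain ⟨pre, post, a, b, c, d, hL, hcase⟩ := hI
  have hNL : fs L + sn L = A + B := by rw [hA, hB]
  have step : ∀ L', L'.length = n → fs L' = A → sn L' = B →
      (sqs L < sqs L' ∨ (sqs L = sqs L' ∧ wgt L < wgt L')) → wd e x L' ∈ Submodule.span ℂ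
        (wd e x '' {L' | L'.length = n ∧ fs L' = A ∧ sn L' = B ∧ Irr L'}) := by
    intro L' hn' hA' hB' h
    refine ih _ ?_ L' hn' hA' hB' rfl
    have l1 := Phi_lt L L' n (A + B) hn hNL h
    have l2 := Phi_le L' n (A + B) hn' (by rw [hA', hB'])
    omega
  have hlen : pre.length + (post.length + 1 + 1) = n := by rw [← hn, hL]; simp
  have hA2 : fs pre + (a + (c + fs post)) = A := by
    rw [← hA, hL]; simp [fs_append, fs_cons]
  have hB2 : sn pre + (b + (d + sn post)) = B := by
    rw [← hB, hL]; simp [sn_append, sn_cons]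
  by_cases hc : b ≤ a ∧ b < c
  · obtain ⟨γ, hγ⟩ := local_rel q hq0 hq e x h1 a b c hc.1 hc.2
    have : wd e x L = ∑ s ∈ (Finset.range (a + c + 1)).filter (fun s => s < b ∨ a + c - s ≤ b),
        γ s • wd e x (pre ++ (s, b) :: (a + c - s, d) :: post) := by
      have : wd e x L = wd e x pre * (e ^ a * x ^ b * e ^ c) * (x ^ d * wd e x post) := by
        rw [hL, wd_append, wd_cons, wd_cons]; simp only [mul_assoc]
      rw [this, hγ, Finset.mul_sum, Finset.sum_mul]
      refine Finset.sum_congr rfl fun s _ => ?_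
      rw [wd_append, wd_cons, wd_cons]
      simp only [mul_assoc, mul_smul_comm, smul_mul_assoc]
    rw [this]
    refine Submodule.sum_mem _ fun s hs => Submodule.smul_mem _ _ ?_
    rw [Finset.mem_filter, Finset.mem_range] at hs
    have hst : s + (a + c - s) = a + c := by omega
    apply step
    · rw [← hlen]; simp
    · simp only [fs_append, fs_cons]; omega
    · simp only [sn_append, sn_cons]; omega
    · rw [hL]
      simp only [sqs_append, sqs_cons, wgt_append, wgt, List.length_cons]
      rcases sq_step a b c s _ hc.1 hc.2 hst hs.2 with h | ⟨h, h', h''⟩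
      · left; omega
      · right
        rw [h', h]
        constructor
        · ring
        · nlinarith
  · obtain ⟨hc1, hc2⟩ := hcase (fun h => by push Not at hc; exact hc h)
    obtain ⟨γ, hγ⟩ := local_rel q hq0 hq x e h2 b c d hc1 hc2
    have : wd e x L = ∑ s ∈ (Finset.range (b + d + 1)).filter (fun s => s < c ∨ b + d - s ≤ c),
        γ s • wd e x (pre ++ (a, s) :: (c, b + d - s) :: post) := by
      have : wd e x L = wd e x pre * e ^ a * (x ^ b * e ^ c * x ^ d) * (wd e x post) := by
        rw [hL, wd_append, wd_cons, wd_cons]; simp only [mul_assoc]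
      rw [this, hγ, Finset.mul_sum, Finset.sum_mul]
      refine Finset.sum_congr rfl fun s _ => ?_
      rw [wd_append, wd_cons, wd_cons]
      simp only [mul_assoc, mul_smul_comm, smul_mul_assoc]
    rw [this]
    refine Submodule.sum_mem _ fun s hs => Submodule.smul_mem _ _ ?_
    rw [Finset.mem_filter, Finset.mem_range] at hs
    have hst : s + (b + d - s) = b + d := by omega
    apply step
    · rw [← hlen]; simp
    · simp only [fs_append, fs_cons]; omega
    · simp only [sn_append, sn_cons]; omega
    · rw [hL]
      simp only [sqs_append, sqs_cons, wgt_append, wgt, List.length_cons]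
      rcases sq_step b c d s _ hc1 hc2 hst hs.2 with h | ⟨h, h', h''⟩
      · left; omega
      · right
        rw [h', h]
        constructor
        · ring
        · nlinarith

lemma Irr.tail {p : ℕ × ℕ} {L : List (ℕ × ℕ)} (h : Irr (p :: L)) : Irr L := by
  intro pre post a b c d hL
  exact h (p :: pre) post a b c d (by rw [hL]; rfl)

/-- An irreducible word whose first block satisfies `b ≤ a` satisfies the same inequality in all
blocks. -/
lemma Irr.le {L : List (ℕ × ℕ)} : ∀ {a b : ℕ}, Irr ((a, b) :: L) → b ≤ a → ∀ p ∈ L, p.2 ≤ p.1 := by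
  induction L with
  | nil => simp
  | cons p L ih =>
    intro a b h hab r hr
    obtain ⟨c, d⟩ := p
    have h' := h [] L a b c d rfl
    have hdc : d ≤ c := by omega
    rcases List.mem_cons.1 hr with rfl | hr
    · exact hdc
    · exact ih h.tail hdc r hr

lemma eq_of_fs_eq_sn {L : List (ℕ × ℕ)} (h : ∀ p ∈ L, p.2 ≤ p.1) : sn L ≤ fs L ∧
    (fs L = sn L → ∀ p ∈ L, p.2 = p.1) := by
  induction L with
  | nil => simp [fs, sn]
  | cons p L ih =>
    obtain ⟨h1, h2⟩ := ih fun p hp => h p (List.mem_cons_of_mem _ hp)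
    have hp := h p List.mem_cons_self
    rw [fs_cons, sn_cons]
    refine ⟨by omega, fun he r hr => ?_⟩
    rcases List.mem_cons.1 hr with rfl | hr
    · omega
    · exact h2 (by omega) r hr

/-- An irreducible word with equally many letters of both kinds either has a tail with more `e`s
than `x`s, or all its blocks are of the form `e^a x^a`. -/
lemma Irr.dichotomy {L : List (ℕ × ℕ)} (h : Irr L) (hL : fs L = sn L) :
    (∃ p L', L = p :: L' ∧ sn L' < fs L') ∨ ∀ p ∈ L, p.2 = p.1 := by
  rcases L with _ | ⟨⟨a, b⟩, L⟩
  · right; simp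
  by_cases hab : b ≤ a
  · right
    apply (eq_of_fs_eq_sn _).2 hL
    intro p hp
    rcases List.mem_cons.1 hp with rfl | hp
    · exact hab
    · exact h.le hab p hp
  · left
    refine ⟨_, L, rfl, ?_⟩
    rw [fs_cons, sn_cons] at hL
    simp only at hL
    omega

end Words

/-! ### `q`-integers and `U_q(sl₂)` -/

section QInt
variable (q : ℂ)

lemma q_sub_ne (hq0 : q ≠ 0) (hq : ∀ n : ℕ, 0 < n → q ^ n ≠ 1) : q - q⁻¹ ≠ 0 := by
  intro h
  apply hq 2 (by norm_num)
  have : q = q⁻¹ := sub_eq_zero.1 h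
  rw [pow_two]; nth_rewrite 2 [this]; exact mul_inv_cancel₀ hq0

lemma zpow_inj' (hq0 : q ≠ 0) (hq : ∀ n : ℕ, 0 < n → q ^ n ≠ 1) {m n : ℤ} (h : q ^ m = q ^ n) :
    m = n := by
  have key : ∀ m n : ℤ, m < n → q ^ m ≠ q ^ n := by
    intro m n hmn h
    obtain ⟨k, hk⟩ := Int.eq_ofNat_of_zero_le (show 0 ≤ n - m by omega)
    apply hq k (by omega)
    have : q ^ (n - m) = 1 := by
      rw [zpow_sub₀ hq0, h, div_self (zpow_ne_zero _ hq0)]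
    rw [hk] at this
    simpa using this
  rcases lt_trichotomy m n with h1 | h1 | h1
  · exact absurd h (key _ _ h1)
  · exact h1
  · exact absurd h.symm (key _ _ h1)

lemma qnum_zero : qnum q 0 = 0 := by simp [qnum]

lemma qnum_neg (t : ℤ) : qnum q (-t) = -qnum q t := by
  unfold qnum; rw [neg_neg, ← neg_div, neg_sub]

lemma qnum_ne (hq0 : q ≠ 0) (hq : ∀ n : ℕ, 0 < n → q ^ n ≠ 1) {t : ℤ} (ht : t ≠ 0) :
    qnum q t ≠ 0 := by
  unfold qnum
  refine div_ne_zero (fun h => ?_) (q_sub_ne q hq0 hq)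
  have := zpow_inj' q hq0 hq (sub_eq_zero.1 h)
  omega

lemma qnum_one (hq0 : q ≠ 0) (hq : ∀ n : ℕ, 0 < n → q ^ n ≠ 1) : qnum q 1 = 1 := by
  unfold qnum
  rw [zpow_one, zpow_neg, zpow_one]
  exact div_self (q_sub_ne q hq0 hq)

/-- The relation `[k+1][c-k] = [k][c-k+1] + [c-2k]`. -/
lemma qnum_rel (hq0 : q ≠ 0) (hq : ∀ n : ℕ, 0 < n → q ^ n ≠ 1) (k c : ℤ) :
    qnum q (k + 1) * qnum q (c - k) = qnum q k * qnum q (c - k + 1) + qnum q (c - 2 * k) := by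
  have hs := q_sub_ne q hq0 hq
  unfold qnum
  have e : ∀ m : ℤ, q ^ (-m) = (q ^ m)⁻¹ := fun m => zpow_neg q m
  simp only [e, zpow_add₀ hq0, zpow_sub₀ hq0, zpow_one, mul_comm (2 : ℤ), zpow_mul]
  have hk : q ^ k ≠ 0 := zpow_ne_zero _ hq0
  have hc : q ^ c ≠ 0 := zpow_ne_zero _ hq0
  have h2 : (q ^ k) ^ (2 : ℤ) = q ^ k * q ^ k := by rw [zpow_two]
  rw [h2]
  generalize q ^ k = u at *
  generalize q ^ c = w at *
  have hs' : q ^ 2 - 1 ≠ 0 := by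
    intro h; apply hs; field_simp; rw [h, mul_zero]
  field_simp
  ring

lemma qfac_zero : qfac q 0 = 1 := by simp [qfac]

lemma qfac_succ (k : ℕ) : qfac q (k + 1) = qfac q k * qnum q ((k : ℤ) + 1) := by
  simp [qfac, Finset.prod_range_succ]

lemma qfac_ne (hq0 : q ≠ 0) (hq : ∀ n : ℕ, 0 < n → q ^ n ≠ 1) (k : ℕ) : qfac q k ≠ 0 :=
  Finset.prod_ne_zero_iff.2 fun i _ => qnum_ne q hq0 hq (by omega)

end QInt

section Sl2
variable {V : Type*} [AddCommGroup V] [Module ℂ V]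

/-- The relations of `U_q(sl₂)`. -/
structure Sl2 (q : ℂ) (e f K K' : Module.End ℂ V) : Prop where
  KK' : K * K' = 1
  K'K : K' * K = 1
  Ke : K * e = q ^ 2 • (e * K)
  Kf : K * f = (q ^ 2)⁻¹ • (f * K)
  ef : e * f - f * e = (q - q⁻¹)⁻¹ • (K - K')

variable {q : ℂ} {e f K K' : Module.End ℂ V}

/-- If `K X = c X K` then `X K' = c K' X` for the inverse `K'` of `K`. -/
lemma inv_comm {R : Type*} [Ring R] [Algebra ℂ R] {K K' X : R} {c : ℂ} (hc : c ≠ 0)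
    (h1 : K * K' = 1) (h2 : K' * K = 1) (h : K * X = c • (X * K)) : K' * X = c⁻¹ • (X * K') := by
  have : X * K' = c • (K' * X) := by
    calc X * K' = K' * (K * X) * K' := by rw [← mul_assoc, h2, one_mul]
      _ = c • (K' * X * (K * K')) := by rw [h]; simp only [mul_smul_comm, smul_mul_assoc, mul_assoc]
      _ = c • (K' * X) := by rw [h1, mul_one]
  rw [this, smul_smul, inv_mul_cancel₀ hc, one_smul]

lemma Sl2.swap (hq0 : q ≠ 0) (h : Sl2 q e f K K') : Sl2 q f e K' K where
  KK' := h.K'K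
  K'K := h.KK'
  Ke := by
    have := inv_comm (inv_ne_zero (pow_ne_zero 2 hq0)) h.KK' h.K'K h.Kf
    rwa [inv_inv] at this
  Kf := inv_comm (pow_ne_zero 2 hq0) h.KK' h.K'K h.Ke
  ef := by
    have := h.ef
    rw [← neg_sub (e * f), this, ← smul_neg, neg_sub]

/-- A vector of weight `c`. -/
def IsWt (q : ℂ) (K : Module.End ℂ V) (c : ℤ) (z : V) : Prop := K z = q ^ c • z

lemma IsWt.inv (hq0 : q ≠ 0) (h : K' * K = 1) {c : ℤ} {z : V} (hz : IsWt q K c z) :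
    IsWt q K' (-c) z := by
  have h1 : K' (K z) = z := DFunLike.congr_fun h z
  rw [hz, map_smul] at h1
  unfold IsWt
  rw [zpow_neg, ← h1, smul_smul, inv_mul_cancel₀ (zpow_ne_zero _ hq0), one_smul, h1]

lemma IsWt.up (hq0 : q ≠ 0) {X : Module.End ℂ V} (h : K * X = q ^ 2 • (X * K)) {c : ℤ} {z : V}
    (hz : IsWt q K c z) : IsWt q K (c + 2) (X z) := by
  have h1 : K (X z) = q ^ 2 • X (K z) := DFunLike.congr_fun h z
  unfold IsWt
  rw [h1, hz, map_smul, smul_smul, zpow_add₀ hq0, mul_comm]; rfl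

lemma IsWt.down (hq0 : q ≠ 0) {X : Module.End ℂ V} (h : K * X = (q ^ 2)⁻¹ • (X * K)) {c : ℤ} {z : V}
    (hz : IsWt q K c z) : IsWt q K (c - 2) (X z) := by
  have h1 : K (X z) = (q ^ 2)⁻¹ • X (K z) := DFunLike.congr_fun h z
  unfold IsWt
  rw [h1, hz, map_smul, smul_smul, zpow_sub₀ hq0, mul_comm]; rfl

lemma IsWt.up_pow (hq0 : q ≠ 0) {X : Module.End ℂ V} (h : K * X = q ^ 2 • (X * K)) {c : ℤ} {z : V}
    (hz : IsWt q K c z) (k : ℕ) : IsWt q K (c + 2 * k) ((X ^ k) z) := by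
  induction k with
  | zero => simpa using hz
  | succ k ih =>
    rw [pow_succ', Module.End.mul_apply]
    have := ih.up hq0 h
    push_cast
    rwa [mul_add, ← add_assoc, mul_one]

lemma IsWt.down_pow (hq0 : q ≠ 0) {X : Module.End ℂ V} (h : K * X = (q ^ 2)⁻¹ • (X * K)) {c : ℤ}
    {z : V} (hz : IsWt q K c z) (k : ℕ) : IsWt q K (c - 2 * k) ((X ^ k) z) := by
  induction k with
  | zero => simpa using hz
  | succ k ih =>
    rw [pow_succ', Module.End.mul_apply]
    have := ih.down hq0 h
    push_cast
    rwa [mul_add, ← sub_sub, mul_one]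

lemma IsWt.eq_zero (hq0 : q ≠ 0) (hq : ∀ n : ℕ, 0 < n → q ^ n ≠ 1) {c c' : ℤ} {z : V}
    (hz : IsWt q K c z) (hz' : IsWt q K c' z) (hc : c ≠ c') : z = 0 := by
  have : (q ^ c - q ^ c') • z = 0 := by rw [sub_smul, ← hz, ← hz', sub_self]
  rcases smul_eq_zero.1 this with h | h
  · exact absurd (zpow_inj' q hq0 hq (sub_eq_zero.1 h)) hc
  · exact h

lemma Sl2.comm_apply (hq0 : q ≠ 0) (h : Sl2 q e f K K') {c : ℤ} {z : V} (hz : IsWt q K c z) :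
    e (f z) = f (e z) + qnum q c • z := by
  have h1 : e (f z) - f (e z) = (q - q⁻¹)⁻¹ • (K z - K' z) := DFunLike.congr_fun h.ef z
  rw [hz, hz.inv hq0 h.K'K, ← sub_smul, smul_smul, inv_mul_eq_div] at h1
  rw [← sub_eq_iff_eq_add', h1, qnum]

/-- The commutation formula `e fᵏ⁺¹ z = fᵏ⁺¹ e z + [k+1][c-k] fᵏ z` for `z` of weight `c`. -/
lemma Sl2.e_f_pow (hq0 : q ≠ 0) (hq : ∀ n : ℕ, 0 < n → q ^ n ≠ 1) (h : Sl2 q e f K K') {c : ℤ}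
    {z : V} (hz : IsWt q K c z) (k : ℕ) :
    e ((f ^ (k + 1)) z) = (f ^ (k + 1)) (e z) + (qnum q (k + 1) * qnum q (c - k)) • (f ^ k) z := by
  induction k with
  | zero => simpa [qnum_one q hq0 hq] using h.comm_apply hq0 hz
  | succ k ih =>
    rw [pow_succ' f (k + 1), Module.End.mul_apply, Module.End.mul_apply,
      h.comm_apply hq0 (hz.down_pow hq0 h.Kf (k + 1)), ih, map_add, map_smul, add_assoc]
    congr 1
    rw [← Module.End.mul_apply f, ← pow_succ', ← add_smul]
    congr 1
    have := qnum_rel q hq0 hq (k + 1) c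
    push_cast
    rw [this]
    congr 2
    congr 1; ring

/-- The commutation formula `eᵐ⁺¹ f u = f eᵐ⁺¹ u + [m+1][c+m] eᵐ u` for `u` of weight `c`. -/
lemma Sl2.e_pow_f (hq0 : q ≠ 0) (hq : ∀ n : ℕ, 0 < n → q ^ n ≠ 1) (h : Sl2 q e f K K') {c : ℤ}
    {u : V} (hu : IsWt q K c u) (m : ℕ) :
    (e ^ (m + 1)) (f u) = f ((e ^ (m + 1)) u) + (qnum q (m + 1) * qnum q (c + m)) • (e ^ m) u := by
  have := (h.swap hq0).e_f_pow hq0 hq (hu.inv hq0 h.K'K) m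
  rw [this, show (-c - m : ℤ) = -(c + m) by ring, qnum_neg, mul_neg, neg_smul]
  simp

end Sl2

/-! ### Irreducible modules are determined by a lowest weight vector -/

section Rep
variable {V : Type*} [AddCommGroup V] [Module ℂ V] {q : ℂ} {x e f K0 K1 : Module.End ℂ V}

lemma sl2_of_rep (h : IsUqpRep q x e f K0 K1) : Sl2 q e f K1 K0 :=
  ⟨h.K1K0, h.K0K1, h.K1E1p, h.K1E1m, h.e1comm⟩

lemma rep_serre_ex (hq0 : q ≠ 0) (h : IsUqpRep q x e f K0 K1) : Serre q e x :=
  (serre_of_brk q hq0 e x).2 h.serre10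

lemma rep_serre_xe (hq0 : q ≠ 0) (h : IsUqpRep q x e f K0 K1) : Serre q x e :=
  (serre_of_brk q hq0 x e).2 h.serre01

lemma x_f_comm (h : IsUqpRep q x e f K0 K1) (z : V) : x (f z) = f (x z) :=
  DFunLike.congr_fun h.e0e1m z

lemma x_f_pow_comm (h : IsUqpRep q x e f K0 K1) (k : ℕ) (z : V) :
    x ((f ^ k) z) = (f ^ k) (x z) := by
  have : Commute x (f ^ k) := Commute.pow_right h.e0e1m k
  exact DFunLike.congr_fun this.eq z

/-- `e` lowers the `K₀`-weight by `2` and `x` raises it by `2`. -/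
lemma wd_wt (hq0 : q ≠ 0) (h : IsUqpRep q x e f K0 K1) {n : ℤ} {v : V} (hv : IsWt q K0 n v)
    (L : List (ℕ × ℕ)) : IsWt q K0 (n + 2 * (sn L) - 2 * (fs L)) (wd e x L v) := by
  induction L with
  | nil => simpa [wd_nil, sn_nil, fs_nil] using hv
  | cons p L ih =>
    rw [wd_cons, Module.End.mul_apply, Module.End.mul_apply]
    have := (ih.up_pow hq0 h.K0E0 p.2).down_pow hq0 h.K0E1p p.1
    rw [fs_cons, sn_cons]
    push_cast
    convert this using 1
    ring

/-- If all the operators `eⁱxⁱ` act by scalars on a vector `v` of lowest `K₀`-weight, then every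
word with equally many letters of both kinds multiplies `v` by a scalar. -/
lemma wd_mem_span (hq0 : q ≠ 0) (hq : ∀ n : ℕ, 0 < n → q ^ n ≠ 1) (h : IsUqpRep q x e f K0 K1)
    {n : ℤ} (hneg : ∀ m, m < n → ∀ z, IsWt q K0 m z → z = 0) {v : V} (hv : IsWt q K0 n v)
    {σ : ℕ → ℂ} (hσ : ∀ i, (e ^ i) ((x ^ i) v) = σ i • v) (L : List (ℕ × ℕ)) (hL : fs L = sn L) :
    wd e x L v ∈ Submodule.span ℂ {v} := by
  have hz := zigzag q hq0 hq e x (rep_serre_ex hq0 h) (rep_serre_xe hq0 h) L.length (fs L) (sn L) L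
    rfl rfl rfl
  refine Submodule.span_induction (p := fun y _ => y v ∈ Submodule.span ℂ {v}) ?_ ?_ ?_ ?_ hz
  · rintro _ ⟨L', ⟨-, hA, hB, hI⟩, rfl⟩
    rcases hI.dichotomy (by rw [hA, hB, hL]) with ⟨p, L'', rfl, hlt⟩ | hall
    · rw [wd_cons, Module.End.mul_apply, hneg _ _ _ (wd_wt hq0 h hv L'')]
      · simp
      · omega
    · clear hz hI hA hB
      induction L' with
      | nil => simp [wd_nil, Submodule.mem_span_singleton_self]
      | cons p L' ih =>
        obtain ⟨c, hc⟩ := Submodule.mem_span_singleton.1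
          (ih fun p hp => hall p (List.mem_cons_of_mem _ hp))
        rw [wd_cons, Module.End.mul_apply, ← hc, map_smul, hall p List.mem_cons_self,
          Module.End.mul_apply, hσ]
        exact Submodule.smul_mem _ _ (Submodule.smul_mem _ _ (Submodule.mem_span_singleton_self v))
  · simp
  · intro a b _ _ ha hb
    exact Submodule.add_mem _ ha hb
  · intro c a _ ha
    exact Submodule.smul_mem _ _ ha

/-- The submodule spanned by the vectors `fᵏ w v`, `w` a word in `e` and `x`. -/
def gen (x e f : Module.End ℂ V) (v : V) : Submodule ℂ V :=
  Submodule.span ℂ (Set.range fun p : ℕ × List (ℕ × ℕ) => (f ^ p.1) (wd e x p.2 v))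

lemma mem_gen (v : V) (k : ℕ) (L : List (ℕ × ℕ)) : (f ^ k) (wd e x L v) ∈ gen x e f v :=
  Submodule.subset_span ⟨(k, L), rfl⟩

lemma gen_stable {A : Module.End ℂ V} {v : V}
    (hA : ∀ k L, A ((f ^ k) (wd e x L v)) ∈ gen x e f v) : ∀ z ∈ gen x e f v, A z ∈ gen x e f v := by
  intro z hz
  refine Submodule.span_induction (p := fun y _ => A y ∈ gen x e f v) ?_ ?_ ?_ ?_ hz
  · rintro _ ⟨⟨k, L⟩, rfl⟩
    exact hA k L
  · simp
  · intro a b _ _ ha hb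
    rw [map_add]; exact Submodule.add_mem _ ha hb
  · intro c a _ ha
    rw [map_smul]; exact Submodule.smul_mem _ _ ha

lemma gen_f {v : V} : ∀ z ∈ gen x e f v, f z ∈ gen x e f v := by
  apply gen_stable
  intro k L
  rw [← Module.End.mul_apply, ← pow_succ']
  exact mem_gen _ _ _

lemma gen_x (h : IsUqpRep q x e f K0 K1) {v : V} : ∀ z ∈ gen x e f v, x z ∈ gen x e f v := by
  apply gen_stable
  intro k L
  rw [x_f_pow_comm h]
  have := mem_gen (f := f) (e := e) (x := x) v k ((0, 1) :: L)
  rwa [wd_cons, pow_zero, pow_one, one_mul, Module.End.mul_apply] at this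

lemma gen_K0 (hq0 : q ≠ 0) (h : IsUqpRep q x e f K0 K1) {n : ℤ} {v : V} (hv : IsWt q K0 n v) :
    ∀ z ∈ gen x e f v, K0 z ∈ gen x e f v := by
  apply gen_stable
  intro k L
  rw [(wd_wt hq0 h hv L).up_pow hq0 h.K0E1m k]
  exact Submodule.smul_mem _ _ (mem_gen _ _ _)

lemma gen_K1 (hq0 : q ≠ 0) (h : IsUqpRep q x e f K0 K1) {n : ℤ} {v : V} (hv : IsWt q K0 n v) :
    ∀ z ∈ gen x e f v, K1 z ∈ gen x e f v := by
  apply gen_stable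
  intro k L
  rw [((wd_wt hq0 h hv L).up_pow hq0 h.K0E1m k).inv hq0 h.K1K0]
  exact Submodule.smul_mem _ _ (mem_gen _ _ _)

lemma gen_e (hq0 : q ≠ 0) (hq : ∀ n : ℕ, 0 < n → q ^ n ≠ 1) (h : IsUqpRep q x e f K0 K1) {n : ℤ}
    {v : V} (hv : IsWt q K0 n v) : ∀ z ∈ gen x e f v, e z ∈ gen x e f v := by
  apply gen_stable
  intro k L
  have h1 : ∀ k, (f ^ k) (e (wd e x L v)) ∈ gen x e f v := by
    intro k
    have := mem_gen (f := f) (e := e) (x := x) v k ((1, 0) :: L)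
    rwa [wd_cons, pow_zero, pow_one, mul_one, Module.End.mul_apply] at this
  rcases k with _ | k
  · exact h1 0
  · rw [(sl2_of_rep h).e_f_pow hq0 hq ((wd_wt hq0 h hv L).inv hq0 h.K1K0)]
    exact Submodule.add_mem _ (h1 _) (Submodule.smul_mem _ _ (mem_gen _ _ _))

/-- The part of `gen x e f v` of the same weight as `v` is the line through `v`. -/
lemma gen_wt (hq0 : q ≠ 0) (hq : ∀ n : ℕ, 0 < n → q ^ n ≠ 1) (h : IsUqpRep q x e f K0 K1)
    {n : ℤ} (hneg : ∀ m, m < n → ∀ z, IsWt q K0 m z → z = 0) {v : V} (hv : IsWt q K0 n v)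
    {σ : ℕ → ℂ} (hσ : ∀ i, (e ^ i) ((x ^ i) v) = σ i • v) {z : V} (hz : z ∈ gen x e f v)
    (hzn : IsWt q K0 n z) : z ∈ Submodule.span ℂ {v} := by
  set H : Submodule ℂ V := ⨆ (μ : ℂ) (_ : μ ≠ q ^ n), Module.End.eigenspace K0 μ with hH
  have hgen : gen x e f v ≤ Submodule.span ℂ {v} ⊔ H := by
    refine Submodule.span_le.2 ?_
    rintro _ ⟨⟨k, L⟩, rfl⟩
    simp only [SetLike.mem_coe]
    have hw := wd_wt hq0 h hv L
    have hw' := hw.up_pow hq0 h.K0E1m k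
    by_cases hm : n + 2 * (sn L) - 2 * (fs L) + 2 * (k : ℤ) = n
    · rcases k with _ | k
      · exact Submodule.mem_sup_left (wd_mem_span hq0 hq h hneg hv hσ L (by
          push_cast at hm; omega))
      · rw [hneg _ _ _ hw, map_zero]
        · exact zero_mem _
        · push_cast at hm; omega
    · refine Submodule.mem_sup_right ?_
      have : q ^ (n + 2 * (sn L) - 2 * (fs L) + 2 * (k : ℤ)) ≠ q ^ n :=
        fun h' => hm (zpow_inj' q hq0 hq h')
      exact Submodule.mem_iSup_of_mem _ (Submodule.mem_iSup_of_mem this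
        (Module.End.mem_eigenspace_iff.2 hw'))
  obtain ⟨a, ha, b, hb, rfl⟩ := Submodule.mem_sup.1 (hgen hz)
  have hdisj := (Module.End.eigenspaces_iSupIndep K0) (q ^ n)
  have hb' : b ∈ Module.End.eigenspace K0 (q ^ n) := by
    have h1 : a ∈ Module.End.eigenspace K0 (q ^ n) :=
      (Submodule.span_singleton_le_iff_mem _ _).2 (Module.End.mem_eigenspace_iff.2 hv) ha
    have h2 : a + b ∈ Module.End.eigenspace K0 (q ^ n) := Module.End.mem_eigenspace_iff.2 hzn
    exact (Submodule.add_mem_iff_right _ h1).1 h2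
  have : b = 0 := Submodule.disjoint_def.1 hdisj b hb' hb
  rw [this, add_zero]; exact ha

end Rep

section Uniq
variable {V T : Type*} [AddCommGroup V] [Module ℂ V] [AddCommGroup T] [Module ℂ T] {q : ℂ}
  {x e f K0 K1 : Module.End ℂ V} {x' e' f' K0' K1' : Module.End ℂ T}

lemma rep_prod (h : IsUqpRep q x e f K0 K1) (h' : IsUqpRep q x' e' f' K0' K1') :
    IsUqpRep q (x.prodMap x') (e.prodMap e') (f.prodMap f') (K0.prodMap K0') (K1.prodMap K1') := by
  constructor
  · exact LinearMap.ext fun z => Prod.ext (DFunLike.congr_fun h.1 z.1) (DFunLike.congr_fun h'.1 z.2)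
  · exact LinearMap.ext fun z => Prod.ext (DFunLike.congr_fun h.2 z.1) (DFunLike.congr_fun h'.2 z.2)
  · exact LinearMap.ext fun z => Prod.ext (DFunLike.congr_fun h.3 z.1) (DFunLike.congr_fun h'.3 z.2)
  · exact LinearMap.ext fun z => Prod.ext (DFunLike.congr_fun h.4 z.1) (DFunLike.congr_fun h'.4 z.2)
  · exact LinearMap.ext fun z => Prod.ext (DFunLike.congr_fun h.5 z.1) (DFunLike.congr_fun h'.5 z.2)
  · exact LinearMap.ext fun z => Prod.ext (DFunLike.congr_fun h.6 z.1) (DFunLike.congr_fun h'.6 z.2)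
  · exact LinearMap.ext fun z => Prod.ext (DFunLike.congr_fun h.7 z.1) (DFunLike.congr_fun h'.7 z.2)
  · exact LinearMap.ext fun z => Prod.ext (DFunLike.congr_fun h.8 z.1) (DFunLike.congr_fun h'.8 z.2)
  · exact LinearMap.ext fun z => Prod.ext (DFunLike.congr_fun h.9 z.1) (DFunLike.congr_fun h'.9 z.2)
  · exact LinearMap.ext fun z =>
      Prod.ext (DFunLike.congr_fun h.10 z.1) (DFunLike.congr_fun h'.10 z.2)
  · exact LinearMap.ext fun z =>
      Prod.ext (DFunLike.congr_fun h.11 z.1) (DFunLike.congr_fun h'.11 z.2)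
  · exact LinearMap.ext fun z =>
      Prod.ext (DFunLike.congr_fun h.12 z.1) (DFunLike.congr_fun h'.12 z.2)

lemma prodMap_pow_apply (A : Module.End ℂ V) (B : Module.End ℂ T) (k : ℕ) (z : V × T) :
    ((A.prodMap B) ^ k) z = ((A ^ k) z.1, (B ^ k) z.2) := by
  induction k with
  | zero => rfl
  | succ k ih => rw [pow_succ', Module.End.mul_apply, ih, pow_succ', pow_succ']; rfl

/-- Two irreducible modules whose lowest `K₀`-weight vectors have the same weight and the same
eigenvalues of the operators `eⁱxⁱ` are isomorphic: the submodule of `V × T` generated by the pair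
of these vectors is the graph of an isomorphism. -/
theorem uniq (hq0 : q ≠ 0) (hq : ∀ n : ℕ, 0 < n → q ^ n ≠ 1)
    (h : IsUqpRep q x e f K0 K1) (h' : IsUqpRep q x' e' f' K0' K1')
    (hi : IsIrred x e f K0 K1) (hi' : IsIrred x' e' f' K0' K1') {n : ℤ}
    (hneg : ∀ m, m < n → ∀ z, IsWt q K0 m z → z = 0)
    (hneg' : ∀ m, m < n → ∀ z, IsWt q K0' m z → z = 0)
    {v : V} (hv : IsWt q K0 n v) (hv0 : v ≠ 0) {t : T} (ht : IsWt q K0' n t) (ht0 : t ≠ 0)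
    {σ : ℕ → ℂ} (hσ : ∀ i, (e ^ i) ((x ^ i) v) = σ i • v)
    (hσ' : ∀ i, (e' ^ i) ((x' ^ i) t) = σ i • t) :
    ∃ φ : V ≃ₗ[ℂ] T, IntertwinesAll φ.toLinearMap x e f K0 K1 x' e' f' K0' K1' := by
  have hp := rep_prod h h'
  set G := gen (x.prodMap x') (e.prodMap e') (f.prodMap f') (v, t) with hG
  have hpv : IsWt q (K0.prodMap K0') n (v, t) := Prod.ext hv ht
  have hpneg : ∀ m, m < n → ∀ z, IsWt q (K0.prodMap K0') m z → z = 0 := by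
    intro m hm z hz
    exact Prod.ext (hneg m hm _ (congrArg Prod.fst hz)) (hneg' m hm _ (congrArg Prod.snd hz))
  have hpσ : ∀ i, ((e.prodMap e') ^ i) (((x.prodMap x') ^ i) (v, t)) = σ i • (v, t) := by
    intro i
    rw [prodMap_pow_apply, prodMap_pow_apply]
    exact Prod.ext (hσ i) (hσ' i)
  have gx := gen_x (v := (v, t)) hp
  have ge := gen_e hq0 hq hp hpv
  have gf := gen_f (x := x.prodMap x') (e := e.prodMap e') (f := f.prodMap f') (v := (v, t))
  have gK0 := gen_K0 hq0 hp hpv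
  have gK1 := gen_K1 hq0 hp hpv
  rw [← hG] at gx ge gf gK0 gK1
  have hmem : (v, t) ∈ G := mem_gen (f := f.prodMap f') (e := e.prodMap e') (x := x.prodMap x') (v, t) 0 []
  have hker1 : G.comap (LinearMap.inl ℂ V T) = ⊥ := by
    refine (hi _ ?_ ?_ ?_ ?_ ?_).resolve_right ?_
    · intro z hz; simpa using gx _ hz
    · intro z hz; simpa using ge _ hz
    · intro z hz; simpa using gf _ hz
    · intro z hz; simpa using gK0 _ hz
    · intro z hz; simpa using gK1 _ hz
    · intro htop
      have h1 : v ∈ G.comap (LinearMap.inl ℂ V T) := by rw [htop]; trivial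
      have h2 : IsWt q (K0.prodMap K0') n ((v, 0) : V × T) := Prod.ext hv (by simp)
      obtain ⟨c, hc⟩ := Submodule.mem_span_singleton.1 (gen_wt hq0 hq hp hpneg hpv hpσ h1 h2)
      have hc1 := congrArg Prod.fst hc
      have hc2 := congrArg Prod.snd hc
      simp only [Prod.smul_snd, Prod.smul_fst, LinearMap.inl_apply, smul_eq_zero, ht0, or_false] at hc1 hc2
      rw [hc2, zero_smul] at hc1
      exact hv0 hc1.symm
  have hker2 : G.comap (LinearMap.inr ℂ V T) = ⊥ := by
    refine (hi' _ ?_ ?_ ?_ ?_ ?_).resolve_right ?_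
    · intro z hz; simpa using gx _ hz
    · intro z hz; simpa using ge _ hz
    · intro z hz; simpa using gf _ hz
    · intro z hz; simpa using gK0 _ hz
    · intro z hz; simpa using gK1 _ hz
    · intro htop
      have h1 : t ∈ G.comap (LinearMap.inr ℂ V T) := by rw [htop]; trivial
      have h2 : IsWt q (K0.prodMap K0') n ((0, t) : V × T) := Prod.ext (by simp) ht
      obtain ⟨c, hc⟩ := Submodule.mem_span_singleton.1 (gen_wt hq0 hq hp hpneg hpv hpσ h1 h2)
      have hc1 := congrArg Prod.fst hc
      have hc2 := congrArg Prod.snd hc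
      simp only [Prod.smul_snd, Prod.smul_fst, LinearMap.inr_apply, smul_eq_zero, hv0, or_false] at hc1 hc2
      rw [hc1, zero_smul] at hc2
      exact ht0 hc2.symm
  have hr1 : G.map (LinearMap.fst ℂ V T) = ⊤ := by
    refine (hi _ ?_ ?_ ?_ ?_ ?_).resolve_left ?_
    · rintro _ ⟨z, hz, rfl⟩; exact ⟨_, gx _ hz, rfl⟩
    · rintro _ ⟨z, hz, rfl⟩; exact ⟨_, ge _ hz, rfl⟩
    · rintro _ ⟨z, hz, rfl⟩; exact ⟨_, gf _ hz, rfl⟩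
    · rintro _ ⟨z, hz, rfl⟩; exact ⟨_, gK0 _ hz, rfl⟩
    · rintro _ ⟨z, hz, rfl⟩; exact ⟨_, gK1 _ hz, rfl⟩
    · intro hbot
      have : v ∈ G.map (LinearMap.fst ℂ V T) := ⟨_, hmem, rfl⟩
      rw [hbot] at this
      exact hv0 this
  have hr2 : G.map (LinearMap.snd ℂ V T) = ⊤ := by
    refine (hi' _ ?_ ?_ ?_ ?_ ?_).resolve_left ?_
    · rintro _ ⟨z, hz, rfl⟩; exact ⟨_, gx _ hz, rfl⟩
    · rintro _ ⟨z, hz, rfl⟩; exact ⟨_, ge _ hz, rfl⟩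
    · rintro _ ⟨z, hz, rfl⟩; exact ⟨_, gf _ hz, rfl⟩
    · rintro _ ⟨z, hz, rfl⟩; exact ⟨_, gK0 _ hz, rfl⟩
    · rintro _ ⟨z, hz, rfl⟩; exact ⟨_, gK1 _ hz, rfl⟩
    · intro hbot
      have : t ∈ G.map (LinearMap.snd ℂ V T) := ⟨_, hmem, rfl⟩
      rw [hbot] at this
      exact ht0 this
  have b1 : Function.Bijective ((LinearMap.fst ℂ V T).domRestrict G) := by
    constructor
    · rw [← LinearMap.ker_eq_bot, eq_bot_iff]
      rintro ⟨⟨a, b⟩, hz⟩ hz0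
      have ha : a = 0 := hz0
      subst ha
      have : b ∈ G.comap (LinearMap.inr ℂ V T) := hz
      rw [hker2] at this
      have hb : b = 0 := this
      subst hb; rfl
    · intro a
      have : a ∈ G.map (LinearMap.fst ℂ V T) := by rw [hr1]; trivial
      obtain ⟨z, hz, rfl⟩ := this
      exact ⟨⟨z, hz⟩, rfl⟩
  have b2 : Function.Bijective ((LinearMap.snd ℂ V T).domRestrict G) := by
    constructor
    · rw [← LinearMap.ker_eq_bot, eq_bot_iff]
      rintro ⟨⟨a, b⟩, hz⟩ hz0
      have hb : b = 0 := hz0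
      subst hb
      have : a ∈ G.comap (LinearMap.inl ℂ V T) := hz
      rw [hker1] at this
      have ha : a = 0 := this
      subst ha; rfl
    · intro a
      have : a ∈ G.map (LinearMap.snd ℂ V T) := by rw [hr2]; trivial
      obtain ⟨z, hz, rfl⟩ := this
      exact ⟨⟨z, hz⟩, rfl⟩
  set φ1 := LinearEquiv.ofBijective _ b1
  set φ2 := LinearEquiv.ofBijective _ b2
  have key : ∀ (A : Module.End ℂ V) (B : Module.End ℂ T), (∀ z ∈ G, (A.prodMap B) z ∈ G) →
      (φ1.symm.trans φ2).toLinearMap ∘ₗ A = B ∘ₗ (φ1.symm.trans φ2).toLinearMap := by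
    intro A B hAB
    ext a
    obtain ⟨⟨z, hz⟩, rfl⟩ := φ1.surjective a
    have e1 : A (φ1 ⟨z, hz⟩) = φ1 ⟨_, hAB z hz⟩ := rfl
    simp only [LinearMap.comp_apply, LinearEquiv.coe_coe, LinearEquiv.trans_apply,
      LinearEquiv.symm_apply_apply, e1]
    rfl
  exact ⟨φ1.symm.trans φ2, key _ _ gx, key _ _ ge, key _ _ gf, key _ _ gK0, key _ _ gK1⟩

end Uniq

/-! ### Weight strings, the `q`-binomial theorem and Drinfeld polynomials -/

section Strings
variable {V : Type*} [AddCommGroup V] [Module ℂ V] {q : ℂ} {e f K K' : Module.End ℂ V}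

/-- If `e^(i+1)` kills a weight vector `z`, then `e^(i+k+1)` kills `f^k z`. -/
lemma Sl2.string_zero (hq0 : q ≠ 0) (hq : ∀ n : ℕ, 0 < n → q ^ n ≠ 1) (h : Sl2 q e f K K') {c : ℤ}
    {z : V} (hz : IsWt q K c z) {i : ℕ} (hi : (e ^ (i + 1)) z = 0) (k : ℕ) :
    (e ^ (i + k + 1)) ((f ^ k) z) = 0 := by
  induction k with
  | zero => simpa using hi
  | succ k ih =>
    rw [pow_succ' f, Module.End.mul_apply, ← add_assoc i,
      h.e_pow_f hq0 hq (hz.down_pow hq0 h.Kf k), ih, pow_succ', Module.End.mul_apply, ih]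
    simp

/-- If `e^(i+1)` kills `z`, then `e^(i+k) f^k z` is an explicit multiple of `e^i z`. -/
lemma Sl2.string (hq0 : q ≠ 0) (hq : ∀ n : ℕ, 0 < n → q ^ n ≠ 1) (h : Sl2 q e f K K') {c : ℤ}
    {z : V} (hz : IsWt q K c z) {i : ℕ} (hi : (e ^ (i + 1)) z = 0) (k : ℕ) :
    (e ^ (i + k)) ((f ^ k) z) =
      (∏ j ∈ Finset.range k, (qnum q (i + j + 1) * qnum q (c + i - j))) • (e ^ i) z := by
  induction k with
  | zero => simp
  | succ k ih =>
    rw [pow_succ' f, Module.End.mul_apply, ← add_assoc i,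
      h.e_pow_f hq0 hq (hz.down_pow hq0 h.Kf k), h.string_zero hq0 hq hz hi, ih,
      Finset.prod_range_succ, smul_smul, map_zero, zero_add]
    congr 1
    rw [mul_comm]
    push_cast
    congr 3
    ring

/-- A highest weight vector on which `f` acts nilpotently has weight `k ≥ 0`, and `fᵏ` does not
kill it. -/
lemma Sl2.dominant (hq0 : q ≠ 0) (hq : ∀ n : ℕ, 0 < n → q ^ n ≠ 1) (h : Sl2 q e f K K') {c : ℤ}
    {z : V} (hz : IsWt q K c z) (hz0 : z ≠ 0) (he : e z = 0) (hf : ∃ N, (f ^ N) z = 0) :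
    ∃ k : ℕ, c = k ∧ (f ^ k) z ≠ 0 := by
  classical
  obtain ⟨k, hk⟩ : ∃ k, Nat.find hf = k + 1 := by
    apply Nat.exists_eq_succ_of_ne_zero
    intro h0
    have := Nat.find_spec hf
    rw [h0] at this
    exact hz0 this
  have h1 : (f ^ (k + 1)) z = 0 := hk ▸ Nat.find_spec hf
  have h2 : (f ^ k) z ≠ 0 := Nat.find_min hf (by omega)
  refine ⟨k, ?_, h2⟩
  have h3 := h.e_f_pow hq0 hq hz k
  rw [h1, he, map_zero, map_zero, zero_add, eq_comm, smul_eq_zero] at h3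
  by_contra hne
  rcases h3 with h3 | h3
  · exact mul_ne_zero (qnum_ne q hq0 hq (by omega)) (qnum_ne q hq0 hq (by omega)) h3
  · exact h2 h3

lemma prod_qnum_shift (q : ℂ) (i k : ℕ) :
    qfac q i * ∏ j ∈ Finset.range k, qnum q ((i : ℤ) + j + 1) = qfac q (i + k) := by
  induction k with
  | zero => simp
  | succ k ih => rw [Finset.prod_range_succ, ← mul_assoc, ih, ← add_assoc, qfac_succ]; push_cast; rfl

lemma prod_qnum_rev (q : ℂ) (k : ℕ) :
    ∏ j ∈ Finset.range k, qnum q ((k : ℤ) - j) = qfac q k := by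
  rw [qfac, ← Finset.prod_range_reflect]
  refine Finset.prod_congr rfl fun j hj => ?_
  have := Finset.mem_range.1 hj
  congr 1
  omega

end Strings

section Grading
variable {V : Type*} [AddCommGroup V] [Module ℂ V] {q : ℂ} {x e f K0 K1 : Module.End ℂ V}

/-- The `K₀`-weights are among `-d, -d+2, …, d` and the weight vectors span. -/
def Gr (q : ℂ) (K0 : Module.End ℂ V) (d : ℕ) : Prop :=
  ⨆ i : Fin (d + 1), Module.End.eigenspace K0 (q ^ (2 * (i : ℤ) - d)) = ⊤

lemma Gr.eq_zero (hq0 : q ≠ 0) (hq : ∀ n : ℕ, 0 < n → q ^ n ≠ 1) {d : ℕ} (hg : Gr q K0 d) {n : ℤ}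
    {z : V} (hz : IsWt q K0 n z) (hn : ∀ i : ℕ, i ≤ d → n ≠ 2 * i - d) : z = 0 := by
  have hdisj := (Module.End.eigenspaces_iSupIndep K0) (q ^ n)
  refine Submodule.disjoint_def.1 hdisj z (Module.End.mem_eigenspace_iff.2 hz) ?_
  have : (⊤ : Submodule ℂ V) ≤ ⨆ (j : ℂ) (_ : j ≠ q ^ n), Module.End.eigenspace K0 j := by
    rw [← hg]
    refine iSup_le fun i => ?_
    refine le_iSup₂_of_le (q ^ (2 * (i : ℤ) - d)) ?_ le_rfl
    intro h
    exact hn i (by omega) (zpow_inj' q hq0 hq h).symm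
  exact this trivial

lemma Gr.neg (hq0 : q ≠ 0) (hq : ∀ n : ℕ, 0 < n → q ^ n ≠ 1) {d : ℕ} (hg : Gr q K0 d) (m : ℤ)
    (hm : m < -(d : ℤ)) (z : V) (hz : IsWt q K0 m z) : z = 0 :=
  hg.eq_zero hq0 hq hz (by omega)

lemma Gr.big (hq0 : q ≠ 0) (hq : ∀ n : ℕ, 0 < n → q ^ n ≠ 1) {d : ℕ} (hg : Gr q K0 d) (m : ℤ)
    (hm : (d : ℤ) < m) (z : V) (hz : IsWt q K0 m z) : z = 0 :=
  hg.eq_zero hq0 hq hz (by omega)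

/-- A nonzero module of type `(1,1)` is graded symmetrically, with nonzero extreme weight spaces. -/
lemma top_data [Nontrivial V] (hq0 : q ≠ 0) (hq : ∀ n : ℕ, 0 < n → q ^ n ≠ 1)
    (h : IsUqpRep q x e f K0 K1) (ht : IsType11 q K0) :
    ∃ d : ℕ, Gr q K0 d ∧ ∃ v, v ≠ 0 ∧ IsWt q K0 (-(d : ℤ)) v := by
  classical
  obtain ⟨d, hg⟩ := ht
  change Gr q K0 d at hg
  set P : ℕ → Prop := fun i => i ≤ d ∧ ∃ z : V, z ≠ 0 ∧ IsWt q K0 (2 * (i : ℤ) - d) z with hP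
  have hex : ∃ i, P i := by
    by_contra hno
    apply (bot_ne_top : (⊥ : Submodule ℂ V) ≠ ⊤)
    rw [← hg, eq_comm, iSup_eq_bot]
    intro i
    rw [eq_bot_iff]
    intro z hz
    by_contra hz0
    exact hno ⟨i, by omega, z, hz0, Module.End.mem_eigenspace_iff.1 hz⟩
  obtain ⟨hi0, v, hv0, hv⟩ := Nat.find_spec hex
  set i0 := Nat.find hex with hi0def
  have hmin : ∀ i, P i → i0 ≤ i := fun i hi => Nat.find_min' hex hi
  set i1 := Nat.findGreatest P d with hi1def
  have hPi1 : P i1 := Nat.findGreatest_spec (P := P) hi0 (Nat.find_spec hex)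
  have hmax : ∀ i, P i → i ≤ i1 := fun i hi => Nat.le_findGreatest hi.1 hi
  have hs := sl2_of_rep h
  have hzero : ∀ (i : ℤ) (z : V), IsWt q K0 (2 * i - d) z → (i < i0 ∨ (i1 : ℤ) < i) → z = 0 := by
    intro i z hz hi
    by_contra hz0
    by_cases hex' : ∃ j : ℕ, j ≤ d ∧ i = j
    · obtain ⟨j, hj, rfl⟩ := hex'
      have := hmin j ⟨hj, z, hz0, hz⟩
      have := hmax j ⟨hj, z, hz0, hz⟩
      omega
    · refine hz0 (hg.eq_zero hq0 hq hz fun j hj hij => hex' ⟨j, hj, by omega⟩)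
  have hA : d ≤ i0 + i1 := by
    obtain ⟨k, hk, hfk⟩ := hs.dominant hq0 hq (hv.inv hq0 h.K1K0) hv0
      (hzero (i0 - 1) _ (by convert hv.down hq0 h.K0E1p using 1; ring) (by omega))
      ⟨d + 1, hzero (i0 + (d + 1 : ℕ)) _ (by
        convert hv.up_pow hq0 h.K0E1m (d + 1) using 1; push_cast; ring) (by
          have := hPi1.1; push_cast; omega)⟩
    by_contra hlt
    refine hfk (hzero (i0 + k) _ (by convert hv.up_pow hq0 h.K0E1m k using 1; ring) (by omega))
  have hB : i0 + i1 ≤ d := by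
    obtain ⟨hi1, u, hu0, hu⟩ := hPi1
    obtain ⟨k, hk, hfk⟩ := (hs.swap hq0).dominant hq0 hq hu hu0
      (hzero (i1 + 1) _ (by convert hu.up hq0 h.K0E1m using 1; ring) (by omega))
      ⟨d + 1, hzero (i1 - (d + 1 : ℕ)) _ (by
        convert hu.down_pow hq0 h.K0E1p (d + 1) using 1; push_cast; ring) (by push_cast; omega)⟩
    by_contra hlt
    refine hfk (hzero (i1 - k) _ (by convert hu.down_pow hq0 h.K0E1p k using 1; ring) (by omega))
  have hi01 : i0 ≤ i1 := hmax _ ⟨hi0, v, hv0, hv⟩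
  refine ⟨d - 2 * i0, ?_, v, hv0, ?_⟩
  · unfold Gr
    rw [eq_top_iff, ← hg]
    refine iSup_le fun i => ?_
    intro z hz
    by_cases hz0 : z = 0
    · rw [hz0]; exact zero_mem _
    have hPi : P i := ⟨by omega, z, hz0, Module.End.mem_eigenspace_iff.1 hz⟩
    have h1 := hmin _ hPi
    have h2 := hmax _ hPi
    refine Submodule.mem_iSup_of_mem ⟨(i : ℕ) - i0, by omega⟩ ?_
    convert hz using 3
    simp only
    omega
  · convert hv using 1
    omega

/-- `eⁱ xⁱ w₀ = ([i]!)² pᵢ w₀` for all `i`, where `P = ∑ pᵢ Xⁱ` (a version of the Drinfeld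
polynomial). -/
def HasP (q : ℂ) (x e : Module.End ℂ V) (w0 : V) (P : Polynomial ℂ) : Prop :=
  ∀ i, (e ^ i) ((x ^ i) w0) = (qfac q i ^ 2 * P.coeff i) • w0

/-- The value of `e^d` on the vectors `x^i f^k w₀`, `i + k = d`, of highest `K₀`-weight. Since `x` and
`f` commute, this is a string computation for `x^i w₀`, and `e^i x^i w₀` is known. -/
lemma e_pow_top (hq0 : q ≠ 0) (hq : ∀ n : ℕ, 0 < n → q ^ n ≠ 1)
    (h : IsUqpRep q x e f K0 K1) {d : ℕ} (hg : Gr q K0 d) {w0 : V} (hw : IsWt q K0 (-(d : ℤ)) w0)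
    {P : Polynomial ℂ} (hP : HasP q x e w0 P) (i k : ℕ) (hik : i + k = d) :
    (e ^ d) ((x ^ i) ((f ^ k) w0)) = (qfac q d * qfac q k * qfac q i * P.coeff i) • w0 := by
  have hcomm : (x ^ i) ((f ^ k) w0) = (f ^ k) ((x ^ i) w0) := by
    have : Commute (x ^ i) (f ^ k) := Commute.pow_pow h.e0e1m i k
    exact DFunLike.congr_fun this.eq w0
  have hwx := hw.up_pow hq0 h.K0E0 i
  have hz : (e ^ (i + 1)) ((x ^ i) w0) = 0 :=
    hg.neg hq0 hq _ (by push_cast; omega) _ (hwx.down_pow hq0 h.K0E1p (i + 1))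
  have := (sl2_of_rep h).string hq0 hq (hwx.inv hq0 h.K1K0) hz k
  rw [hcomm]
  rw [hik, hP i, smul_smul, Finset.prod_mul_distrib] at this
  rw [this]
  congr 1
  have e1 := prod_qnum_shift q i k
  have e2 : ∏ j ∈ Finset.range k, qnum q (-(-(d : ℤ) + 2 * i) + i - j) = qfac q k := by
    rw [← prod_qnum_rev]
    refine Finset.prod_congr rfl fun j hj => ?_
    congr 1; omega
  rw [e2, ← hik, ← e1]
  ring

end Grading

section QBinomial
variable (q : ℂ)

/-- The coefficients of the `q`-binomial theorem. -/
def qb (u : ℂ) (n k : ℕ) : ℂ :=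
  if k ≤ n then u ^ k * q ^ (-((k : ℤ) * ((n : ℤ) - 1))) * (qfac q n / (qfac q k * qfac q (n - k)))
  else 0

lemma qb_zero (hq0 : q ≠ 0) (hq : ∀ n : ℕ, 0 < n → q ^ n ≠ 1) (u : ℂ) (n : ℕ) : qb q u n 0 = 1 := by
  have := qfac_ne q hq0 hq n
  simp [qb, qfac_zero, this]

lemma qnum_split (hq0 : q ≠ 0) (hq : ∀ n : ℕ, 0 < n → q ^ n ≠ 1) (a b : ℤ) :
    q ^ a * qnum q b + q ^ (-b) * qnum q a = qnum q (a + b) := by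
  have hs := q_sub_ne q hq0 hq
  unfold qnum
  rw [neg_add, zpow_add₀ hq0, zpow_add₀ hq0]
  field_simp
  ring

lemma qb_succ (hq0 : q ≠ 0) (hq : ∀ n : ℕ, 0 < n → q ^ n ≠ 1) (u : ℂ) (n k : ℕ) :
    qb q u (n + 1) (k + 1) = qb q u n (k + 1) + u * q ^ (-(2 * (n : ℤ))) * qb q u n k := by
  have f1 := qfac_ne q hq0 hq
  rcases lt_trichotomy k n with hk | rfl | hk
  · obtain ⟨m, rfl⟩ := Nat.exists_eq_add_of_lt hk
    unfold qb
    rw [if_pos (by omega), if_pos (by omega), if_pos (by omega)]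
    rw [show k + m + 1 + 1 - (k + 1) = m + 1 by omega, show k + m + 1 - (k + 1) = m by omega,
      show k + m + 1 - k = m + 1 by omega, qfac_succ q (k + m + 1), qfac_succ q k, qfac_succ q m]
    have h1 := f1 (k + m + 1)
    have h2 := f1 k
    have h3 := f1 m
    have h4 : qnum q ((k : ℤ) + 1) ≠ 0 := qnum_ne q hq0 hq (by omega)
    have h5 : qnum q ((m : ℤ) + 1) ≠ 0 := qnum_ne q hq0 hq (by omega)
    have key := qnum_split q hq0 hq (k + 1) (m + 1)
    rw [show ((k + m + 1 : ℕ) : ℤ) + 1 = (k + 1) + (m + 1) by push_cast; ring, ← key]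
    push_cast
    have e1 : q ^ (-(((k : ℤ) + 1) * ((k : ℤ) + m + 1 - 1))) =
        q ^ (-(((k : ℤ) + 1) * ((k : ℤ) + m + 1 + 1 - 1))) * q ^ ((k : ℤ) + 1) := by
      rw [← zpow_add₀ hq0]; congr 1; ring
    have e2 : q ^ (-((k : ℤ) * ((k : ℤ) + m + 1 - 1))) =
        q ^ (-(((k : ℤ) + 1) * ((k : ℤ) + m + 1 + 1 - 1))) * q ^ (2 * ((k : ℤ) + m + 1)) *
          q ^ (-((m : ℤ) + 1)) := by
      rw [← zpow_add₀ hq0, ← zpow_add₀ hq0]; congr 1; ring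
    rw [e1, e2]
    have e3 : q ^ (-(2 * ((k : ℤ) + m + 1))) * q ^ (2 * ((k : ℤ) + m + 1)) = 1 := by
      rw [← zpow_add₀ hq0]; simp
    generalize q ^ (-(2 * ((k : ℤ) + m + 1))) = A at *
    generalize q ^ (2 * ((k : ℤ) + m + 1)) = B at *
    generalize q ^ (-(((k : ℤ) + 1) * ((k : ℤ) + m + 1 + 1 - 1))) = C at *
    generalize q ^ ((k : ℤ) + 1) = D at *
    generalize q ^ (-((m : ℤ) + 1)) = E at *
    field_simp
    linear_combination (-(u ^ (k + 1) * C * E * qnum q (k + 1))) * e3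
  · unfold qb
    rw [if_pos le_rfl, if_neg (by omega), if_pos le_rfl, zero_add]
    simp only [Nat.sub_self, qfac_zero, mul_one, div_self (f1 _)]
    rw [pow_succ, mul_comm (u ^ k) u]
    push_cast
    simp only [mul_assoc]
    congr 1
    rw [mul_left_comm, ← zpow_add₀ hq0]
    congr 2; ring
  · unfold qb
    rw [if_neg (by omega), if_neg (by omega), if_neg (by omega)]; simp

variable {R : Type*} [Ring R] [Algebra ℂ R]

/-- The product `(A + u q^(-2(n-1)) B) ⋯ (A + u q^(-2) B) (A + u B)`. -/
def qprod (A B : R) (u : ℂ) : ℕ → R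
  | 0 => 1
  | n + 1 => (A + (u * q ^ (-(2 * (n : ℤ)))) • B) * qprod A B u n

/-- The `q`-binomial theorem. -/
lemma qprod_eq (hq0 : q ≠ 0) (hq : ∀ n : ℕ, 0 < n → q ^ n ≠ 1) (A B : R) (hAB : Commute A B) (u : ℂ)
    (n : ℕ) : qprod q A B u n =
      ∑ k ∈ Finset.range (n + 1), qb q u n k • (A ^ (n - k) * B ^ k) := by
  induction n with
  | zero => simp [qprod, qb_zero q hq0 hq]
  | succ n ih =>
    rw [qprod, ih, add_mul, Finset.sum_range_succ' _ (n + 1)]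
    have h1 : A * ∑ k ∈ Finset.range (n + 1), qb q u n k • (A ^ (n - k) * B ^ k) =
        ∑ k ∈ Finset.range (n + 1 + 1), qb q u n k • (A ^ (n + 1 - k) * B ^ k) := by
      rw [Finset.sum_range_succ _ (n + 1), Finset.mul_sum]
      have : qb q u n (n + 1) = 0 := by simp [qb]
      rw [this, zero_smul, add_zero]
      refine Finset.sum_congr rfl fun k hk => ?_
      have := Finset.mem_range.1 hk
      rw [mul_smul_comm, ← mul_assoc, ← pow_succ', show n - k + 1 = n + 1 - k by omega]
    rw [h1, Finset.sum_range_succ' _ (n + 1), qb_zero q hq0 hq, qb_zero q hq0 hq, add_right_comm]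
    congr 1
    rw [Finset.mul_sum, ← Finset.sum_add_distrib]
    refine Finset.sum_congr rfl fun k hk => ?_
    rw [qb_succ q hq0 hq, add_smul, Nat.add_sub_add_right]
    congr 1
    rw [smul_mul_assoc, mul_smul_comm, smul_smul, ← mul_assoc, (hAB.symm.pow_right _).eq, mul_assoc (A ^ (n - k)),
      ← pow_succ']

end QBinomial

section PR

/-- The polynomial `∏ (1 + b X)` attached to a multiset. -/
def PR (S : Multiset ℂ) : Polynomial ℂ :=
  (S.map fun b => 1 + Polynomial.C b * Polynomial.X).prod

lemma PR_cons (b : ℂ) (S : Multiset ℂ) :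
    PR (b ::ₘ S) = (1 + Polynomial.C b * Polynomial.X) * PR S := by simp [PR]

lemma PR_zero : PR 0 = 1 := by simp [PR]

lemma PR_add (S T : Multiset ℂ) : PR (S + T) = PR S * PR T := by simp [PR]

lemma PR_natDegree (S : Multiset ℂ) : (PR S).natDegree ≤ S.card := by
  induction S using Multiset.induction_on with
  | empty => simp [PR_zero]
  | cons b S ih =>
    rw [PR_cons, Multiset.card_cons]
    refine Polynomial.natDegree_mul_le.trans ?_
    have : (1 + Polynomial.C b * Polynomial.X : Polynomial ℂ).natDegree ≤ 1 := by
      compute_degree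
    omega

/-- The homogenization of `PR S` in degree `|S|`, evaluated at `(τ, 1)`. -/
lemma PR_hom (S : Multiset ℂ) (τ : ℂ) :
    ∑ k ∈ Finset.range (S.card + 1), τ ^ k * (PR S).coeff (S.card - k) =
      (S.map fun b => τ + b).prod := by
  induction S using Multiset.induction_on with
  | empty => simp [PR_zero]
  | cons b S ih =>
    rw [Multiset.map_cons, Multiset.prod_cons, ← ih, Multiset.card_cons, PR_cons]
    have hc : (PR S).coeff (S.card + 1) = 0 :=
      Polynomial.coeff_eq_zero_of_natDegree_lt (by have := PR_natDegree S; omega)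
    simp only [add_mul, one_mul, Polynomial.coeff_add, mul_add, Finset.sum_add_distrib]
    congr 1
    · rw [Finset.sum_range_succ']
      simp only [Nat.sub_zero, hc, mul_zero, add_zero, Nat.add_sub_add_right]
      rw [Finset.mul_sum]
      refine Finset.sum_congr rfl fun k _ => ?_
      ring
    · rw [Finset.sum_range_succ, Nat.sub_self]
      have : (Polynomial.C b * Polynomial.X * PR S).coeff 0 = 0 := by
        rw [mul_assoc, Polynomial.coeff_C_mul, Polynomial.coeff_X_mul_zero, mul_zero]
      rw [this, mul_zero, add_zero, Finset.mul_sum]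
      refine Finset.sum_congr rfl fun k hk => ?_
      have := Finset.mem_range.1 hk
      rw [show S.card + 1 - k = (S.card - k) + 1 by omega, mul_assoc, Polynomial.coeff_C_mul,
        Polynomial.coeff_X_mul]
      ring

end PR

section Low
variable {V : Type*} [AddCommGroup V] [Module ℂ V] {q : ℂ} {x e f K0 K1 : Module.End ℂ V}

/-- The value of `e^d ∏ (x + u q^(-2i) f)` on the lowest weight vector: by the `q`-binomial theorem it
is a value of the homogenized Drinfeld polynomial. -/
lemma e_pow_qprod (hq0 : q ≠ 0) (hq : ∀ n : ℕ, 0 < n → q ^ n ≠ 1)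
    (h : IsUqpRep q x e f K0 K1) {d : ℕ} (hg : Gr q K0 d) {w0 : V} (hw : IsWt q K0 (-(d : ℤ)) w0)
    {S : Multiset ℂ} (hS : S.card = d) (hP : HasP q x e w0 (PR S)) (u τ : ℂ)
    (hτ : τ = u * q ^ (1 - (d : ℤ))) :
    (e ^ d) (qprod q x f u d w0) = (qfac q d ^ 2 * (S.map fun b => τ + b).prod) • w0 := by
  rw [qprod_eq q hq0 hq x f h.e0e1m u d, LinearMap.sum_apply, map_sum]
  rw [← PR_hom S τ, hS, Finset.mul_sum, Finset.sum_smul]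
  refine Finset.sum_congr rfl fun k hk => ?_
  have hk' : k ≤ d := by have := Finset.mem_range.1 hk; omega
  rw [LinearMap.smul_apply, map_smul, Module.End.mul_apply,
    e_pow_top hq0 hq h hg hw hP (d - k) k (by omega), smul_smul]
  congr 1
  unfold qb
  rw [if_pos hk', hτ, mul_pow, ← zpow_natCast (q ^ (1 - (d : ℤ))), ← zpow_mul,
    show (1 - (d : ℤ)) * k = -((k : ℤ) * ((d : ℤ) - 1)) by ring]
  have f1 := qfac_ne q hq0 hq k
  have f2 := qfac_ne q hq0 hq (d - k)
  field_simp

end Low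

/-! ### Tensor products and evaluation modules are modules -/

section SerreRing
variable {R : Type*} [Ring R] [Algebra ℂ R]

lemma qad_comm (X : R) (a b : ℂ) (u : R) : qad X a (qad X b u) = qad X b (qad X a u) := by
  simp only [qad_apply, mul_sub, sub_mul, smul_sub, mul_smul_comm, smul_mul_assoc, mul_assoc,
    smul_smul, mul_comm a b]
  abel

lemma serre_def (q : ℂ) (hq0 : q ≠ 0) (X Y : R) :
    Serre q X Y ↔ qad X (q ^ 2) (qad X 1 (qad X (q ^ 2)⁻¹ Y)) = 0 := by
  unfold Serre
  rw [qstr_succ, qstr_succ, qstr_succ, qstr_zero, inv_mul_cancel₀ (pow_ne_zero 2 hq0), one_mul]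

lemma serre_def' (q : ℂ) (hq0 : q ≠ 0) (X Y : R) :
    Serre q X Y ↔ qad X (q ^ 2)⁻¹ (qad X 1 (qad X (q ^ 2)⁻¹⁻¹ Y)) = 0 := by
  rw [serre_def q hq0, inv_inv, qad_comm X (q ^ 2) 1, qad_comm X (q ^ 2), qad_comm X 1]

/-- The `q`-Serre relation for `X` implies the one for `Z + X` if `Z` `q`-commutes suitably. -/
lemma serre_add_aux (c : ℂ) (hc : c ≠ 0) (Z X E : R) (h1 : Z * E = c⁻¹ • (E * Z))
    (h2 : Z * X = c • (X * Z)) (h : qad X c (qad X 1 (qad X c⁻¹ E)) = 0) :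
    qad (Z + X) c (qad (Z + X) 1 (qad (Z + X) c⁻¹ E)) = 0 := by
  have split : ∀ (a : ℂ) (u : R), qad (Z + X) a u = qad Z a u + qad X a u := by
    intro a u
    simp only [qad_apply, add_mul, mul_add, smul_add]; abel
  have next : ∀ (a b : ℂ) (u : R), Z * u = a • (u * Z) →
      Z * (qad X b u) = (c * a) • (qad X b u * Z) := by
    intro a b u hu
    simp only [qad_apply, mul_sub, sub_mul, smul_sub, mul_smul_comm, smul_mul_assoc, mul_assoc]
    rw [← mul_assoc Z X, ← mul_assoc Z u, h2, hu]
    simp only [smul_mul_assoc, mul_assoc, h2, mul_smul_comm, hu, smul_smul]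
    congr 2
    ring
  have kill : ∀ (a : ℂ) (u : R), Z * u = a • (u * Z) → qad Z a u = 0 := by
    intro a u hu; rw [qad_apply, hu, sub_self]
  have s1 := next _ c⁻¹ _ h1
  rw [mul_inv_cancel₀ hc] at s1
  have s2 := next _ 1 _ s1
  rw [mul_one] at s2
  rw [split c⁻¹, kill _ _ h1, zero_add, split 1, kill _ _ s1, zero_add, split c, kill _ _ s2,
    zero_add, h]

/-- The `q`-Serre relation holds if the commutator `[X, Y]` is a sum of two elements which `q`-commute
with `X` in opposite ways. -/
lemma serre_of_comm (q : ℂ) (hq0 : q ≠ 0) (X Y A B : R) (h : X * Y - Y * X = A + B)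
    (hA : X * A = q ^ 2 • (A * X)) (hB : X * B = (q ^ 2)⁻¹ • (B * X)) : Serre q X Y := by
  rw [serre_def q hq0, qad_comm X 1, qad_comm X (q ^ 2)]
  have : qad X 1 Y = A + B := by rw [qad_apply, one_smul, h]
  rw [this, map_add, map_add]
  have h1 : qad X (q ^ 2) A = 0 := by rw [qad_apply, hA, sub_self]
  have h2 : qad X (q ^ 2)⁻¹ B = 0 := by rw [qad_apply, hB, sub_self]
  rw [h1, qad_comm, h2]
  simp

lemma serre_smul_right (q : ℂ) (X Y : R) (c : ℂ) (h : Serre q X Y) : Serre q X (c • Y) := by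
  unfold Serre at *
  rw [map_smul, h, smul_zero]

lemma serre_smul_left (q : ℂ) (X Y : R) (c : ℂ) (h : Serre q X Y) (hq0 : q ≠ 0) :
    Serre q (c • X) Y := by
  rw [serre_iff q hq0] at *
  have := congrArg (fun z => c ^ 3 • z) h
  simp only [smul_zero] at this
  rw [← this]
  simp only [smul_sub, smul_add, smul_mul_assoc, mul_smul_comm, smul_smul]
  congr 1 <;> [congr 1 <;> [congr 1; skip]; skip] <;> congr 1 <;> ring

lemma serre_add_right (q : ℂ) (X Y Z : R) (h : Serre q X Y) (h' : Serre q X Z) :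
    Serre q X (Y + Z) := by
  unfold Serre at *
  rw [map_add, h, h', add_zero]

end SerreRing

section Tensor
variable {U W : Type*} [AddCommGroup U] [Module ℂ U] [AddCommGroup W] [Module ℂ W] {q : ℂ}

/-- The `q`-Serre relation for the coproducts `k ⊗ X' + X ⊗ 1` and `k' ⊗ Y' + Y ⊗ 1`. -/
lemma serre_tensor (hq0 : q ≠ 0) {k k' X Y : Module.End ℂ U} {X' Y' : Module.End ℂ W}
    (hkk : k * k' = k' * k)
    (hkX : k * X = q ^ 2 • (X * k)) (hkY : k * Y = (q ^ 2)⁻¹ • (Y * k))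
    (hkX' : k' * X = (q ^ 2)⁻¹ • (X * k')) (h : Serre q X Y) (h' : Serre q X' Y') :
    Serre q (TensorProduct.map k X' + TensorProduct.map X 1)
      (TensorProduct.map k' Y' + TensorProduct.map Y 1) := by
  have hq2 : q ^ 2 ≠ 0 := pow_ne_zero 2 hq0
  have hXk : X * k = (q ^ 2)⁻¹ • (k * X) := by
    rw [hkX, smul_smul, inv_mul_cancel₀ hq2, one_smul]
  have hXk' : X * k' = q ^ 2 • (k' * X) := by
    rw [hkX', smul_smul, mul_inv_cancel₀ hq2, one_smul]
  apply serre_add_right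
  · rw [serre_def' q hq0, add_comm]
    apply serre_add_aux _ (inv_ne_zero hq2)
    · rw [← TensorProduct.map_mul, ← TensorProduct.map_mul, hXk', inv_inv,
        TensorProduct.map_smul_left, one_mul, mul_one]
    · rw [← TensorProduct.map_mul, ← TensorProduct.map_mul, hXk, TensorProduct.map_smul_left,
        one_mul, mul_one]
    · rw [← serre_def' q hq0]
      rw [serre_iff q hq0] at h' ⊢
      simp only [← TensorProduct.map_mul]
      have e1 : k * (k * (k' * k)) = k * (k * (k * k')) := by rw [hkk]
      have e2 : k * (k' * (k * k)) = k * (k * (k * k')) := by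
        rw [← mul_assoc k' k, ← hkk, mul_assoc k k', ← hkk]
      have e3 : k' * (k * (k * k)) = k * (k * (k * k')) := by
        rw [← mul_assoc k' k, ← hkk, mul_assoc k k', e2]
      rw [e1, e2, e3]
      simp only [← TensorProduct.map_smul_right]
      have sub : ∀ (a b : Module.End ℂ W) (c : Module.End ℂ U),
          TensorProduct.map c a - TensorProduct.map c b = TensorProduct.map c (a - b) := by
        intro a b c
        rw [sub_eq_iff_eq_add, ← TensorProduct.map_add_right, sub_add_cancel]
      rw [sub, ← TensorProduct.map_add_right, sub, h']
      exact TensorProduct.map_zero_right _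
  · rw [serre_def q hq0]
    apply serre_add_aux _ hq2
    · rw [← TensorProduct.map_mul, ← TensorProduct.map_mul, hkY, TensorProduct.map_smul_left,
        one_mul, mul_one]
    · rw [← TensorProduct.map_mul, ← TensorProduct.map_mul, hkX, TensorProduct.map_smul_left,
        one_mul, mul_one]
    · rw [← serre_def q hq0]
      rw [serre_iff q hq0] at h ⊢
      simp only [← TensorProduct.map_mul, mul_one]
      simp only [← TensorProduct.map_smul_left]
      have sub : ∀ (a b : Module.End ℂ U) (c : Module.End ℂ W),
          TensorProduct.map a c - TensorProduct.map b c = TensorProduct.map (a - b) c := by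
        intro a b c
        rw [sub_eq_iff_eq_add, ← TensorProduct.map_add_left, sub_add_cancel]
      rw [sub, ← TensorProduct.map_add_left, sub, h]
      exact TensorProduct.map_zero_left _

variable {x e f K0 K1 : Module.End ℂ U} {x' e' f' K0' K1' : Module.End ℂ W}

/-- The tensor product of two modules. -/
theorem rep_tensor (hq0 : q ≠ 0) (h : IsUqpRep q x e f K0 K1) (h' : IsUqpRep q x' e' f' K0' K1') :
    IsUqpRep q (TensorProduct.map K0 x' + TensorProduct.map x 1)
      (TensorProduct.map K1 e' + TensorProduct.map e 1)
      (TensorProduct.map 1 f' + TensorProduct.map f K0')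
      (TensorProduct.map K0 K0') (TensorProduct.map K1 K1') := by
  have hq2 : q ^ 2 ≠ 0 := pow_ne_zero 2 hq0
  have hc : K0 * K1 = K1 * K0 := h.K0K1.trans h.K1K0.symm
  have hc' : K0' * K1' = K1' * K0' := h'.K0K1.trans h'.K1K0.symm
  constructor
  · rw [← TensorProduct.map_mul, h.K0K1, h'.K0K1, TensorProduct.map_one]
  · rw [← TensorProduct.map_mul, h.K1K0, h'.K1K0, TensorProduct.map_one]
  · simp only [mul_add, add_mul, ← TensorProduct.map_mul, smul_add, h.K0E0, h'.K0E0,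
      TensorProduct.map_smul_left, TensorProduct.map_smul_right, one_mul, mul_one]
  · simp only [mul_add, add_mul, ← TensorProduct.map_mul, smul_add, h.K1E1p, h'.K1E1p,
      TensorProduct.map_smul_left, TensorProduct.map_smul_right, one_mul, mul_one]
  · simp only [mul_add, add_mul, ← TensorProduct.map_mul, smul_add, h.K1E1m, h'.K1E1m,
      TensorProduct.map_smul_left, TensorProduct.map_smul_right, one_mul, mul_one, hc']
  · simp only [mul_add, add_mul, ← TensorProduct.map_mul, smul_add, h.K1E0, h'.K1E0,
      TensorProduct.map_smul_left, TensorProduct.map_smul_right, one_mul, mul_one, hc]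
  · simp only [mul_add, add_mul, ← TensorProduct.map_mul, smul_add, h.K0E1p, h'.K0E1p,
      TensorProduct.map_smul_left, TensorProduct.map_smul_right, one_mul, mul_one, hc]
  · simp only [mul_add, add_mul, ← TensorProduct.map_mul, smul_add, h.K0E1m, h'.K0E1m,
      TensorProduct.map_smul_left, TensorProduct.map_smul_right, one_mul, mul_one]
  · have e1 : e * f = f * e + (q - q⁻¹)⁻¹ • (K1 - K0) := by rw [← h.e1comm]; abel
    have e2 : e' * f' = f' * e' + (q - q⁻¹)⁻¹ • (K1' - K0') := by rw [← h'.e1comm]; abel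
    simp only [mul_add, add_mul, ← TensorProduct.map_mul, one_mul, mul_one, e1, e2, h.K1E1m,
      h'.K0E1p, TensorProduct.map_smul_left, TensorProduct.map_smul_right,
      TensorProduct.map_add_left, TensorProduct.map_add_right]
    have s1 : TensorProduct.map K1 (K1' - K0') =
        TensorProduct.map K1 K1' - TensorProduct.map K1 K0' := by
      rw [eq_sub_iff_add_eq, ← TensorProduct.map_add_right, sub_add_cancel]
    have s2 : TensorProduct.map (K1 - K0) K0' =
        TensorProduct.map K1 K0' - TensorProduct.map K0 K0' := by
      rw [eq_sub_iff_add_eq, ← TensorProduct.map_add_left, sub_add_cancel]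
    rw [s1, s2]
    simp only [smul_sub]
    abel
  · simp only [mul_add, add_mul, ← TensorProduct.map_mul, one_mul, mul_one, h.e0e1m, h'.e0e1m,
      h.K0E1m, h'.K0E0, TensorProduct.map_smul_left, TensorProduct.map_smul_right]
    abel
  · rw [← serre_of_brk q hq0]
    exact serre_tensor hq0 hc h.K0E0 h.K0E1p h.K1E0 (rep_serre_xe hq0 h) (rep_serre_xe hq0 h')
  · rw [← serre_of_brk q hq0]
    exact serre_tensor hq0 hc.symm h.K1E1p h.K1E0 h.K0E1p (rep_serre_ex hq0 h) (rep_serre_ex hq0 h')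

end Tensor

section Eval
variable (q a : ℂ) (ℓ : ℕ)

/-- The `j`-th coordinate of a vector of `V(ℓ,a)`, zero for `j > ℓ`. -/
def co (ℓ j : ℕ) : (Fin (ℓ + 1) → ℂ) →ₗ[ℂ] ℂ :=
  if h : j < ℓ + 1 then LinearMap.proj ⟨j, h⟩ else 0

lemma co_of_lt {ℓ j : ℕ} (h : j < ℓ + 1) (u : Fin (ℓ + 1) → ℂ) : co ℓ j u = u ⟨j, h⟩ := by
  simp [co, h]

lemma co_of_gt {ℓ j : ℕ} (h : ℓ < j) : co ℓ j = 0 := by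
  simp [co, show ¬ j < ℓ + 1 by omega]

lemma ext_co {ℓ : ℕ} {u w : Fin (ℓ + 1) → ℂ} (h : ∀ j, j ≤ ℓ → co ℓ j u = co ℓ j w) : u = w := by
  ext ⟨j, hj⟩
  have := h j (by omega)
  rwa [co_of_lt hj, co_of_lt hj] at this

lemma co_K0 (j : ℕ) (u : Fin (ℓ + 1) → ℂ) :
    co ℓ j (evalK0 q ℓ u) = q ^ (2 * (j : ℤ) - ℓ) * co ℓ j u := by
  by_cases h : j < ℓ + 1
  · rw [co_of_lt h, co_of_lt h, evalK0, Matrix.mulVecLin_apply, Matrix.mulVec_diagonal]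
  · simp [co, h]

lemma co_K1 (j : ℕ) (u : Fin (ℓ + 1) → ℂ) :
    co ℓ j (evalK1 q ℓ u) = q ^ ((ℓ : ℤ) - 2 * j) * co ℓ j u := by
  by_cases h : j < ℓ + 1
  · rw [co_of_lt h, co_of_lt h, evalK1, Matrix.mulVecLin_apply, Matrix.mulVec_diagonal]
  · simp [co, h]

lemma co_E1m_succ (j : ℕ) (hj : j + 1 ≤ ℓ) (u : Fin (ℓ + 1) → ℂ) :
    co ℓ (j + 1) (evalE1m q ℓ u) = qnum q ((j : ℤ) + 1) * co ℓ j u := by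
  rw [co_of_lt (by omega), co_of_lt (show j < ℓ + 1 by omega), evalE1m, Matrix.mulVecLin_apply,
    Matrix.mulVec, dotProduct, Finset.sum_eq_single ⟨j, by omega⟩]
  · simp
  · intro b _ hb
    have : ¬ (j + 1 = (b : ℕ) + 1) := fun h => hb (Fin.ext (by simp only; omega))
    simp only [Matrix.of_apply, if_neg this, zero_mul]
  · simp

lemma co_E1m_zero (u : Fin (ℓ + 1) → ℂ) : co ℓ 0 (evalE1m q ℓ u) = 0 := by
  rw [co_of_lt (by omega), evalE1m, Matrix.mulVecLin_apply, Matrix.mulVec, dotProduct]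
  refine Finset.sum_eq_zero fun b _ => ?_
  simp

lemma co_E1p (j : ℕ) (u : Fin (ℓ + 1) → ℂ) :
    co ℓ j (evalE1p q ℓ u) = qnum q ((ℓ : ℤ) - j) * co ℓ (j + 1) u := by
  rcases lt_trichotomy j ℓ with h | rfl | h
  · rw [co_of_lt (show j < ℓ + 1 by omega), co_of_lt (show j + 1 < ℓ + 1 by omega), evalE1p,
      Matrix.mulVecLin_apply, Matrix.mulVec, dotProduct, Finset.sum_eq_single ⟨j + 1, by omega⟩]
    · simp only [Matrix.of_apply, if_true]
      congr 2
      push_cast; ring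
    · intro b _ hb
      have : ¬ ((b : ℕ) = j + 1) := fun h => hb (Fin.ext (by simp only; omega))
      simp only [Matrix.of_apply, if_neg this, zero_mul]
    · simp
  · rw [sub_self, qnum_zero, zero_mul, co_of_lt (show j < j + 1 by omega), evalE1p,
      Matrix.mulVecLin_apply, Matrix.mulVec, dotProduct]
    refine Finset.sum_eq_zero fun b _ => ?_
    have : ¬ ((b : ℕ) = j + 1) := by omega
    simp only [Matrix.of_apply, if_neg this, zero_mul]
  · rw [co_of_gt h, co_of_gt (by omega)]; simp

lemma evalE0_eq : evalE0 q a ℓ = (a * q) • evalE1m q ℓ := by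
  have : (Matrix.of fun j i : Fin (ℓ + 1) =>
      if (j : ℕ) = (i : ℕ) + 1 then a * q * qnum q ((i : ℤ) + 1) else 0) =
      (a * q) • (Matrix.of fun j i : Fin (ℓ + 1) =>
        if (j : ℕ) = (i : ℕ) + 1 then qnum q ((i : ℤ) + 1) else 0) := by
    ext j i
    simp only [Matrix.of_apply, Matrix.smul_apply, smul_eq_mul]
    split_ifs <;> simp
  refine LinearMap.ext fun u => ?_
  rw [evalE0, this, Matrix.mulVecLin_apply, Matrix.smul_mulVec]
  rfl

/-- `V(ℓ,a)` is a `U'_q(L(sl₂))`-module. -/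
theorem rep_eval (hq0 : q ≠ 0) (hq : ∀ n : ℕ, 0 < n → q ^ n ≠ 1) :
    IsUqpRep q (evalE0 q a ℓ) (evalE1p q ℓ) (evalE1m q ℓ) (evalK0 q ℓ) (evalK1 q ℓ) := by
  have hq2 : q ^ 2 ≠ 0 := pow_ne_zero 2 hq0
  have hs : q - q⁻¹ ≠ 0 := q_sub_ne q hq0 hq
  have hz (j : ℕ) : q ^ (2 * (j : ℤ) - ℓ) * q ^ ((ℓ : ℤ) - 2 * j) = 1 := by
    rw [← zpow_add₀ hq0, show 2 * (j : ℤ) - ℓ + (ℓ - 2 * j) = 0 by ring, zpow_zero]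
  have h01 : evalK0 q ℓ * evalK1 q ℓ = 1 := by
    refine LinearMap.ext fun u => ext_co fun j _ => ?_
    simp only [Module.End.mul_apply, co_K0, co_K1, Module.End.one_apply]
    rw [← mul_assoc, hz, one_mul]
  have h10 : evalK1 q ℓ * evalK0 q ℓ = 1 := by
    refine LinearMap.ext fun u => ext_co fun j _ => ?_
    simp only [Module.End.mul_apply, co_K0, co_K1, Module.End.one_apply]
    rw [← mul_assoc, mul_comm (q ^ _), hz, one_mul]
  have h0f : evalK0 q ℓ * evalE1m q ℓ = q ^ 2 • (evalE1m q ℓ * evalK0 q ℓ) := by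
    refine LinearMap.ext fun u => ext_co fun j hj => ?_
    simp only [Module.End.mul_apply, LinearMap.smul_apply, map_smul, co_K0, smul_eq_mul]
    rcases j with _ | j
    · simp only [co_E1m_zero, mul_zero]
    · rw [co_E1m_succ _ _ _ hj, co_E1m_succ _ _ _ hj, co_K0,
        show 2 * ((j + 1 : ℕ) : ℤ) - ℓ = (2 : ℕ) + (2 * (j : ℤ) - ℓ) by push_cast; ring,
        zpow_add₀ hq0, zpow_natCast]
      ring
  have h0e : evalK0 q ℓ * evalE1p q ℓ = (q ^ 2)⁻¹ • (evalE1p q ℓ * evalK0 q ℓ) := by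
    refine LinearMap.ext fun u => ext_co fun j hj => ?_
    simp only [Module.End.mul_apply, LinearMap.smul_apply, map_smul, co_K0, co_E1p, smul_eq_mul]
    rw [show 2 * ((j + 1 : ℕ) : ℤ) - ℓ = (2 : ℕ) + (2 * (j : ℤ) - ℓ) by push_cast; ring,
        zpow_add₀ hq0, zpow_natCast]
    field_simp
  have h1f := inv_comm hq2 h01 h10 h0f
  have h1e := inv_comm (inv_ne_zero hq2) h01 h10 h0e
  rw [inv_inv] at h1e
  have hef : evalE1p q ℓ * evalE1m q ℓ - evalE1m q ℓ * evalE1p q ℓ =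
      (q - q⁻¹)⁻¹ • (evalK1 q ℓ - evalK0 q ℓ) := by
    refine LinearMap.ext fun u => ext_co fun j hj => ?_
    simp only [Module.End.mul_apply, LinearMap.smul_apply, LinearMap.sub_apply, map_smul, map_sub,
      co_K0, co_K1, co_E1p, smul_eq_mul]
    have hr := qnum_rel q hq0 hq j ℓ
    have h3 : qnum q ((ℓ : ℤ) - 2 * j) * (q - q⁻¹) = q ^ ((ℓ : ℤ) - 2 * j) - q ^ (2 * (j : ℤ) - ℓ) := by
      rw [qnum, div_mul_cancel₀ _ hs, neg_sub]
    have h1 : qnum q ((ℓ : ℤ) - j) * co ℓ (j + 1) (evalE1m q ℓ u) =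
        qnum q ((ℓ : ℤ) - j) * (qnum q ((j : ℤ) + 1) * co ℓ j u) := by
      rcases hj.eq_or_lt with rfl | hj
      · rw [sub_self, qnum_zero]; ring
      · rw [co_E1m_succ _ _ _ hj]
    have h2 : co ℓ j (evalE1m q ℓ (evalE1p q ℓ u)) =
        qnum q (j : ℤ) * qnum q ((ℓ : ℤ) - j + 1) * co ℓ j u := by
      rcases j with _ | j
      · rw [co_E1m_zero]; simp [qnum_zero]
      · rw [co_E1m_succ _ _ _ hj, co_E1p]
        rw [show (ℓ : ℤ) - (j + 1 : ℕ) + 1 = ℓ - j by push_cast; ring]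
        push_cast; ring
    rw [h1, h2, ← sub_mul, ← h3]
    have hs1 := inv_mul_cancel₀ hs
    generalize q - q⁻¹ = s at hs1
    linear_combination co ℓ j u * hr - qnum q ((ℓ : ℤ) - 2 * j) * co ℓ j u * hs1
  have hfe : evalE1m q ℓ * evalE1p q ℓ - evalE1p q ℓ * evalE1m q ℓ =
      (q - q⁻¹)⁻¹ • (evalK0 q ℓ - evalK1 q ℓ) := by
    rw [← neg_sub (evalE1p q ℓ * evalE1m q ℓ), hef, smul_sub, smul_sub, neg_sub]
  have S1 : Serre q (evalE1m q ℓ) (evalE1p q ℓ) := by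
    refine serre_of_comm q hq0 _ _ (-(q - q⁻¹)⁻¹ • evalK1 q ℓ) ((q - q⁻¹)⁻¹ • evalK0 q ℓ) ?_ ?_ ?_
    · rw [hfe]; module
    · rw [mul_smul_comm, smul_mul_assoc, h1f, smul_smul, smul_smul,
        mul_right_comm, mul_inv_cancel₀ hq2, one_mul]
    · rw [mul_smul_comm, smul_mul_assoc, h0f, smul_smul, smul_smul,
        mul_right_comm, inv_mul_cancel₀ hq2, one_mul]
  have S2 : Serre q (evalE1p q ℓ) (evalE1m q ℓ) := by
    refine serre_of_comm q hq0 _ _ (-(q - q⁻¹)⁻¹ • evalK0 q ℓ) ((q - q⁻¹)⁻¹ • evalK1 q ℓ) ?_ ?_ ?_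
    · rw [hef]; module
    · rw [mul_smul_comm, smul_mul_assoc, h0e, smul_smul, smul_smul,
        mul_right_comm, mul_inv_cancel₀ hq2, one_mul]
    · rw [mul_smul_comm, smul_mul_assoc, h1e, smul_smul, smul_smul,
        mul_right_comm, inv_mul_cancel₀ hq2, one_mul]
  rw [evalE0_eq]
  refine ⟨h01, h10, ?_, h1e, h1f, ?_, h0e, h0f, hef, ?_, ?_, ?_⟩
  · rw [mul_smul_comm, h0f, smul_mul_assoc, smul_comm]
  · rw [mul_smul_comm, h1f, smul_mul_assoc, smul_comm]
  · rw [smul_mul_assoc, mul_smul_comm]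
  · rw [← serre_of_brk q hq0]
    exact serre_smul_left q _ _ _ S1 hq0
  · rw [← serre_of_brk q hq0]
    exact serre_smul_right q _ _ _ S2

end Eval

/-! ### Coordinates on `V(ℓ,a) ⊗ W` -/

open TensorProduct

section Grading
variable {V : Type*} [AddCommGroup V] [Module ℂ V] {q : ℂ} {x e f K0 K1 : Module.End ℂ V}

/-- Induction over the weight decomposition. -/
lemma Gr.induction {d : ℕ} (hg : Gr q K0 d) {p : V → Prop} (z : V) (h0 : p 0)
    (hw : ∀ i : ℕ, i ≤ d → ∀ z, IsWt q K0 (2 * (i : ℤ) - d) z → p z)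
    (hadd : ∀ y z, p y → p z → p (y + z)) : p z := by
  have hz : z ∈ (⊤ : Submodule ℂ V) := Submodule.mem_top
  rw [← hg] at hz
  exact Submodule.iSup_induction _ (motive := p) hz
    (fun i z hz => hw i (by omega) z (Module.End.mem_eigenspace_iff.1 hz)) h0 hadd

lemma IsWt.add {c : ℤ} {y z : V} (hy : IsWt q K0 c y) (hz : IsWt q K0 c z) :
    IsWt q K0 c (y + z) := by
  unfold IsWt at *
  rw [map_add, hy, hz, smul_add]

lemma IsWt.zero {c : ℤ} : IsWt q K0 c (0 : V) := by
  unfold IsWt; simp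

lemma IsWt.smul {c : ℤ} {z : V} (hz : IsWt q K0 c z) (s : ℂ) : IsWt q K0 c (s • z) := by
  unfold IsWt at *
  rw [map_smul, hz, smul_comm]

lemma Gr.e_pow_wt (hq0 : q ≠ 0) (hq : ∀ n : ℕ, 0 < n → q ^ n ≠ 1)
    (h : IsUqpRep q x e f K0 K1) {d : ℕ} (hg : Gr q K0 d) (z : V) :
    IsWt q K0 (-(d : ℤ)) ((e ^ d) z) := by
  refine hg.induction (p := fun z => IsWt q K0 (-(d : ℤ)) ((e ^ d) z)) z
    (by simp only [map_zero]; exact IsWt.zero) (fun i hi z hz => ?_)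
    (fun y z hy hz => by simp only [map_add]; exact hy.add hz)
  have h1 := hz.down_pow hq0 h.K0E1p d
  rcases hi.eq_or_lt with rfl | hi
  · convert h1 using 1; ring
  · rw [hg.neg hq0 hq _ (by omega) _ h1]; exact IsWt.zero

lemma Gr.e_pow_zero (hq0 : q ≠ 0) (hq : ∀ n : ℕ, 0 < n → q ^ n ≠ 1)
    (h : IsUqpRep q x e f K0 K1) {d : ℕ} (hg : Gr q K0 d) {k : ℕ} (hk : d < k) (z : V) :
    (e ^ k) z = 0 := by
  obtain ⟨j, rfl⟩ := Nat.exists_eq_add_of_lt hk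
  rw [show d + j + 1 = (j + 1) + d by ring, pow_add, Module.End.mul_apply]
  exact hg.neg hq0 hq _ (by push_cast; omega) _
    ((hg.e_pow_wt hq0 hq h z).down_pow hq0 h.K0E1p (j + 1))

/-- The map `e^d` factors through the projection to the weight space of weight `d`. -/
lemma Gr.e_pow_K0 (hq0 : q ≠ 0) (hq : ∀ n : ℕ, 0 < n → q ^ n ≠ 1)
    (h : IsUqpRep q x e f K0 K1) {d : ℕ} (hg : Gr q K0 d) (z : V) :
    (e ^ d) (K0 z) = q ^ (d : ℤ) • (e ^ d) z := by
  refine hg.induction (p := fun z => (e ^ d) (K0 z) = q ^ (d : ℤ) • (e ^ d) z) z (by simp)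
    (fun i hi z hz => ?_)
    (fun y z hy hz => by simp only [map_add, hy, hz, smul_add])
  rw [hz, map_smul]
  rcases hi.eq_or_lt with rfl | hi
  · congr 2; ring
  · rw [hg.neg hq0 hq _ (by omega) _ (hz.down_pow hq0 h.K0E1p d), smul_zero, smul_zero]

end Grading

lemma qprod_right {R : Type*} [Ring R] [Algebra ℂ R] {q : ℂ} (hq0 : q ≠ 0) (A B : R) (u : ℂ) (n : ℕ) :
    qprod q A B u (n + 1) = qprod q A B (u * q ^ (-2 : ℤ)) n * (A + u • B) := by
  induction n with
  | zero => simp [qprod]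
  | succ n ih =>
    rw [qprod, ih, qprod, mul_assoc]
    congr 3
    rw [mul_assoc, ← zpow_add₀ hq0]
    congr 2
    push_cast; ring

/-- `n`-step expansion of a two-term recursion along antidiagonals. -/
lemma ad_sum {M : Type*} [AddCommGroup M] [Module ℂ M] (s A B : ℕ → ℕ → ℂ) (v : ℕ → ℕ → M) (n : ℕ)
    (h1 : ∀ k, s 0 (k + 1) = A 0 k) (h2 : ∀ r, s (r + 1) 0 = B r 0)
    (h3 : ∀ r k, s (r + 1) (k + 1) = A (r + 1) k + B r (k + 1)) :
    ∑ p ∈ Finset.HasAntidiagonal.antidiagonal (n + 1), s p.1 p.2 • v p.1 p.2 =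
      ∑ p ∈ Finset.HasAntidiagonal.antidiagonal n, (A p.1 p.2 • v p.1 (p.2 + 1) + B p.1 p.2 • v (p.1 + 1) p.2) := by
  let α : ℕ → ℕ → ℂ := fun r k => k.casesOn 0 (fun k => A r k)
  let β : ℕ → ℕ → ℂ := fun r k => r.casesOn 0 (fun r => B r k)
  have hs : ∀ p ∈ Finset.HasAntidiagonal.antidiagonal (n + 1), s p.1 p.2 • v p.1 p.2 =
      α p.1 p.2 • v p.1 p.2 + β p.1 p.2 • v p.1 p.2 := by
    rintro ⟨r, k⟩ hp
    have : r + k = n + 1 := Finset.HasAntidiagonal.mem_antidiagonal.1 hp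
    rw [← add_smul]
    congr 1
    rcases r with _ | r <;> rcases k with _ | k
    · omega
    · simp [α, β, h1]
    · simp [α, β, h2]
    · simp [α, β, h3]
  rw [Finset.sum_congr rfl hs, Finset.sum_add_distrib, Finset.sum_add_distrib]
  congr 1
  · rw [Finset.Nat.sum_antidiagonal_succ']
    simp [α]
  · rw [Finset.Nat.sum_antidiagonal_succ]
    simp [β]

section Coord
variable (q a : ℂ) (ℓ : ℕ) {W : Type*} [AddCommGroup W] [Module ℂ W]

/-- The basis vector `v_j` of `V(ℓ,a)`, zero for `j > ℓ`. -/
def bv (ℓ j : ℕ) : Fin (ℓ + 1) → ℂ := fun i => if (i : ℕ) = j then 1 else 0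

lemma co_bv (i j : ℕ) : co ℓ i (bv ℓ j) = if i = j ∧ j ≤ ℓ then 1 else 0 := by
  by_cases h : i < ℓ + 1
  · rw [co_of_lt h, bv]
    simp only
    congr 1
    simp only [eq_iff_iff]; omega
  · rw [co_of_gt (by omega), LinearMap.zero_apply, if_neg (by omega)]

lemma bv_of_gt {j : ℕ} (h : ℓ < j) : bv ℓ j = 0 := by
  funext i
  simp only [bv, Pi.zero_apply]
  rw [if_neg (by omega)]

lemma K0_bv (j : ℕ) : evalK0 q ℓ (bv ℓ j) = q ^ (2 * (j : ℤ) - ℓ) • bv ℓ j := by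
  refine ext_co fun i hi => ?_
  rw [co_K0, map_smul, co_bv]
  split_ifs with h
  · rw [h.1, smul_eq_mul]
  · simp

lemma K1_bv (j : ℕ) : evalK1 q ℓ (bv ℓ j) = q ^ ((ℓ : ℤ) - 2 * j) • bv ℓ j := by
  refine ext_co fun i hi => ?_
  rw [co_K1, map_smul, co_bv]
  split_ifs with h
  · rw [h.1, smul_eq_mul]
  · simp

lemma F_bv (j : ℕ) : evalE1m q ℓ (bv ℓ j) = qnum q ((j : ℤ) + 1) • bv ℓ (j + 1) := by
  refine ext_co fun i hi => ?_
  rcases i with _ | i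
  · rw [co_E1m_zero, map_smul, co_bv, if_neg (by omega), smul_zero]
  · rw [co_E1m_succ _ _ _ hi, map_smul, co_bv, co_bv, smul_eq_mul]
    by_cases h : i = j
    · subst h
      rw [if_pos ⟨rfl, by omega⟩, if_pos ⟨rfl, by omega⟩]
    · rw [if_neg (by tauto), if_neg (by omega)]; simp

lemma E_bv (j : ℕ) : evalE1p q ℓ (bv ℓ (j + 1)) = qnum q ((ℓ : ℤ) - j) • bv ℓ j := by
  refine ext_co fun i hi => ?_
  rw [co_E1p, map_smul, co_bv, co_bv, smul_eq_mul]
  by_cases h : i = j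
  · subst h
    by_cases hl : i = ℓ
    · subst hl; simp [qnum_zero]
    · rw [if_pos ⟨rfl, by omega⟩, if_pos ⟨rfl, by omega⟩]
  · rw [if_neg (by omega), if_neg (by tauto)]; simp

lemma E_bv_zero : evalE1p q ℓ (bv ℓ 0) = 0 := by
  refine ext_co fun i hi => ?_
  rw [co_E1p, co_bv, if_neg (by omega)]; simp

/-- `Δ(E₀⁺)` on `V(ℓ,a) ⊗ W`. -/
def TX (x : Module.End ℂ W) : Module.End ℂ ((Fin (ℓ + 1) → ℂ) ⊗[ℂ] W) :=
  TensorProduct.map (evalK0 q ℓ) x + TensorProduct.map (evalE0 q a ℓ) 1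

/-- `Δ(E₁⁺)` on `V(ℓ,a) ⊗ W`. -/
def TE (e : Module.End ℂ W) : Module.End ℂ ((Fin (ℓ + 1) → ℂ) ⊗[ℂ] W) :=
  TensorProduct.map (evalK1 q ℓ) e + TensorProduct.map (evalE1p q ℓ) 1

/-- `Δ(E₁⁻)` on `V(ℓ,a) ⊗ W`. -/
def TF (f K0 : Module.End ℂ W) : Module.End ℂ ((Fin (ℓ + 1) → ℂ) ⊗[ℂ] W) :=
  TensorProduct.map 1 f + TensorProduct.map (evalE1m q ℓ) K0

/-- `Δ(K₀)` on `V(ℓ,a) ⊗ W`. -/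
def TK0 (K0 : Module.End ℂ W) : Module.End ℂ ((Fin (ℓ + 1) → ℂ) ⊗[ℂ] W) :=
  TensorProduct.map (evalK0 q ℓ) K0

/-- `Δ(K₁)` on `V(ℓ,a) ⊗ W`. -/
def TK1 (K1 : Module.End ℂ W) : Module.End ℂ ((Fin (ℓ + 1) → ℂ) ⊗[ℂ] W) :=
  TensorProduct.map (evalK1 q ℓ) K1

/-- The embedding `w ↦ v_j ⊗ w`. -/
def io (j : ℕ) : W →ₗ[ℂ] (Fin (ℓ + 1) → ℂ) ⊗[ℂ] W := TensorProduct.mk ℂ _ _ (bv ℓ j)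

/-- The coordinate along `v_j ⊗ W`. -/
def cr (j : ℕ) : (Fin (ℓ + 1) → ℂ) ⊗[ℂ] W →ₗ[ℂ] W :=
  (TensorProduct.lid ℂ W).toLinearMap ∘ₗ TensorProduct.map (co ℓ j) 1

lemma io_apply (j : ℕ) (w : W) : io ℓ j w = bv ℓ j ⊗ₜ[ℂ] w := rfl

lemma cr_tmul (j : ℕ) (u : Fin (ℓ + 1) → ℂ) (w : W) : cr ℓ j (u ⊗ₜ[ℂ] w) = co ℓ j u • w := by
  simp [cr]

lemma io_of_gt {j : ℕ} (h : ℓ < j) (w : W) : io ℓ j w = 0 := by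
  rw [io_apply, bv_of_gt _ h, zero_tmul]

lemma cr_of_gt {j : ℕ} (h : ℓ < j) (m : (Fin (ℓ + 1) → ℂ) ⊗[ℂ] W) : cr ℓ j m = 0 := by
  simp [cr, co_of_gt h]

lemma cr_io (i j : ℕ) (w : W) : cr ℓ i (io ℓ j w) = if i = j ∧ j ≤ ℓ then w else 0 := by
  rw [io_apply, cr_tmul, co_bv]
  split_ifs <;> simp

lemma sum_io_cr (m : (Fin (ℓ + 1) → ℂ) ⊗[ℂ] W) :
    ∑ j ∈ Finset.range (ℓ + 1), io ℓ j (cr ℓ j m) = m := by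
  induction m using TensorProduct.induction_on with
  | zero => simp
  | add y z hy hz => simp only [map_add, Finset.sum_add_distrib, hy, hz]
  | tmul u w =>
    simp only [cr_tmul, map_smul, io_apply]
    simp only [TensorProduct.smul_tmul', ← TensorProduct.sum_tmul]
    congr 1
    refine ext_co fun i hi => ?_
    rw [map_sum, Finset.sum_eq_single i]
    · rw [map_smul, co_bv, if_pos ⟨rfl, hi⟩]; simp
    · intro j _ hj
      rw [map_smul, co_bv, if_neg (fun h => hj h.1.symm), smul_zero]
    · intro h
      exact absurd (Finset.mem_range.2 (by omega)) h

lemma ext_cr {m : (Fin (ℓ + 1) → ℂ) ⊗[ℂ] W} (h : ∀ j, cr ℓ j m = 0) : m = 0 := by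
  rw [← sum_io_cr ℓ m]
  simp [h]

variable (x e f K0 K1 : Module.End ℂ W)

lemma TK0_io (j : ℕ) (w : W) :
    TK0 q ℓ K0 (io ℓ j w) = q ^ (2 * (j : ℤ) - ℓ) • io ℓ j (K0 w) := by
  simp only [TK0, io_apply, TensorProduct.map_tmul, K0_bv, TensorProduct.smul_tmul']

lemma TK1_io (j : ℕ) (w : W) :
    TK1 q ℓ K1 (io ℓ j w) = q ^ ((ℓ : ℤ) - 2 * j) • io ℓ j (K1 w) := by
  simp only [TK1, io_apply, TensorProduct.map_tmul, K1_bv, TensorProduct.smul_tmul']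

lemma TX_io (j : ℕ) (w : W) : TX q a ℓ x (io ℓ j w) =
    q ^ (2 * (j : ℤ) - ℓ) • io ℓ j (x w) + (a * q * qnum q ((j : ℤ) + 1)) • io ℓ (j + 1) w := by
  simp only [TX, io_apply, LinearMap.add_apply, TensorProduct.map_tmul, K0_bv, evalE0_eq,
    LinearMap.smul_apply, F_bv, smul_smul, TensorProduct.smul_tmul', Module.End.one_apply]

lemma TF_io (j : ℕ) (w : W) : TF q ℓ f K0 (io ℓ j w) =
    io ℓ j (f w) + qnum q ((j : ℤ) + 1) • io ℓ (j + 1) (K0 w) := by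
  simp only [TF, io_apply, LinearMap.add_apply, TensorProduct.map_tmul,
    F_bv, TensorProduct.smul_tmul', Module.End.one_apply]

lemma TE_io (j : ℕ) (w : W) : TE q ℓ e (io ℓ (j + 1) w) =
    q ^ ((ℓ : ℤ) - 2 * (j + 1 : ℕ)) • io ℓ (j + 1) (e w) + qnum q ((ℓ : ℤ) - j) • io ℓ j w := by
  simp only [TE, io_apply, LinearMap.add_apply, TensorProduct.map_tmul, K1_bv,
    E_bv, TensorProduct.smul_tmul', Module.End.one_apply]

lemma TE_io_zero (w : W) : TE q ℓ e (io ℓ 0 w) = q ^ (ℓ : ℤ) • io ℓ 0 (e w) := by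
  simp only [TE, io_apply, LinearMap.add_apply, TensorProduct.map_tmul, K1_bv,
    E_bv_zero, TensorProduct.smul_tmul', TensorProduct.zero_tmul, add_zero]
  simp

lemma cr_TK0 (j : ℕ) (m) :
    cr ℓ j (TK0 q ℓ K0 m) = q ^ (2 * (j : ℤ) - ℓ) • K0 (cr ℓ j m) := by
  induction m using TensorProduct.induction_on with
  | zero => simp
  | add y z hy hz => simp only [map_add, hy, hz, smul_add]
  | tmul u w => simp only [TK0, TensorProduct.map_tmul, cr_tmul, co_K0, map_smul, smul_smul]

lemma cr_TK1 (j : ℕ) (m) :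
    cr ℓ j (TK1 q ℓ K1 m) = q ^ ((ℓ : ℤ) - 2 * j) • K1 (cr ℓ j m) := by
  induction m using TensorProduct.induction_on with
  | zero => simp
  | add y z hy hz => simp only [map_add, hy, hz, smul_add]
  | tmul u w => simp only [TK1, TensorProduct.map_tmul, cr_tmul, co_K1, map_smul, smul_smul]

lemma cr_TE (j : ℕ) (m) : cr ℓ j (TE q ℓ e m) =
    q ^ ((ℓ : ℤ) - 2 * j) • e (cr ℓ j m) + qnum q ((ℓ : ℤ) - j) • cr ℓ (j + 1) m := by
  induction m using TensorProduct.induction_on with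
  | zero => simp
  | add y z hy hz => simp only [map_add, hy, hz, smul_add]; abel
  | tmul u w =>
    simp only [TE, LinearMap.add_apply, map_add, TensorProduct.map_tmul, cr_tmul, co_K1, co_E1p,
      map_smul, smul_smul, Module.End.one_apply]

lemma cr_TF (j : ℕ) (hj : j + 1 ≤ ℓ) (m) : cr ℓ (j + 1) (TF q ℓ f K0 m) =
    f (cr ℓ (j + 1) m) + qnum q ((j : ℤ) + 1) • K0 (cr ℓ j m) := by
  induction m using TensorProduct.induction_on with
  | zero => simp
  | add y z hy hz => simp only [map_add, hy, hz, smul_add]; abel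
  | tmul u w =>
    simp only [TF, LinearMap.add_apply, map_add, TensorProduct.map_tmul, cr_tmul,
      co_E1m_succ _ _ _ hj, map_smul, smul_smul, Module.End.one_apply]

lemma cr_TF_zero (m) : cr ℓ 0 (TF q ℓ f K0 m) = f (cr ℓ 0 m) := by
  induction m using TensorProduct.induction_on with
  | zero => simp
  | add y z hy hz => simp only [map_add, hy, hz]
  | tmul u w =>
    simp only [TF, LinearMap.add_apply, map_add, TensorProduct.map_tmul, cr_tmul,
      co_E1m_zero, map_smul, zero_smul, Module.End.one_apply, add_zero]

lemma cr_TX (j : ℕ) (hj : j + 1 ≤ ℓ) (m) : cr ℓ (j + 1) (TX q a ℓ x m) =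
    q ^ (2 * ((j + 1 : ℕ) : ℤ) - ℓ) • x (cr ℓ (j + 1) m) +
      (a * q * qnum q ((j : ℤ) + 1)) • cr ℓ j m := by
  induction m using TensorProduct.induction_on with
  | zero => simp
  | add y z hy hz => simp only [map_add, hy, hz, smul_add]; abel
  | tmul u w =>
    simp only [TX, LinearMap.add_apply, map_add, TensorProduct.map_tmul, cr_tmul, co_K0, evalE0_eq,
      LinearMap.smul_apply, smul_eq_mul, co_E1m_succ _ _ _ hj, map_smul, smul_smul,
      Module.End.one_apply, mul_assoc]

lemma cr_TX_zero (m) : cr ℓ 0 (TX q a ℓ x m) = q ^ (-(ℓ : ℤ)) • x (cr ℓ 0 m) := by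
  induction m using TensorProduct.induction_on with
  | zero => simp
  | add y z hy hz => simp only [map_add, hy, hz, smul_add]
  | tmul u w =>
    simp only [TX, LinearMap.add_apply, map_add, TensorProduct.map_tmul, cr_tmul, co_K0, evalE0_eq,
      LinearMap.smul_apply, smul_eq_mul, co_E1m_zero, map_smul, smul_smul,
      Module.End.one_apply, mul_zero, zero_smul, add_zero]
    simp

end Coord

/-! ### Irreducibility of `V(ℓ,a) ⊗ W` -/

/-- An irreducible module with `K₀`-weights among `-d, -d+2, …, d`, whose space of lowest weight `-d`
is the line spanned by `w0`, and with Drinfeld polynomial `P`. -/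
structure Good (q : ℂ) {W : Type*} [AddCommGroup W] [Module ℂ W] (x e f K0 K1 : Module.End ℂ W)
    (d : ℕ) (w0 : W) (P : Polynomial ℂ) : Prop where
  rep : IsUqpRep q x e f K0 K1
  irr : IsIrred x e f K0 K1
  gr : Gr q K0 d
  wt : IsWt q K0 (-(d : ℤ)) w0
  ne : w0 ≠ 0
  top : ∀ z, IsWt q K0 (-(d : ℤ)) z → ∃ c : ℂ, z = c • w0
  hP : HasP q x e w0 P

section
variable {q a : ℂ} {ℓ : ℕ} {W : Type*} [AddCommGroup W] [Module ℂ W]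
  {x e f K0 K1 : Module.End ℂ W}

lemma rep_T (hq0 : q ≠ 0) (hq : ∀ n : ℕ, 0 < n → q ^ n ≠ 1) (h : IsUqpRep q x e f K0 K1) :
    IsUqpRep q (TX q a ℓ x) (TE q ℓ e) (TF q ℓ f K0) (TK0 q ℓ K0) (TK1 q ℓ K1) :=
  rep_tensor hq0 (rep_eval q a ℓ hq0 hq) h

lemma gr_T (hq0 : q ≠ 0) {d : ℕ} (hg : Gr q K0 d) : Gr q (TK0 q ℓ K0) (ℓ + d) := by
  unfold Gr
  rw [eq_top_iff]
  intro m _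
  rw [← sum_io_cr ℓ m]
  refine Submodule.sum_mem _ fun j hj => ?_
  have hj' := Finset.mem_range.1 hj
  refine hg.induction (p := fun z => io ℓ j z ∈ _) (cr ℓ j m) (by simp only [map_zero]; exact zero_mem _)
    (fun i hi z hz => ?_) (fun y z hy hz => by simp only [map_add]; exact add_mem hy hz)
  refine Submodule.mem_iSup_of_mem ⟨i + j, by omega⟩ (Module.End.mem_eigenspace_iff.2 ?_)
  rw [TK0_io, hz, map_smul, smul_smul, ← zpow_add₀ hq0]
  congr 2
  push_cast; ring

lemma wt_io (hq0 : q ≠ 0) {c : ℤ} {w : W} (hw : IsWt q K0 c w) (j : ℕ) :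
    IsWt q (TK0 q ℓ K0) (2 * (j : ℤ) - ℓ + c) (io ℓ j w) := by
  unfold IsWt
  rw [TK0_io, hw, map_smul, smul_smul, ← zpow_add₀ hq0]

lemma wt_cr (hq0 : q ≠ 0) {c : ℤ} {m : (Fin (ℓ + 1) → ℂ) ⊗[ℂ] W} (hm : IsWt q (TK0 q ℓ K0) c m)
    (j : ℕ) : IsWt q K0 (c - (2 * (j : ℤ) - ℓ)) (cr ℓ j m) := by
  have h1 := cr_TK0 q ℓ K0 j m
  rw [hm, map_smul] at h1
  unfold IsWt
  rw [zpow_sub₀ hq0, div_eq_inv_mul, mul_smul, h1, smul_smul,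
    inv_mul_cancel₀ (zpow_ne_zero _ hq0), one_smul]

/-- The lowest weight space of `V(ℓ,a) ⊗ W` is the line through `v₀ ⊗ w₀`. -/
lemma top_T (hq0 : q ≠ 0) (hq : ∀ n : ℕ, 0 < n → q ^ n ≠ 1) {d : ℕ} {w0 : W} (hg : Gr q K0 d)
    (ht : ∀ z, IsWt q K0 (-(d : ℤ)) z → ∃ c : ℂ, z = c • w0)
    (m : (Fin (ℓ + 1) → ℂ) ⊗[ℂ] W) (hm : IsWt q (TK0 q ℓ K0) (-((ℓ + d : ℕ) : ℤ)) m) :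
    ∃ c : ℂ, m = c • io ℓ 0 w0 := by
  obtain ⟨c, hc⟩ := ht (cr ℓ 0 m) (by
    convert wt_cr hq0 hm 0 using 1; push_cast; ring)
  refine ⟨c, ?_⟩
  rw [← sum_io_cr ℓ m, Finset.sum_range_succ', hc, map_smul, Finset.sum_eq_zero, zero_add]
  intro j _
  rw [hg.neg hq0 hq _ ?_ _ (wt_cr hq0 hm (j + 1)), map_zero]
  omega

/-- Coefficients of `Δ(E₀⁺)^n (v₀ ⊗ w)`. -/
def cX (q a : ℂ) (ℓ r k : ℕ) : ℂ :=
  (a * q) ^ r * (qfac q (r + k) / qfac q k) * q ^ ((k : ℤ) * ((r : ℤ) - ℓ))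

/-- Coefficients of the `v₀`-coordinate of `Δ(E₁⁺)^n`. -/
def cE (q : ℂ) (ℓ r k : ℕ) : ℂ :=
  qfac q (r + k) / (qfac q r * qfac q k) * (∏ j ∈ Finset.range r, qnum q ((ℓ : ℤ) - j)) *
    q ^ (-((k : ℤ) * ((r : ℤ) - ℓ)))

lemma cX_rec (hq0 : q ≠ 0) (hq : ∀ n : ℕ, 0 < n → q ^ n ≠ 1) (r k : ℕ) :
    cX q a ℓ (r + 1) (k + 1) = q ^ (2 * ((r + 1 : ℕ) : ℤ) - ℓ) * cX q a ℓ (r + 1) k +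
      (a * q * qnum q ((r : ℤ) + 1)) * cX q a ℓ r (k + 1) := by
  unfold cX
  have hk := qfac_ne q hq0 hq k
  have hn : qnum q ((k : ℤ) + 1) ≠ 0 := qnum_ne q hq0 hq (by omega)
  have e1 : qfac q (r + 1 + (k + 1)) = qfac q (r + k + 1) * qnum q ((r : ℤ) + k + 2) := by
    rw [show r + 1 + (k + 1) = (r + k + 1) + 1 by ring, qfac_succ]
    congr 2
  have e2 : r + 1 + k = r + k + 1 := by ring
  have e3 : r + (k + 1) = r + k + 1 := by ring
  have hs := qnum_split q hq0 hq (r + 1) (k + 1)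
  rw [e1, e2, e3, qfac_succ q k, show (r : ℤ) + k + 2 = r + 1 + (k + 1) by ring, ← hs]
  have p1 : q ^ (((k + 1 : ℕ) : ℤ) * (((r + 1 : ℕ) : ℤ) - ℓ)) =
      q ^ (((k + 1 : ℕ) : ℤ) * ((r : ℤ) - ℓ)) * q ^ ((k : ℤ) + 1) := by
    simp only [← zpow_add₀ hq0]; congr 1; push_cast; ring
  have p2 : q ^ (2 * ((r + 1 : ℕ) : ℤ) - ℓ) * q ^ ((k : ℤ) * (((r + 1 : ℕ) : ℤ) - ℓ)) =
      q ^ (((k + 1 : ℕ) : ℤ) * ((r : ℤ) - ℓ)) * q ^ ((k : ℤ) + 1) * q ^ ((r : ℤ) + 1) := by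
    simp only [← zpow_add₀ hq0]; congr 1; push_cast; ring
  have p3 : q ^ (-((k : ℤ) + 1)) * q ^ ((k : ℤ) + 1) = 1 := by
    rw [← zpow_add₀ hq0, neg_add_cancel, zpow_zero]
  have hn' := mul_inv_cancel₀ hn
  rw [mul_comm (q ^ (2 * ((r + 1 : ℕ) : ℤ) - ℓ)), mul_assoc _ _ (q ^ (2 * ((r + 1 : ℕ) : ℤ) - ℓ)),
    mul_comm _ (q ^ (2 * ((r + 1 : ℕ) : ℤ) - ℓ)), p2, p1]
  simp only [div_eq_mul_inv, mul_inv, pow_succ]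
  generalize q ^ (((k + 1 : ℕ) : ℤ) * ((r : ℤ) - ℓ)) = Z
  generalize q ^ ((k : ℤ) + 1) = Qk at *
  generalize q ^ (-((k : ℤ) + 1)) = Qmk at *
  generalize q ^ ((r : ℤ) + 1) = Qr
  generalize qnum q ((k : ℤ) + 1) = nk at *
  generalize qnum q ((r : ℤ) + 1) = nr
  linear_combination ((a * q) ^ r * (a * q) * qfac q (r + k + 1) * (qfac q k)⁻¹ * Z) *
    (Qr * Qk * hn' + nr * nk⁻¹ * p3)

lemma cE_rec (hq0 : q ≠ 0) (hq : ∀ n : ℕ, 0 < n → q ^ n ≠ 1) (r k : ℕ) :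
    cE q ℓ (r + 1) (k + 1) = q ^ ((ℓ : ℤ) - 2 * ((r + 1 : ℕ) : ℤ)) * cE q ℓ (r + 1) k +
      qnum q ((ℓ : ℤ) - r) * cE q ℓ r (k + 1) := by
  unfold cE
  have hnk : qnum q ((k : ℤ) + 1) ≠ 0 := qnum_ne q hq0 hq (by omega)
  have hnr : qnum q ((r : ℤ) + 1) ≠ 0 := qnum_ne q hq0 hq (by omega)
  have e1 : qfac q (r + 1 + (k + 1)) = qfac q (r + k + 1) * qnum q ((r : ℤ) + k + 2) := by
    rw [show r + 1 + (k + 1) = (r + k + 1) + 1 by ring, qfac_succ]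
    congr 2
  have e2 : r + 1 + k = r + k + 1 := by ring
  have e3 : r + (k + 1) = r + k + 1 := by ring
  have hs := qnum_split q hq0 hq (k + 1) (r + 1)
  rw [e1, e2, e3, qfac_succ q k, qfac_succ q r, show (r : ℤ) + k + 2 = k + 1 + (r + 1) by ring, ← hs,
    Finset.prod_range_succ]
  have p1 : q ^ (-(((k + 1 : ℕ) : ℤ) * (((r + 1 : ℕ) : ℤ) - ℓ))) =
      q ^ (-(((k + 1 : ℕ) : ℤ) * ((r : ℤ) - ℓ))) * q ^ (-((k : ℤ) + 1)) := by
    simp only [← zpow_add₀ hq0]; congr 1; push_cast; ring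
  have p2 : q ^ ((ℓ : ℤ) - 2 * ((r + 1 : ℕ) : ℤ)) * q ^ (-((k : ℤ) * (((r + 1 : ℕ) : ℤ) - ℓ))) =
      q ^ (-(((k + 1 : ℕ) : ℤ) * ((r : ℤ) - ℓ))) * q ^ (-((k : ℤ) + 1)) * q ^ (-((r : ℤ) + 1)) := by
    simp only [← zpow_add₀ hq0]; congr 1; push_cast; ring
  have p3 : q ^ ((k : ℤ) + 1) * q ^ (-((k : ℤ) + 1)) = 1 := by
    rw [← zpow_add₀ hq0, add_neg_cancel, zpow_zero]
  have hnk' := mul_inv_cancel₀ hnk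
  have hnr' := mul_inv_cancel₀ hnr
  rw [mul_comm (q ^ ((ℓ : ℤ) - 2 * ((r + 1 : ℕ) : ℤ))),
    mul_assoc _ _ (q ^ ((ℓ : ℤ) - 2 * ((r + 1 : ℕ) : ℤ))),
    mul_comm _ (q ^ ((ℓ : ℤ) - 2 * ((r + 1 : ℕ) : ℤ))), p2, p1]
  simp only [div_eq_mul_inv, mul_inv]
  generalize q ^ (-(((k + 1 : ℕ) : ℤ) * ((r : ℤ) - ℓ))) = Z
  generalize q ^ ((k : ℤ) + 1) = Qk at *
  generalize q ^ (-((k : ℤ) + 1)) = Qmk at *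
  generalize q ^ (-((r : ℤ) + 1)) = Qmr
  generalize qnum q ((k : ℤ) + 1) = nk at *
  generalize qnum q ((r : ℤ) + 1) = nr at *
  generalize ∏ j ∈ Finset.range r, qnum q ((ℓ : ℤ) - j) = Pi
  linear_combination (qfac q (r + k + 1) * (qfac q k)⁻¹ * (qfac q r)⁻¹ * Z * Pi *
    qnum q ((ℓ : ℤ) - r)) * (nk⁻¹ * Qk * Qmk * hnr' + nk⁻¹ * p3 + nr⁻¹ * Qmr * Qmk * hnk')

open Finset.HasAntidiagonal in
/-- The expansion of `Δ(E₀⁺)^n (v₀ ⊗ w)` in the vectors `v_r ⊗ x^k w`, `r + k = n`. -/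
lemma TX_pow_io (hq0 : q ≠ 0) (hq : ∀ n : ℕ, 0 < n → q ^ n ≠ 1) (n : ℕ) (w : W) :
    (TX q a ℓ x ^ n) (io ℓ 0 w) =
      ∑ p ∈ antidiagonal n, cX q a ℓ p.1 p.2 • io ℓ p.1 ((x ^ p.2) w) := by
  induction n with
  | zero => simp [cX, qfac_zero]
  | succ n ih =>
    rw [ad_sum (cX q a ℓ) (fun r k => q ^ (2 * (r : ℤ) - ℓ) * cX q a ℓ r k)
      (fun r k => (a * q * qnum q ((r : ℤ) + 1)) * cX q a ℓ r k) (fun r k => io ℓ r ((x ^ k) w)),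
      pow_succ', Module.End.mul_apply, ih, map_sum]
    · refine Finset.sum_congr rfl fun p _ => ?_
      rw [map_smul, TX_io, smul_add, smul_smul, smul_smul, pow_succ', Module.End.mul_apply,
        mul_comm (cX q a ℓ _ _), mul_comm (cX q a ℓ _ _)]
    · intro k
      have h1 : qfac q (0 + (k + 1)) / qfac q (k + 1) = 1 := by
        rw [zero_add, div_self (qfac_ne q hq0 hq _)]
      have h2 : qfac q (0 + k) / qfac q k = 1 := by
        rw [zero_add, div_self (qfac_ne q hq0 hq _)]
      simp only [cX, h1, h2, pow_zero, one_mul]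
      rw [← zpow_add₀ hq0]
      congr 1; push_cast; ring
    · intro r
      simp only [cX, add_zero, qfac_succ, Nat.cast_zero, zero_mul, zpow_zero, mul_one, pow_succ]
      ring
    · exact cX_rec hq0 hq

open Finset.HasAntidiagonal in
/-- The `v₀`-coordinate of `Δ(E₁⁺)^n m` in terms of the coordinates of `m`. -/
lemma cr_TE_pow (hq0 : q ≠ 0) (hq : ∀ n : ℕ, 0 < n → q ^ n ≠ 1) (n : ℕ)
    (m : (Fin (ℓ + 1) → ℂ) ⊗[ℂ] W) :
    cr ℓ 0 ((TE q ℓ e ^ n) m) =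
      ∑ p ∈ antidiagonal n, cE q ℓ p.1 p.2 • (e ^ p.2) (cr ℓ p.1 m) := by
  induction n generalizing m with
  | zero => simp [cE, qfac_zero]
  | succ n ih =>
    rw [ad_sum (cE q ℓ) (fun r k => q ^ ((ℓ : ℤ) - 2 * r) * cE q ℓ r k)
      (fun r k => qnum q ((ℓ : ℤ) - r) * cE q ℓ r k) (fun r k => (e ^ k) (cr ℓ r m)),
      pow_succ, Module.End.mul_apply, ih]
    · refine Finset.sum_congr rfl fun p _ => ?_
      rw [cr_TE, map_add, map_smul, map_smul, smul_add, smul_smul, smul_smul, pow_succ,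
        Module.End.mul_apply, mul_comm (cE q ℓ _ _), mul_comm (cE q ℓ _ _)]
    · intro k
      have h1 : qfac q (0 + (k + 1)) / (qfac q 0 * qfac q (k + 1)) = 1 := by
        rw [zero_add, qfac_zero, one_mul, div_self (qfac_ne q hq0 hq _)]
      have h2 : qfac q (0 + k) / (qfac q 0 * qfac q k) = 1 := by
        rw [zero_add, qfac_zero, one_mul, div_self (qfac_ne q hq0 hq _)]
      simp only [cE, h1, h2, one_mul, Finset.prod_range_zero]
      rw [← zpow_add₀ hq0]
      congr 1; push_cast; ring
    · intro r
      have h1 : qfac q (r + 1 + 0) / (qfac q (r + 1) * qfac q 0) = 1 := by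
        rw [add_zero, qfac_zero, mul_one, div_self (qfac_ne q hq0 hq _)]
      have h2 : qfac q (r + 0) / (qfac q r * qfac q 0) = 1 := by
        rw [add_zero, qfac_zero, mul_one, div_self (qfac_ne q hq0 hq _)]
      simp only [cE, h1, h2, one_mul, Finset.prod_range_succ, Nat.cast_zero, zero_mul, neg_zero,
        zpow_zero, mul_one]
      ring
    · exact cE_rec hq0 hq

/-- The Drinfeld polynomial `∏ (1 + a q^(ℓ-2i) X)`, `0 ≤ i < ℓ`, of `V(ℓ,a)`. -/
def PE (q a : ℂ) (ℓ : ℕ) : Polynomial ℂ :=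
  qprod q (1 : Polynomial ℂ) Polynomial.X (a * q ^ (ℓ : ℤ)) ℓ

/-- The term of index `(r, k)` in `Δ(E₁⁺)^n Δ(E₀⁺)^n (v₀ ⊗ w₀)` contributes the product of the `r`-th
coefficient of the Drinfeld polynomial of `V(ℓ,a)` and the `k`-th one of that of `W`. -/
lemma PE_coeff (hq0 : q ≠ 0) (hq : ∀ n : ℕ, 0 < n → q ^ n ≠ 1) (r k : ℕ) :
    cE q ℓ r k * cX q a ℓ r k * qfac q k ^ 2 = qfac q (r + k) ^ 2 * (PE q a ℓ).coeff r := by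
  have hc : (PE q a ℓ).coeff r = qb q (a * q ^ (ℓ : ℤ)) ℓ r := by
    rw [PE, qprod_eq q hq0 hq _ _ (Commute.one_left _), Polynomial.finsetSum_coeff]
    simp only [one_pow, one_mul, Polynomial.coeff_smul, Polynomial.coeff_X_pow, smul_eq_mul,
      mul_ite, mul_one, mul_zero]
    rw [Finset.sum_ite_eq]
    split_ifs with h
    · rfl
    · rw [qb, if_neg]
      intro h'
      exact h (Finset.mem_range.2 (by omega))
  have hk := qfac_ne q hq0 hq k
  have hr := qfac_ne q hq0 hq r
  rw [hc, cE, cX, qb]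
  split_ifs with h
  · have hlr := qfac_ne q hq0 hq (ℓ - r)
    have hprod : (∏ j ∈ Finset.range r, qnum q ((ℓ : ℤ) - j)) * qfac q (ℓ - r) = qfac q ℓ := by
      clear hc hr hlr
      induction r with
      | zero => simp
      | succ r ih =>
        rw [Finset.prod_range_succ, ← ih (by omega), show ℓ - r = (ℓ - (r + 1)) + 1 by omega,
          qfac_succ, mul_assoc, mul_comm (qnum q _)]
        congr 3
        push_cast [Nat.cast_sub h]; ring
    rw [← hprod]
    have p1 : q ^ (-((k : ℤ) * ((r : ℤ) - ℓ))) * q ^ ((k : ℤ) * ((r : ℤ) - ℓ)) = 1 := by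
      rw [← zpow_add₀ hq0, neg_add_cancel, zpow_zero]
    have p2 : (a * q ^ (ℓ : ℤ)) ^ r * q ^ (-((r : ℤ) * ((ℓ : ℤ) - 1))) = (a * q) ^ r := by
      rw [mul_pow, mul_pow, mul_assoc, ← zpow_natCast (q ^ (ℓ : ℤ)), ← zpow_mul, ← zpow_add₀ hq0,
        ← zpow_natCast q r]
      congr 2; ring
    rw [p2]
    generalize q ^ (-((k : ℤ) * ((r : ℤ) - ℓ))) = Z at *
    generalize q ^ ((k : ℤ) * ((r : ℤ) - ℓ)) = Z' at *
    field_simp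
    linear_combination (qfac q (r + k) ^ 2 * (∏ j ∈ Finset.range r, qnum q ((ℓ : ℤ) - j)) * (a * q) ^ r) * p1
  · rw [Finset.prod_eq_zero (i := ℓ) (Finset.mem_range.2 (by omega)) (by rw [sub_self, qnum_zero])]
    ring

/-- Drinfeld polynomials multiply under tensor products. -/
lemma hP_T (hq0 : q ≠ 0) (hq : ∀ n : ℕ, 0 < n → q ^ n ≠ 1) (h : IsUqpRep q x e f K0 K1) {d : ℕ}
    {w0 : W} {P : Polynomial ℂ} (hg : Gr q K0 d) (hw : IsWt q K0 (-(d : ℤ)) w0)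
    (ht : ∀ z, IsWt q K0 (-(d : ℤ)) z → ∃ c : ℂ, z = c • w0) (hP : HasP q x e w0 P) :
    HasP q (TX q a ℓ x) (TE q ℓ e) (io ℓ 0 w0) (PE q a ℓ * P) := by
  intro n
  have hT := rep_T (a := a) (ℓ := ℓ) hq0 hq h
  have hwt : IsWt q (TK0 q ℓ K0) (-((ℓ + d : ℕ) : ℤ)) ((TE q ℓ e ^ n) ((TX q a ℓ x ^ n) (io ℓ 0 w0))) := by
    convert ((wt_io (ℓ := ℓ) hq0 hw 0).up_pow hq0 hT.K0E0 n).down_pow hq0 hT.K0E1p n using 1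
    push_cast; ring
  obtain ⟨c, hc⟩ := top_T hq0 hq hg ht _ hwt
  have h1 : c • w0 = (qfac q n ^ 2 * (PE q a ℓ * P).coeff n) • w0 := by
    have h2 := congrArg (cr ℓ 0) hc
    rw [map_smul, cr_io, if_pos ⟨rfl, Nat.zero_le _⟩] at h2
    rw [← h2, cr_TE_pow hq0 hq, TX_pow_io hq0 hq, Polynomial.coeff_mul, Finset.mul_sum,
      Finset.sum_smul]
    refine Finset.sum_congr rfl fun p hp => ?_
    have hp' : p.1 + p.2 = n := Finset.HasAntidiagonal.mem_antidiagonal.1 hp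
    rw [map_sum, Finset.sum_eq_single p]
    · rw [map_smul, cr_io, ← mul_assoc, ← hp', ← PE_coeff hq0 hq]
      split_ifs with hl
      · rw [map_smul, hP, smul_smul, smul_smul]
        congr 1; ring
      · rw [smul_zero, map_zero, smul_zero, cE,
          Finset.prod_eq_zero (i := ℓ) (Finset.mem_range.2 (by omega)) (by rw [sub_self, qnum_zero])]
        simp
    · intro p' hp1 hne
      have hp2 : p'.1 + p'.2 = n := Finset.HasAntidiagonal.mem_antidiagonal.1 hp1
      rw [map_smul, cr_io, if_neg, smul_zero]
      rintro ⟨h, -⟩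
      exact hne (Prod.ext h.symm (by omega))
    · exact fun h => absurd hp h
  have h3 := congrArg (io ℓ 0) h1
  rw [map_smul, map_smul] at h3
  rw [hc, h3]

/-- If an invariant subspace `N` contains `v₀ ⊗ w₀`, it is everything, provided `a q^(ℓ+2)` is not in
`S`. Suitable combinations of `Δ(E₀⁺)` and `Δ(E₁⁻)` send `v₀ ⊗ w₀` to `v₀ ⊗ y` with
`y = ∏ (x + u q^(-2i) f) w₀` of highest `K₀`-weight, and `y ≠ 0` by the assumption on `S`. As `f` kills
`y`, all `v_j ⊗ y` lie in `N`, and `{w | v_j ⊗ w ∈ N for all j}` is a nonzero invariant subspace of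
`W`. -/
lemma cyclic_T (hq0 : q ≠ 0) (hq : ∀ n : ℕ, 0 < n → q ^ n ≠ 1) {d : ℕ} {w0 : W} {S : Multiset ℂ}
    (h : Good q x e f K0 K1 d w0 (PR S)) (hS : S.card = d) (ha : a * q ^ ((ℓ : ℤ) + 2) ∉ S)
    (N : Submodule ℂ ((Fin (ℓ + 1) → ℂ) ⊗[ℂ] W)) (hX : ∀ v ∈ N, TX q a ℓ x v ∈ N)
    (hE : ∀ v ∈ N, TE q ℓ e v ∈ N) (hF : ∀ v ∈ N, TF q ℓ f K0 v ∈ N)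
    (hK0 : ∀ v ∈ N, TK0 q ℓ K0 v ∈ N) (hK1 : ∀ v ∈ N, TK1 q ℓ K1 v ∈ N) (hN : io ℓ 0 w0 ∈ N) :
    N = ⊤ := by
  set u := -(a * q ^ (1 + (d : ℤ) + ℓ)) with hu
  have step : ∀ i : ℕ, IsWt q K0 (2 * (i : ℤ) - d) (qprod q x f u i w0) ∧
      io ℓ 0 (qprod q x f u i w0) ∈ N := by
    intro i
    induction i with
    | zero => exact ⟨by simpa [qprod] using h.wt, by simpa [qprod] using hN⟩
    | succ i ih =>
      obtain ⟨hz, hzN⟩ := ih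
      set z := qprod q x f u i w0 with hzdef
      have hz' : qprod q x f u (i + 1) w0 = x z + (u * q ^ (-(2 * (i : ℤ)))) • f z := by
        simp only [qprod, Module.End.mul_apply, LinearMap.add_apply, LinearMap.smul_apply, ← hzdef]
      rw [hz']
      constructor
      · convert (hz.up hq0 h.rep.K0E0).add ((hz.up hq0 h.rep.K0E1m).smul (u * q ^ (-(2 * (i : ℤ)))))
          using 1
        push_cast; ring
      · have h1 := N.sub_mem (hX _ hzN) (N.smul_mem (a * q * q ^ (-(2 * (i : ℤ) - d))) (hF _ hzN))
        have h2 : TX q a ℓ x (io ℓ 0 z) - (a * q * q ^ (-(2 * (i : ℤ) - d))) • TF q ℓ f K0 (io ℓ 0 z) =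
            q ^ (-(ℓ : ℤ)) • io ℓ 0 (x z + (u * q ^ (-(2 * (i : ℤ)))) • f z) := by
          have e1 : q ^ (-(2 * (i : ℤ) - d)) * q ^ (2 * (i : ℤ) - d) = 1 := by
            rw [← zpow_add₀ hq0, neg_add_cancel, zpow_zero]
          have e2 : q ^ (-(ℓ : ℤ)) * (u * q ^ (-(2 * (i : ℤ)))) = -(a * q * q ^ (-(2 * (i : ℤ) - d))) := by
            have : q ^ (-(ℓ : ℤ)) * q ^ (1 + (d : ℤ) + ℓ) * q ^ (-(2 * (i : ℤ))) =
                q ^ (1 : ℤ) * q ^ (-(2 * (i : ℤ) - d)) := by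
              simp only [← zpow_add₀ hq0]; congr 1; ring
            rw [zpow_one] at this
            rw [hu]
            linear_combination -a * this
          rw [TX_io, TF_io, hz, map_smul, map_add, map_smul, smul_add, smul_add, smul_smul, smul_smul,
            smul_smul, e2]
          have e3 : a * q * q ^ (-(2 * (i : ℤ) - d)) * qnum q (((0 : ℕ) : ℤ) + 1) * q ^ (2 * (i : ℤ) - d) =
              a * q * qnum q (((0 : ℕ) : ℤ) + 1) := by
            linear_combination (a * q * qnum q (((0 : ℕ) : ℤ) + 1)) * e1
          simp only [e3]
          simp only [Nat.cast_zero, mul_zero, zero_sub, zero_add, mul_one, qnum_one q hq0 hq]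
          module
        rw [h2] at h1
        exact (N.smul_mem_iff (zpow_ne_zero _ hq0)).1 h1
  obtain ⟨hy, hyN⟩ := step d
  set y := qprod q x f u d w0 with hydef
  have hy0 : y ≠ 0 := by
    intro h0
    have h1 := e_pow_qprod hq0 hq h.rep h.gr h.wt hS h.hP u (-(a * q ^ ((ℓ : ℤ) + 2))) (by
      rw [hu, neg_mul, mul_assoc, ← zpow_add₀ hq0]; congr 3; ring)
    rw [← hydef, h0, map_zero] at h1
    refine smul_ne_zero (mul_ne_zero (pow_ne_zero 2 (qfac_ne q hq0 hq d)) ?_) h.ne h1.symm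
    refine Multiset.prod_ne_zero fun h2 => ?_
    obtain ⟨b, hb, hb'⟩ := Multiset.mem_map.1 h2
    exact ha (by rwa [show a * q ^ ((ℓ : ℤ) + 2) = b by linear_combination -hb'])
  have hfy : f y = 0 := h.gr.big hq0 hq _ (by omega) _ (hy.up hq0 h.rep.K0E1m)
  have hall : ∀ j, io ℓ j y ∈ N := by
    intro j
    induction j with
    | zero => exact hyN
    | succ j ih =>
      have h1 := hF _ ih
      rw [TF_io, hfy, map_zero, zero_add, hy, map_smul, smul_smul] at h1
      exact (N.smul_mem_iff (mul_ne_zero (qnum_ne q hq0 hq (by omega)) (zpow_ne_zero _ hq0))).1 h1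
  let M : Submodule ℂ W := ⨅ j, N.comap (io ℓ j)
  have hM : ∀ w, w ∈ M ↔ ∀ j, io ℓ j w ∈ N := by intro w; simp [M, Submodule.mem_iInf]
  have mK0 : ∀ w ∈ M, K0 w ∈ M := by
    intro w hw
    rw [hM] at hw ⊢
    intro j
    have h1 := hK0 _ (hw j)
    rw [TK0_io] at h1
    exact (N.smul_mem_iff (zpow_ne_zero _ hq0)).1 h1
  have hMt : M = ⊤ := by
    refine (h.irr M ?_ ?_ ?_ mK0 ?_).resolve_left ?_
    · intro w hw
      rw [hM] at hw ⊢
      intro j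
      have h1 := hX _ (hw j)
      rw [TX_io, N.add_mem_iff_left (N.smul_mem _ (hw _))] at h1
      exact (N.smul_mem_iff (zpow_ne_zero _ hq0)).1 h1
    · intro w hw
      rw [hM] at hw ⊢
      intro j
      have h1 := hE _ (hw j)
      rcases j with _ | j
      · rw [TE_io_zero] at h1
        exact (N.smul_mem_iff (zpow_ne_zero _ hq0)).1 h1
      · rw [TE_io, N.add_mem_iff_left (N.smul_mem _ (hw _))] at h1
        exact (N.smul_mem_iff (zpow_ne_zero _ hq0)).1 h1
    · intro w hw
      have hw' := mK0 w hw
      rw [hM] at hw hw' ⊢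
      intro j
      have h1 := hF _ (hw j)
      rwa [TF_io, N.add_mem_iff_left (N.smul_mem _ (hw' _))] at h1
    · intro w hw
      rw [hM] at hw ⊢
      intro j
      have h1 := hK1 _ (hw j)
      rw [TK1_io] at h1
      exact (N.smul_mem_iff (zpow_ne_zero _ hq0)).1 h1
    · intro h0
      have : y ∈ M := (hM y).2 hall
      rw [h0] at this
      exact hy0 ((Submodule.mem_bot ℂ).1 this)
  rw [eq_top_iff]
  intro m _
  rw [← sum_io_cr ℓ m]
  refine N.sum_mem fun j _ => ?_
  exact (hM _).1 (hMt ▸ Submodule.mem_top) j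

lemma cE_top_ne (hq0 : q ≠ 0) (hq : ∀ n : ℕ, 0 < n → q ^ n ≠ 1) (k : ℕ) : cE q ℓ ℓ k ≠ 0 := by
  unfold cE
  refine mul_ne_zero (mul_ne_zero (div_ne_zero (qfac_ne q hq0 hq _)
    (mul_ne_zero (qfac_ne q hq0 hq _) (qfac_ne q hq0 hq _))) ?_) (zpow_ne_zero _ hq0)
  refine Finset.prod_ne_zero_iff.2 fun j hj => qnum_ne q hq0 hq ?_
  have := Finset.mem_range.1 hj
  omega

/-- A nonzero invariant subspace `N` contains `v₀ ⊗ w₀`, provided `a q^(-ℓ)` is not in `S`. The argument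
is dual to that for `cyclic_T`: otherwise `ξ = e^d ∏ (x + u q^(-2i) f)` kills the coordinates of all
vectors of `N`. These span a nonzero invariant subspace, hence all of `W`, whereas `ξ w₀ ≠ 0` by the
assumption on `S`. -/
lemma cocyclic_T (hq0 : q ≠ 0) (hq : ∀ n : ℕ, 0 < n → q ^ n ≠ 1) {d : ℕ} {w0 : W} {S : Multiset ℂ}
    (h : Good q x e f K0 K1 d w0 (PR S)) (hS : S.card = d) (ha : a * q ^ (-(ℓ : ℤ)) ∉ S)
    (N : Submodule ℂ ((Fin (ℓ + 1) → ℂ) ⊗[ℂ] W)) (hX : ∀ v ∈ N, TX q a ℓ x v ∈ N)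
    (hE : ∀ v ∈ N, TE q ℓ e v ∈ N) (hF : ∀ v ∈ N, TF q ℓ f K0 v ∈ N)
    (hK0 : ∀ v ∈ N, TK0 q ℓ K0 v ∈ N) (hK1 : ∀ v ∈ N, TK1 q ℓ K1 v ∈ N) (hN : N ≠ ⊥) :
    io ℓ 0 w0 ∈ N := by
  by_contra hcon
  have hT := rep_T (a := a) (ℓ := ℓ) hq0 hq h.rep
  have hgT := gr_T (ℓ := ℓ) hq0 h.gr
  -- `Δ(E₁⁺)^(ℓ+d)` kills `N`, since its image lies in the line through `v₀ ⊗ w₀`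
  have h1 : ∀ n ∈ N, (TE q ℓ e ^ (ℓ + d)) n = 0 := by
    intro n hn
    obtain ⟨c, hc⟩ := top_T hq0 hq h.gr h.top _ (hgT.e_pow_wt hq0 hq hT n)
    have hmem : (TE q ℓ e ^ (ℓ + d)) n ∈ N := by
      generalize ℓ + d = k
      induction k with
      | zero => simpa using hn
      | succ k ih => rw [pow_succ', Module.End.mul_apply]; exact hE _ ih
    by_cases hc0 : c = 0
    · rw [hc, hc0, zero_smul]
    · rw [hc] at hmem
      exact absurd ((N.smul_mem_iff hc0).1 hmem) hcon
  have h2 : ∀ n ∈ N, (e ^ d) (cr ℓ ℓ n) = 0 := by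
    intro n hn
    have h3 := congrArg (cr ℓ 0) (h1 n hn)
    rw [cr_TE_pow hq0 hq, map_zero, Finset.sum_eq_single (ℓ, d)] at h3
    · exact (smul_eq_zero.1 h3).resolve_left (cE_top_ne hq0 hq d)
    · rintro ⟨r, k⟩ hp hne
      have hp' : r + k = ℓ + d := Finset.HasAntidiagonal.mem_antidiagonal.1 hp
      rcases lt_trichotomy r ℓ with hr | rfl | hr
      · simp only
        rw [h.gr.e_pow_zero hq0 hq h.rep (by omega), smul_zero]
      · obtain rfl : k = d := by omega
        exact absurd rfl hne
      · simp only
        rw [cr_of_gt _ hr, map_zero, smul_zero]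
    · intro hp
      exact absurd (Finset.HasAntidiagonal.mem_antidiagonal.2 (show (ℓ, d).1 + (ℓ, d).2 = ℓ + d from rfl)) hp
  set u := -(a * q ^ ((d : ℤ) - 1 - ℓ)) with hu
  have step : ∀ k : ℕ,
      (∀ z, (e ^ d) (qprod q x f (u * q ^ (-(2 * ((d : ℤ) - k)))) k (K0 z)) =
        q ^ ((d : ℤ) - 2 * k) • (e ^ d) (qprod q x f (u * q ^ (-(2 * ((d : ℤ) - k)))) k z)) ∧
      ∀ n ∈ N, (e ^ d) (qprod q x f (u * q ^ (-(2 * ((d : ℤ) - k)))) k (cr ℓ ℓ n)) = 0 := by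
    intro k
    induction k with
    | zero =>
      refine ⟨fun z => ?_, fun n hn => ?_⟩
      · simpa [qprod] using h.gr.e_pow_K0 hq0 hq h.rep z
      · simpa [qprod] using h2 n hn
    | succ k ih =>
      obtain ⟨ih1, ih2⟩ := ih
      have hv : u * q ^ (-(2 * ((d : ℤ) - (k + 1 : ℕ)))) * q ^ (-2 : ℤ) =
          u * q ^ (-(2 * ((d : ℤ) - k))) := by
        rw [mul_assoc, ← zpow_add₀ hq0]; congr 2; push_cast; ring
      rw [qprod_right hq0, hv]
      set v := u * q ^ (-(2 * ((d : ℤ) - (k + 1 : ℕ)))) with hvdef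
      set ξ : W →ₗ[ℂ] W := (e ^ d) * qprod q x f (u * q ^ (-(2 * ((d : ℤ) - k)))) k with hξ
      replace ih1 : ∀ z, ξ (K0 z) = q ^ ((d : ℤ) - 2 * k) • ξ z := ih1
      replace ih2 : ∀ n ∈ N, ξ (cr ℓ ℓ n) = 0 := ih2
      have key : ∀ z, (e ^ d) ((qprod q x f (u * q ^ (-(2 * ((d : ℤ) - k)))) k * (x + v • f)) z) =
          ξ (x z + v • f z) := fun z => rfl
      refine ⟨fun z => ?_, fun n hn => ?_⟩
      · rw [key, key]
        have e1 : x (K0 z) = (q ^ 2)⁻¹ • K0 (x z) := by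
          have : K0 (x z) = q ^ 2 • x (K0 z) := DFunLike.congr_fun h.rep.K0E0 z
          rw [this, smul_smul, inv_mul_cancel₀ (pow_ne_zero 2 hq0), one_smul]
        have e2 : f (K0 z) = (q ^ 2)⁻¹ • K0 (f z) := by
          have : K0 (f z) = q ^ 2 • f (K0 z) := DFunLike.congr_fun h.rep.K0E1m z
          rw [this, smul_smul, inv_mul_cancel₀ (pow_ne_zero 2 hq0), one_smul]
        rw [e1, e2, smul_comm v, ← smul_add, ← map_smul K0 v, ← map_add, map_smul, ih1, smul_smul]
        congr 1
        rw [← zpow_natCast q 2, ← zpow_neg, ← zpow_add₀ hq0]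
        congr 1; push_cast; ring
      · rw [key]
        -- the pairing with `Δ(E₀⁺) - t Δ(E₁⁻)` involves the coordinate along `v_ℓ` only
        have h3 := ih2 _ (N.sub_mem (hX _ hn) (N.smul_mem (a * q * q ^ (-((d : ℤ) - 2 * k))) (hF _ hn)))
        have e1 : q ^ (-((d : ℤ) - 2 * k)) * q ^ ((d : ℤ) - 2 * k) = 1 := by
          rw [← zpow_add₀ hq0, neg_add_cancel, zpow_zero]
        have e2 : v * q ^ (ℓ : ℤ) = -(a * q * q ^ (-((d : ℤ) - 2 * k))) := by
          have : q ^ ((d : ℤ) - 1 - ℓ) * q ^ (-(2 * ((d : ℤ) - (k + 1 : ℕ)))) * q ^ (ℓ : ℤ) =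
              q ^ (1 : ℤ) * q ^ (-((d : ℤ) - 2 * k)) := by
            simp only [← zpow_add₀ hq0]; congr 1; push_cast; ring
          rw [zpow_one] at this
          rw [hvdef, hu]
          linear_combination -a * this
        have h4 : ξ (cr ℓ ℓ (TX q a ℓ x n - (a * q * q ^ (-((d : ℤ) - 2 * k))) • TF q ℓ f K0 n)) =
            q ^ (ℓ : ℤ) • ξ (x (cr ℓ ℓ n) + v • f (cr ℓ ℓ n)) := by
          rw [map_sub, map_smul, map_add, map_smul, smul_add, smul_smul, mul_comm _ v, e2]
          rcases Nat.eq_zero_or_pos ℓ with hl | hl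
          · subst hl
            rw [cr_TX_zero, cr_TF_zero, map_sub, map_smul, map_smul]
            simp only [Nat.cast_zero, neg_zero, zpow_zero]
            module
          · obtain ⟨j, rfl⟩ : ∃ j, ℓ = j + 1 := ⟨ℓ - 1, by omega⟩
            rw [cr_TX _ _ _ _ j le_rfl, cr_TF _ _ _ _ j le_rfl, map_sub, map_add, map_smul, map_smul,
              map_smul, map_add, map_smul, ih1, smul_add, smul_smul, smul_smul]
            have e3 : a * q * q ^ (-((d : ℤ) - 2 * k)) * qnum q ((j : ℤ) + 1) * q ^ ((d : ℤ) - 2 * k) =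
                a * q * qnum q ((j : ℤ) + 1) := by
              linear_combination (a * q * qnum q ((j : ℤ) + 1)) * e1
            simp only [e3, show 2 * ((j + 1 : ℕ) : ℤ) - (j + 1 : ℕ) = (j + 1 : ℕ) by ring]
            module
        rw [h4] at h3
        exact (smul_eq_zero.1 h3).resolve_left (zpow_ne_zero _ hq0)
  obtain ⟨s1, s2⟩ := step d
  have hud : u * q ^ (-(2 * ((d : ℤ) - d))) = u := by simp
  rw [hud] at s1 s2
  set ξ : W →ₗ[ℂ] W := (e ^ d) * qprod q x f u d with hξ
  replace s1 : ∀ z, ξ (K0 z) = q ^ ((d : ℤ) - 2 * d) • ξ z := s1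
  replace s2 : ∀ n ∈ N, ξ (cr ℓ ℓ n) = 0 := s2
  have hξ0 : ξ w0 ≠ 0 := by
    have h1 := e_pow_qprod hq0 hq h.rep h.gr h.wt hS h.hP u (-(a * q ^ (-(ℓ : ℤ)))) (by
      rw [hu, neg_mul, mul_assoc, ← zpow_add₀ hq0]; congr 3; ring)
    rw [hξ, Module.End.mul_apply, h1]
    refine smul_ne_zero (mul_ne_zero (pow_ne_zero 2 (qfac_ne q hq0 hq d)) ?_) h.ne
    refine Multiset.prod_ne_zero fun h2 => ?_
    obtain ⟨b, hb, hb'⟩ := Multiset.mem_map.1 h2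
    exact ha (by rwa [show a * q ^ (-(ℓ : ℤ)) = b by linear_combination -hb'])
  have hξf : ∀ z, ξ (f z) = 0 := by
    intro z
    refine h.gr.induction (p := fun z => ξ (f z) = 0) z (by simp) (fun i hi z hz => ?_)
      (fun y z hy hz => by simp only [map_add, hy, hz, add_zero])
    have h3 := s1 (f z)
    rw [hz.up hq0 h.rep.K0E1m, map_smul, ← sub_eq_zero, ← sub_smul] at h3
    refine (smul_eq_zero.1 h3).resolve_left ?_
    intro h4
    have := zpow_inj' q hq0 hq (sub_eq_zero.1 h4)
    omega
  have hall : ∀ k, k ≤ ℓ → ∀ n ∈ N, ξ (cr ℓ (ℓ - k) n) = 0 := by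
    intro k
    induction k with
    | zero => exact fun _ => s2
    | succ k ih =>
      intro hk n hn
      have h3 := ih (by omega) _ (hF _ hn)
      rw [show ℓ - k = (ℓ - (k + 1)) + 1 by omega, cr_TF _ _ _ _ _ (by omega), map_add, hξf, zero_add,
        map_smul, s1, smul_smul] at h3
      exact (smul_eq_zero.1 h3).resolve_left
        (mul_ne_zero (qnum_ne q hq0 hq (by omega)) (zpow_ne_zero _ hq0))
  have hall' : ∀ j, ∀ n ∈ N, ξ (cr ℓ j n) = 0 := by
    intro j n hn
    rcases le_or_gt j ℓ with hj | hj
    · have := hall (ℓ - j) (by omega) n hn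
      rwa [show ℓ - (ℓ - j) = j by omega] at this
    · rw [cr_of_gt _ hj, map_zero]
  let M : Submodule ℂ W := ⨆ j, N.map (cr ℓ j)
  have hMc : ∀ j, ∀ n ∈ N, cr ℓ j n ∈ M := fun j n hn =>
    Submodule.mem_iSup_of_mem j (Submodule.mem_map_of_mem hn)
  have hMl : ∀ (A : Module.End ℂ W), (∀ j, ∀ n ∈ N, A (cr ℓ j n) ∈ M) → ∀ w ∈ M, A w ∈ M := by
    intro A hA w hw
    have : M ≤ M.comap A := by
      refine iSup_le fun j => ?_
      rintro _ ⟨n, hn, rfl⟩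
      exact hA j n hn
    exact this hw
  have mK0 : ∀ j, ∀ n ∈ N, K0 (cr ℓ j n) ∈ M := by
    intro j n hn
    have h3 := hMc j _ (hK0 _ hn)
    rw [cr_TK0] at h3
    exact (M.smul_mem_iff (zpow_ne_zero _ hq0)).1 h3
  have hM : M = ⊥ ∨ M = ⊤ := by
    refine h.irr M (hMl _ ?_) (hMl _ ?_) (hMl _ ?_) (hMl _ mK0) (hMl _ ?_)
    · intro j n hn
      have h3 := hMc j _ (hX _ hn)
      rcases j with _ | j
      · rw [cr_TX_zero] at h3
        exact (M.smul_mem_iff (zpow_ne_zero _ hq0)).1 h3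
      · rcases le_or_gt (j + 1) ℓ with hj | hj
        · rw [cr_TX _ _ _ _ _ hj, M.add_mem_iff_left (M.smul_mem _ (hMc j n hn))] at h3
          exact (M.smul_mem_iff (zpow_ne_zero _ hq0)).1 h3
        · rw [cr_of_gt _ hj, map_zero]; exact M.zero_mem
    · intro j n hn
      have h3 := hMc j _ (hE _ hn)
      rw [cr_TE, M.add_mem_iff_left (M.smul_mem _ (hMc _ n hn))] at h3
      exact (M.smul_mem_iff (zpow_ne_zero _ hq0)).1 h3
    · intro j n hn
      have h3 := hMc j _ (hF _ hn)
      rcases j with _ | j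
      · rwa [cr_TF_zero] at h3
      · rcases le_or_gt (j + 1) ℓ with hj | hj
        · rwa [cr_TF _ _ _ _ _ hj, M.add_mem_iff_left (M.smul_mem _ (mK0 j n hn))] at h3
        · rw [cr_of_gt _ hj, map_zero]; exact M.zero_mem
    · intro j n hn
      have h3 := hMc j _ (hK1 _ hn)
      rw [cr_TK1] at h3
      exact (M.smul_mem_iff (zpow_ne_zero _ hq0)).1 h3
  rcases hM with hM | hM
  · refine hN ((Submodule.eq_bot_iff _).2 fun n hn => ext_cr ℓ fun j => ?_)
    have := hMc j n hn
    rw [hM] at this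
    exact (Submodule.mem_bot ℂ).1 this
  · have : M ≤ LinearMap.ker ξ := by
      refine iSup_le fun j => ?_
      rintro _ ⟨n, hn, rfl⟩
      exact hall' j n hn
    rw [hM] at this
    exact hξ0 (this Submodule.mem_top)

/-- The tensor product `V(ℓ,a) ⊗ W` is irreducible when the Drinfeld polynomial of `W` is in
general position with respect to `(ℓ,a)`; then it is again of the same kind. -/
theorem good_T (hq0 : q ≠ 0) (hq : ∀ n : ℕ, 0 < n → q ^ n ≠ 1) {d : ℕ} {w0 : W} {S : Multiset ℂ}
    (h : Good q x e f K0 K1 d w0 (PR S)) (hS : S.card = d) (ha1 : a * q ^ ((ℓ : ℤ) + 2) ∉ S)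
    (ha2 : a * q ^ (-(ℓ : ℤ)) ∉ S) :
    Good q (TX q a ℓ x) (TE q ℓ e) (TF q ℓ f K0) (TK0 q ℓ K0) (TK1 q ℓ K1) (ℓ + d) (io ℓ 0 w0)
      (PE q a ℓ * PR S) where
  rep := rep_T hq0 hq h.rep
  irr N hX hE hF hK0 hK1 := by
    by_cases hN : N = ⊥
    · exact Or.inl hN
    · exact Or.inr (cyclic_T hq0 hq h hS ha1 N hX hE hF hK0 hK1
        (cocyclic_T hq0 hq h hS ha2 N hX hE hF hK0 hK1 hN))
  gr := gr_T hq0 h.gr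
  wt := by
    convert wt_io (ℓ := ℓ) hq0 h.wt 0 using 1
    push_cast; ring
  ne h0 := by
    have h1 := congrArg (cr ℓ 0) h0
    rw [cr_io, if_pos ⟨rfl, Nat.zero_le _⟩, map_zero] at h1
    exact h.ne h1
  top := top_T hq0 hq h.gr h.top
  hP := hP_T hq0 hq h.rep h.gr h.wt h.top h.hP

end

/-! ### Iterated tensor products -/

section transport
variable {q : ℂ} {W : Type*} [AddCommGroup W] [Module ℂ W] {W' : Type*} [AddCommGroup W'] [Module ℂ W']
  {x e f K0 K1 : Module.End ℂ W} {x' e' f' K0' K1' : Module.End ℂ W'}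

lemma pow_intertwine (φ : W ≃ₗ[ℂ] W') (hx : ∀ z, φ (x z) = x' (φ z)) (i : ℕ) (z : W) :
    φ ((x ^ i) z) = (x' ^ i) (φ z) := by
  induction i generalizing z with
  | zero => simp
  | succ i ih => rw [pow_succ, pow_succ, Module.End.mul_apply, Module.End.mul_apply, ih, hx]

lemma rep_transport (φ : W ≃ₗ[ℂ] W')
    (hφ : IntertwinesAll φ.toLinearMap x e f K0 K1 x' e' f' K0' K1') (h : IsUqpRep q x e f K0 K1) :
    IsUqpRep q x' e' f' K0' K1' := by
  obtain ⟨hx, he, hf, hK0, hK1⟩ := hφ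
  have aux : ∀ (A : Module.End ℂ W) (A' : Module.End ℂ W'), φ.toLinearMap ∘ₗ A = A' ∘ₗ φ.toLinearMap →
      A' = φ.conjAlgEquiv ℂ A := by
    intro A A' hA
    rw [LinearEquiv.conjAlgEquiv_apply, ← LinearMap.comp_assoc, hA, LinearMap.comp_assoc]
    ext z; simp
  rw [aux _ _ hx, aux _ _ he, aux _ _ hf, aux _ _ hK0, aux _ _ hK1]
  set α := φ.conjAlgEquiv ℂ
  constructor
  · simpa only [map_mul, map_one] using congrArg α h.K0K1
  · simpa only [map_mul, map_one] using congrArg α h.K1K0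
  · simpa only [map_mul, map_smul] using congrArg α h.K0E0
  · simpa only [map_mul, map_smul] using congrArg α h.K1E1p
  · simpa only [map_mul, map_smul] using congrArg α h.K1E1m
  · simpa only [map_mul, map_smul] using congrArg α h.K1E0
  · simpa only [map_mul, map_smul] using congrArg α h.K0E1p
  · simpa only [map_mul, map_smul] using congrArg α h.K0E1m
  · simpa only [map_mul, map_smul, map_sub] using congrArg α h.e1comm
  · simpa only [map_mul] using congrArg α h.e0e1m
  · simpa only [brk, brkq, map_mul, map_smul, map_sub, map_zero] using congrArg α h.serre01
  · simpa only [brk, brkq, map_mul, map_smul, map_sub, map_zero] using congrArg α h.serre10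

lemma Good.transport (φ : W ≃ₗ[ℂ] W')
    (hφ : IntertwinesAll φ.toLinearMap x e f K0 K1 x' e' f' K0' K1') {d : ℕ} {w0 : W}
    {P : Polynomial ℂ} (h : Good q x e f K0 K1 d w0 P) : Good q x' e' f' K0' K1' d (φ w0) P := by
  have hrep := rep_transport φ hφ h.rep
  obtain ⟨hx, he, hf, hK0, hK1⟩ := hφ
  replace hx : ∀ z, φ (x z) = x' (φ z) := fun z => DFunLike.congr_fun hx z
  replace he : ∀ z, φ (e z) = e' (φ z) := fun z => DFunLike.congr_fun he z
  replace hf : ∀ z, φ (f z) = f' (φ z) := fun z => DFunLike.congr_fun hf z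
  replace hK0 : ∀ z, φ (K0 z) = K0' (φ z) := fun z => DFunLike.congr_fun hK0 z
  replace hK1 : ∀ z, φ (K1 z) = K1' (φ z) := fun z => DFunLike.congr_fun hK1 z
  refine ⟨hrep, ?_, ?_, ?_, ?_, ?_, ?_⟩
  · intro N h1 h2 h3 h4 h5
    rcases h.irr (N.comap φ.toLinearMap)
      (fun v hv => by have := h1 _ hv; rwa [LinearEquiv.coe_coe, ← hx] at this)
      (fun v hv => by have := h2 _ hv; rwa [LinearEquiv.coe_coe, ← he] at this)
      (fun v hv => by have := h3 _ hv; rwa [LinearEquiv.coe_coe, ← hf] at this)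
      (fun v hv => by have := h4 _ hv; rwa [LinearEquiv.coe_coe, ← hK0] at this)
      (fun v hv => by have := h5 _ hv; rwa [LinearEquiv.coe_coe, ← hK1] at this) with hN | hN
    · left
      refine (Submodule.eq_bot_iff _).2 fun y hy => ?_
      have : φ.symm y ∈ N.comap φ.toLinearMap := by simpa using hy
      rw [hN, Submodule.mem_bot] at this
      simpa using this
    · right
      refine eq_top_iff.2 fun y _ => ?_
      have : φ.symm y ∈ N.comap φ.toLinearMap := by rw [hN]; trivial
      simpa using this
  · unfold Gr
    refine eq_top_iff.2 fun y _ => ?_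
    rw [← φ.apply_symm_apply y]
    refine h.gr.induction (p := fun z => φ z ∈ _) (φ.symm y) (by simp only [map_zero]; exact zero_mem _)
      (fun i hi z hz => ?_) (fun y z hy hz => by simp only [map_add]; exact add_mem hy hz)
    refine Submodule.mem_iSup_of_mem ⟨i, by omega⟩ (Module.End.mem_eigenspace_iff.2 ?_)
    rw [← hK0, hz, map_smul]
  · change K0' (φ w0) = _
    rw [← hK0, h.wt, map_smul]
  · exact fun h0 => h.ne (φ.map_eq_zero_iff.1 h0)
  · intro z hz
    obtain ⟨c, hc⟩ := h.top (φ.symm z) (by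
      change K0 (φ.symm z) = _
      apply φ.injective
      rw [hK0, map_smul, φ.apply_symm_apply, hz])
    exact ⟨c, by rw [← map_smul, ← hc, φ.apply_symm_apply]⟩
  · intro i
    rw [← pow_intertwine φ hx, ← pow_intertwine φ he, h.hP, map_smul]

end transport

section tps

variable {N : ℕ} (ns : Fin (N + 1) → ℕ)

/-- The map `m₀ ⊗ m₁ ⊗ ⋯ ↦ m₀ ⊗ (m₁ ⊗ ⋯)`. -/
def splitFwd : TPS ns →ₗ[ℂ] (Fin (ns 0 + 1) → ℂ) ⊗[ℂ] TPS (fun i => ns (Fin.succ i)) :=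
  PiTensorProduct.lift <| LinearMap.uncurryLeft <|
    { toFun := fun v => (TensorProduct.mk ℂ _ _ v).compMultilinearMap
        (PiTensorProduct.tprod ℂ (s := fun i : Fin N => Fin (ns i.succ + 1) → ℂ))
      map_add' := fun v w => by ext m; simp
      map_smul' := fun c v => by ext m; simp [TensorProduct.smul_tmul'] }

lemma splitFwd_tprod (m : ∀ i, Fin (ns i + 1) → ℂ) : splitFwd ns (PiTensorProduct.tprod ℂ m) =
    m 0 ⊗ₜ PiTensorProduct.tprod ℂ (fun i : Fin N => m i.succ) := by
  rw [splitFwd, PiTensorProduct.lift.tprod]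
  rfl

/-- The map `v ⊗ (m₁ ⊗ m₂ ⊗ ⋯) ↦ v ⊗ m₁ ⊗ m₂ ⊗ ⋯`. -/
def splitBwd : (Fin (ns 0 + 1) → ℂ) ⊗[ℂ] TPS (fun i => ns (Fin.succ i)) →ₗ[ℂ] TPS ns :=
  TensorProduct.lift (PiTensorProduct.lift.toLinearMap ∘ₗ
    { toFun := (PiTensorProduct.tprod ℂ (s := fun i => Fin (ns i + 1) → ℂ)).curryLeft
      map_add' := map_add _
      map_smul' := map_smul _ })

lemma splitBwd_tmul (v : Fin (ns 0 + 1) → ℂ) (m : ∀ i : Fin N, Fin (ns i.succ + 1) → ℂ) :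
    splitBwd ns (v ⊗ₜ PiTensorProduct.tprod ℂ m) =
      PiTensorProduct.tprod ℂ (Fin.cons v m : ∀ i, Fin (ns i + 1) → ℂ) := by
  rw [splitBwd, TensorProduct.lift.tmul, LinearMap.comp_apply]
  erw [PiTensorProduct.lift.tprod]
  rfl

/-- Splitting off the first factor of an iterated tensor product. -/
def split : TPS ns ≃ₗ[ℂ] (Fin (ns 0 + 1) → ℂ) ⊗[ℂ] TPS (fun i => ns (Fin.succ i)) :=
  LinearEquiv.ofLinearMap (splitFwd ns) (splitBwd ns)
    (by
      refine TensorProduct.ext' fun v t => ?_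
      refine LinearMap.congr_fun (f := ((splitFwd ns) ∘ₗ splitBwd ns) ∘ₗ TensorProduct.mk ℂ _ _ v)
        (g := TensorProduct.mk ℂ _ _ v) ?_ t
      refine PiTensorProduct.ext (MultilinearMap.ext fun m => ?_)
      simp only [LinearMap.compMultilinearMap_apply, LinearMap.comp_apply, TensorProduct.mk_apply,
        splitBwd_tmul, splitFwd_tprod]
      rfl)
    (by
      refine PiTensorProduct.ext (MultilinearMap.ext fun m => ?_)
      simp only [LinearMap.compMultilinearMap_apply, LinearMap.comp_apply, LinearMap.id_apply,
        splitFwd_tprod, splitBwd_tmul]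
      congr 1
      exact Fin.cons_self_tail m)

lemma split_tprod (m : ∀ i, Fin (ns i + 1) → ℂ) : split ns (PiTensorProduct.tprod ℂ m) =
    m 0 ⊗ₜ PiTensorProduct.tprod ℂ (fun i : Fin N => m i.succ) := splitFwd_tprod ns m

lemma split_map (g : ∀ i, Module.End ℂ (Fin (ns i + 1) → ℂ)) (z : TPS ns) :
    split ns (PiTensorProduct.map g z) =
      TensorProduct.map (g 0) (PiTensorProduct.map fun i : Fin N => g i.succ) (split ns z) := by
  refine LinearMap.congr_fun (f := (split ns).toLinearMap ∘ₗ PiTensorProduct.map g)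
    (g := TensorProduct.map (g 0) (PiTensorProduct.map fun i : Fin N => g i.succ) ∘ₗ
      (split ns).toLinearMap) ?_ z
  refine PiTensorProduct.ext (MultilinearMap.ext fun m => ?_)
  simp only [LinearMap.compMultilinearMap_apply, LinearMap.comp_apply, LinearEquiv.coe_coe,
    PiTensorProduct.map_tprod, split_tprod, TensorProduct.map_tmul]

lemma map_sum_right {A B ι : Type*} [AddCommGroup A] [Module ℂ A] [AddCommGroup B] [Module ℂ B]
    (s : Finset ι) (g : Module.End ℂ A) (h : ι → Module.End ℂ B) :
    TensorProduct.map g (∑ j ∈ s, h j) = ∑ j ∈ s, TensorProduct.map g (h j) :=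
  map_sum (TensorProduct.mapBilinear (.id ℂ) A B A B g) h s

/-- Splitting off the first factor carries the iterated coproduct to the coproduct on `V(ℓ,a) ⊗ W`,
where `W` is the tensor product of the remaining factors (coassociativity). -/
lemma split_intertwines (q : ℂ) (as : Fin (N + 1) → ℂ) :
    IntertwinesAll (split ns).toLinearMap (tpE0 q ns as) (tpE1p q ns) (tpE1m q ns) (tpK0 q ns)
      (tpK1 q ns)
      (TX q (as 0) (ns 0) (tpE0 q (fun i => ns (Fin.succ i)) fun i => as (Fin.succ i)))
      (TE q (ns 0) (tpE1p q fun i => ns (Fin.succ i)))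
      (TF q (ns 0) (tpE1m q fun i => ns (Fin.succ i)) (tpK0 q fun i => ns (Fin.succ i)))
      (TK0 q (ns 0) (tpK0 q fun i => ns (Fin.succ i)))
      (TK1 q (ns 0) (tpK1 q fun i => ns (Fin.succ i))) := by
  have hs : ∀ (i : Fin N), ¬ (i.succ < 0) := fun i => Fin.not_lt_zero _
  refine ⟨?_, ?_, ?_, ?_, ?_⟩ <;> refine LinearMap.ext fun z => ?_ <;>
    simp only [LinearMap.comp_apply, LinearEquiv.coe_coe]
  · rw [tpE0, Fin.sum_univ_succ, LinearMap.add_apply, map_add, split_map, TX, LinearMap.add_apply,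
      tpE0, map_sum_right, LinearMap.sum_apply, LinearMap.sum_apply, map_sum]
    refine (add_comm _ _).trans ?_
    congr 1
    · refine Finset.sum_congr rfl fun j _ => ?_
      rw [split_map]
      simp only [Fin.succ_pos, if_true, Fin.succ_lt_succ_iff, Fin.succ_inj]
    · simp only [lt_self_iff_false, if_false, if_true, hs, Fin.succ_ne_zero]
      rw [PiTensorProduct.map_id]; rfl
  · rw [tpE1p, Fin.sum_univ_succ, LinearMap.add_apply, map_add, split_map, TE, LinearMap.add_apply,
      tpE1p, map_sum_right, LinearMap.sum_apply, LinearMap.sum_apply, map_sum]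
    refine (add_comm _ _).trans ?_
    congr 1
    · refine Finset.sum_congr rfl fun j _ => ?_
      rw [split_map]
      simp only [Fin.succ_pos, if_true, Fin.succ_lt_succ_iff, Fin.succ_inj]
    · simp only [lt_self_iff_false, if_false, if_true, hs, Fin.succ_ne_zero]
      rw [PiTensorProduct.map_id]; rfl
  · rw [tpE1m, Fin.sum_univ_succ, LinearMap.add_apply, map_add, split_map, TF, LinearMap.add_apply,
      tpE1m, map_sum_right, LinearMap.sum_apply, LinearMap.sum_apply, map_sum]
    refine (add_comm _ _).trans ?_
    congr 1
    · refine Finset.sum_congr rfl fun j _ => ?_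
      rw [split_map]
      simp only [Fin.succ_pos, if_true, Fin.succ_lt_succ_iff, Fin.succ_inj]
      rfl
  · rw [tpK0, split_map]; rfl
  · rw [tpK1, split_map]; rfl

end tps

/-! ### Realization of Drinfeld polynomials -/

section strings
variable (q : ℂ)

/-- The `q`-string `{b, b q⁻², …, b q^(-2(ℓ-1))}`. -/
def str (b : ℂ) (ℓ : ℕ) : Multiset ℂ := (Multiset.range ℓ).map fun k => b * q ^ (-(2 * (k : ℤ)))

lemma str_succ (b : ℂ) (ℓ : ℕ) : str q b (ℓ + 1) = (b * q ^ (-(2 * (ℓ : ℤ)))) ::ₘ str q b ℓ := by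
  simp [str, Multiset.range_succ]

lemma str_card (b : ℂ) (ℓ : ℕ) : (str q b ℓ).card = ℓ := by simp [str]

variable {q} in
lemma str_up (hq0 : q ≠ 0) (b : ℂ) (ℓ : ℕ) :
    str q (b * q ^ 2) (ℓ + 1) = (b * q ^ 2) ::ₘ str q b ℓ := by
  induction ℓ with
  | zero => simp [str]
  | succ ℓ ih =>
    rw [str_succ, ih, str_succ q b, Multiset.cons_swap]
    congr 2
    rw [mul_assoc, ← zpow_natCast q 2, ← zpow_add₀ hq0]
    congr 2
    push_cast; ring

lemma qprod_PR (u : ℂ) (n : ℕ) : qprod q (1 : Polynomial ℂ) Polynomial.X u n = PR (str q u n) := by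
  induction n with
  | zero => simp [qprod, str, PR_zero]
  | succ n ih => rw [qprod, ih, str_succ, PR_cons, Polynomial.smul_eq_C_mul]

lemma PE_eq (a : ℂ) (ℓ : ℕ) : PE q a ℓ = PR (str q (a * q ^ (ℓ : ℤ)) ℓ) := qprod_PR q _ _

variable {q} in
/-- A maximal `q`-string can be split off any nonempty multiset: neither of the two elements extending
it occurs in the rest. -/
lemma exists_str (hq0 : q ≠ 0) (S : Multiset ℂ) (hS : S ≠ 0) :
    ∃ b ℓ S', 1 ≤ ℓ ∧ S = str q b ℓ + S' ∧ b * q ^ 2 ∉ S' ∧ b * q ^ (-(2 * (ℓ : ℤ))) ∉ S' := by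
  by_contra! hcon
  have key : ∀ ℓ : ℕ, ∃ b, str q b (ℓ + 1) ≤ S := by
    intro ℓ
    induction ℓ with
    | zero =>
      obtain ⟨b, hb⟩ := Multiset.exists_mem_of_ne_zero hS
      exact ⟨b, by simpa [str] using hb⟩
    | succ ℓ ih =>
      obtain ⟨b, hb⟩ := ih
      obtain ⟨S', rfl⟩ := Multiset.le_iff_exists_add.1 hb
      by_cases h2 : b * q ^ 2 ∈ S'
      · refine ⟨b * q ^ 2, ?_⟩
        rw [str_up hq0, ← Multiset.singleton_add, add_comm]
        exact add_le_add_right (Multiset.singleton_le.2 h2) _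
      · have h3 := hcon b (ℓ + 1) S' (by omega) rfl h2
        refine ⟨b, ?_⟩
        rw [str_succ, ← Multiset.singleton_add, add_comm]
        exact add_le_add_right (Multiset.singleton_le.2 h3) _
  obtain ⟨b, hb⟩ := key S.card
  have := Multiset.card_le_card hb
  rw [str_card] at this
  omega

end strings

section existence
variable {q : ℂ}

/-- The empty tensor product is the trivial module, with Drinfeld polynomial `1`. -/
lemma good_nil (as : Fin 0 → ℂ) (ℓs : Fin 0 → ℕ) :
    ∃ t, Good q (tpE0 q ℓs as) (tpE1p q ℓs) (tpE1m q ℓs) (tpK0 q ℓs) (tpK1 q ℓs) 0 t (PR 0) := by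
  have hC : Good q (0 : Module.End ℂ ℂ) 0 0 1 1 0 1 (PR 0) := by
    refine ⟨⟨?_, ?_, ?_, ?_, ?_, ?_, ?_, ?_, ?_, ?_, ?_, ?_⟩, ?_, ?_, ?_, one_ne_zero, ?_, ?_⟩
    iterate 12 simp [brk, brkq]
    · intro N _ _ _ _ _
      exact eq_bot_or_eq_top N
    · unfold Gr
      refine eq_top_iff.2 fun z _ => Submodule.mem_iSup_of_mem 0 (Module.End.mem_eigenspace_iff.2 ?_)
      simp
    · simp [IsWt]
    · exact fun z _ => ⟨z, by simp⟩
    · intro i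
      rcases i with _ | i
      · simp [PR_zero, qfac_zero]
      · simp [PR_zero, Polynomial.coeff_one]
  have hm : ∀ g : ∀ i : Fin 0, Module.End ℂ (Fin (ℓs i + 1) → ℂ), PiTensorProduct.map g = 1 := by
    intro g
    rw [show g = fun i => 1 from funext fun i => i.elim0, PiTensorProduct.map_one]
  refine ⟨_, hC.transport (PiTensorProduct.isEmptyEquiv (Fin 0)).symm ⟨?_, ?_, ?_, ?_, ?_⟩⟩
  · simp [tpE0]
  · simp [tpE1p]
  · simp [tpE1m]
  · rw [tpK0, hm]; rfl
  · rw [tpK1, hm]; rfl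

/-- `good_T` for the tensor product over `Fin (n + 1)`. -/
lemma good_cons (hq0 : q ≠ 0) (hq : ∀ n : ℕ, 0 < n → q ^ n ≠ 1) {n : ℕ} {ℓs : Fin n → ℕ}
    {as : Fin n → ℂ} {d : ℕ} {t : TPS ℓs} {S : Multiset ℂ} {ℓ : ℕ} {a : ℂ}
    (h : Good q (tpE0 q ℓs as) (tpE1p q ℓs) (tpE1m q ℓs) (tpK0 q ℓs) (tpK1 q ℓs) d t (PR S))
    (hS : S.card = d) (ha1 : a * q ^ ((ℓ : ℤ) + 2) ∉ S) (ha2 : a * q ^ (-(ℓ : ℤ)) ∉ S) :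
    ∃ t' : TPS (Fin.cons ℓ ℓs), Good q (tpE0 q (Fin.cons ℓ ℓs) (Fin.cons a as))
      (tpE1p q (Fin.cons ℓ ℓs)) (tpE1m q (Fin.cons ℓ ℓs)) (tpK0 q (Fin.cons ℓ ℓs))
      (tpK1 q (Fin.cons ℓ ℓs)) (ℓ + d) t' (PE q a ℓ * PR S) := by
  obtain ⟨h1, h2, h3, h4, h5⟩ := split_intertwines (Fin.cons ℓ ℓs : Fin (n + 1) → ℕ) q (Fin.cons a as)
  have hg := good_T (a := a) (ℓ := ℓ) hq0 hq h hS ha1 ha2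
  have inv : ∀ {A : Type} {B : Type} [AddCommGroup A] [Module ℂ A] [AddCommGroup B] [Module ℂ B]
      (φ : A ≃ₗ[ℂ] B) (g : Module.End ℂ A) (g' : Module.End ℂ B),
      φ.toLinearMap ∘ₗ g = g' ∘ₗ φ.toLinearMap → φ.symm.toLinearMap ∘ₗ g' = g ∘ₗ φ.symm.toLinearMap := by
    intro A B _ _ _ _ φ g g' hg
    refine LinearMap.ext fun z => φ.injective ?_
    have := LinearMap.congr_fun hg (φ.symm z)
    simp at this
    simp [this]
  exact ⟨_, hg.transport (split (Fin.cons ℓ ℓs : Fin (n + 1) → ℕ)).symm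
    ⟨inv _ _ _ h1, inv _ _ _ h2, inv _ _ _ h3, inv _ _ _ h4, inv _ _ _ h5⟩⟩

/-- Every polynomial with constant term `1` is the Drinfeld polynomial of an irreducible tensor
product of evaluation modules, of lowest weight minus its degree: removing maximal `q`-strings one
after the other puts each factor in general position with respect to the remaining ones. -/
theorem exists_good (hq0 : q ≠ 0) (hq : ∀ n : ℕ, 0 < n → q ^ n ≠ 1) (m : ℕ) :
    ∀ S : Multiset ℂ, S.card = m → (0 : ℂ) ∉ S → ∃ (n : ℕ) (ℓs : Fin n → ℕ) (as : Fin n → ℂ),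
      (∀ i, 1 ≤ ℓs i) ∧ (∀ i, as i ≠ 0) ∧ ∃ t, Good q (tpE0 q ℓs as) (tpE1p q ℓs) (tpE1m q ℓs)
        (tpK0 q ℓs) (tpK1 q ℓs) S.card t (PR S) := by
  induction m using Nat.strong_induction_on with
  | _ m ih =>
    intro S hm h0
    by_cases hS : S = 0
    · subst hS
      exact ⟨0, Fin.elim0, Fin.elim0, fun i => i.elim0, fun i => i.elim0, good_nil _ _⟩
    · obtain ⟨b, ℓ, S', hℓ, rfl, hb1, hb2⟩ := exists_str hq0 S hS
      rw [Multiset.card_add, str_card] at hm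
      have hb0 : b ≠ 0 := by
        rintro rfl
        obtain ⟨j, rfl⟩ : ∃ j, ℓ = j + 1 := ⟨ℓ - 1, by omega⟩
        refine h0 (Multiset.mem_add.2 (Or.inl ?_))
        rw [str_succ, zero_mul]
        exact Multiset.mem_cons_self _ _
      obtain ⟨n, ℓs, as, h1, h2, t, ht⟩ := ih S'.card (by omega) S' rfl
        (fun h => h0 (Multiset.mem_add.2 (Or.inr h)))
      obtain ⟨t', ht'⟩ := good_cons (a := b * q ^ (-(ℓ : ℤ))) (ℓ := ℓ) hq0 hq ht rfl
        (by
          rw [mul_assoc, ← zpow_add₀ hq0, neg_add_cancel_left]; exact_mod_cast hb1)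
        (by
          rw [mul_assoc, ← zpow_add₀ hq0, show -(ℓ : ℤ) + -ℓ = -(2 * ℓ) by ring]; exact hb2)
      refine ⟨n + 1, Fin.cons ℓ ℓs, Fin.cons (b * q ^ (-(ℓ : ℤ))) as, ?_, ?_, t', ?_⟩
      · intro i
        refine Fin.cases ?_ (fun i => ?_) i
        · exact hℓ
        · exact h1 i
      · intro i
        refine Fin.cases ?_ (fun i => ?_) i
        · exact mul_ne_zero hb0 (zpow_ne_zero _ hq0)
        · exact h2 i
      · rw [Multiset.card_add, str_card, PR_add]
        rwa [PE_eq, mul_assoc, ← zpow_add₀ hq0, neg_add_cancel, zpow_zero, mul_one] at ht'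

/-- A polynomial with constant term `1` factors as `∏ (1 + bX)`. -/
lemma exists_PR (P : Polynomial ℂ) (hP : P.coeff 0 = 1) :
    ∃ S : Multiset ℂ, (0 : ℂ) ∉ S ∧ P = PR S ∧ S.card = P.natDegree := by
  have hP0 : P ≠ 0 := by rintro rfl; simp at hP
  have hr0 : (0 : ℂ) ∉ P.roots := by
    intro h
    rw [Polynomial.mem_roots hP0, Polynomial.IsRoot, ← Polynomial.coeff_zero_eq_eval_zero, hP] at h
    exact one_ne_zero h
  have hsplit := IsAlgClosed.splits P
  refine ⟨P.roots.map fun r => -r⁻¹, ?_, ?_, ?_⟩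
  · intro h
    obtain ⟨r, hr, h1⟩ := Multiset.mem_map.1 h
    have : r = 0 := by simpa using h1
    exact hr0 (this ▸ hr)
  · have key : ∀ R : Multiset ℂ, (0 : ℂ) ∉ R →
        (R.map fun r => Polynomial.X - Polynomial.C r).prod =
          Polynomial.C (R.map fun r => -r).prod * PR (R.map fun r => -r⁻¹) := by
      intro R
      induction R using Multiset.induction_on with
      | empty => simp [PR_zero]
      | cons r R ih =>
        intro h
        rw [Multiset.mem_cons, not_or] at h
        simp only [Multiset.map_cons, Multiset.prod_cons, PR_cons, ih h.2, map_mul]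
        have : (Polynomial.C (-r) * Polynomial.C (-r⁻¹) : Polynomial ℂ) = 1 := by
          rw [← map_mul, neg_mul_neg, mul_inv_cancel₀ (Ne.symm h.1), map_one]
        rw [Polynomial.C_neg] at this ⊢
        linear_combination (-Polynomial.X * Polynomial.C (R.map fun r => -r).prod * PR (R.map fun r => -r⁻¹)) * this
    have h1 := hsplit.eq_prod_roots
    rw [key _ hr0, ← mul_assoc, ← map_mul] at h1
    have h2 := congrArg (fun p => Polynomial.coeff p 0) h1
    have h3 : ∀ R : Multiset ℂ, (PR R).coeff 0 = 1 := by
      intro R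
      induction R using Multiset.induction_on with
      | empty => simp [PR_zero]
      | cons r R ih => simp [PR_cons, Polynomial.mul_coeff_zero, ih]
    simp only [Polynomial.coeff_C_mul, h3, hP, mul_one] at h2
    rwa [← h2, map_one, one_mul] at h1
  · rw [Multiset.card_map]
    exact hsplit.natDegree_eq_card_roots.symm

end existence

/-! ### Commutativity on the lowest weight space -/

section commute
variable {q : ℂ}

/-- On vectors of lowest weight, an irreducible word of length two either vanishes or has the form
`e^i x^i e^j x^j` with `j ≤ i`. -/
lemma irr_two (hq0 : q ≠ 0) {V : Type*} [AddCommGroup V] [Module ℂ V] {x e f K0 K1 : Module.End ℂ V}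
    (h : IsUqpRep q x e f K0 K1) {n0 : ℤ} (hneg : ∀ m, m < n0 → ∀ z, IsWt q K0 m z → z = 0)
    {v : V} (hv : IsWt q K0 n0 v) {n : ℕ} {L : List (ℕ × ℕ)} (h2 : L.length = 2) (hf : fs L = n)
    (hs : sn L = n) (hI : Irr L) :
    wd e x L v = 0 ∨ ∃ i j, i + j = n ∧ j ≤ i ∧ L = [(i, i), (j, j)] := by
  obtain ⟨⟨a, b⟩, ⟨c, d⟩, rfl⟩ := List.length_eq_two.1 h2
  rcases hI.dichotomy (hf.trans hs.symm) with ⟨p, L', hL, hlt⟩ | hall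
  · left
    rw [hL, wd_cons, Module.End.mul_apply,
      hneg _ (by omega) _ (wd_wt hq0 h hv L'), map_zero]
  · right
    obtain rfl : b = a := hall (a, b) (by simp)
    obtain rfl : d = c := hall (c, d) (by simp)
    have h3 := hI [] [] b b d d rfl
    refine ⟨b, d, ?_, by omega, rfl⟩
    simpa [fs] using hf

lemma wd_map {R R' : Type*} [Ring R] [Ring R'] [Algebra ℂ R] [Algebra ℂ R'] (π : R →ₐ[ℂ] R')
    (e x : R) (L : List (ℕ × ℕ)) : π (wd e x L) = wd (π e) (π x) L := by
  induction L with
  | nil => simp [wd_nil]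
  | cons p L ih => rw [wd_cons, wd_cons, map_mul, map_mul, map_pow, map_pow, ih]

lemma wd_two {M : Type*} [Ring M] (e x : M) (i j : ℕ) :
    wd e x [(i, i), (j, j)] = e ^ i * x ^ i * (e ^ j * x ^ j) := by simp [wd]

/-- If a straightening of the word `L₀` holds in an algebra `R` mapping to `End V`, with coefficients
`c` supported on irreducible words of length two, then on a lowest weight vector only the words
`e^i x^i e^j x^j` with `j ≤ i` survive. -/
lemma expand (hq0 : q ≠ 0) {V : Type*} [AddCommGroup V] [Module ℂ V] {x e f K0 K1 : Module.End ℂ V}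
    (h : IsUqpRep q x e f K0 K1) {n0 : ℤ} (hneg : ∀ m, m < n0 → ∀ z, IsWt q K0 m z → z = 0)
    {v : V} (hv : IsWt q K0 n0 v) {n : ℕ} (c : List (ℕ × ℕ) →₀ ℂ)
    (hc : c ∈ Finsupp.supported ℂ ℂ {L' | L'.length = 2 ∧ fs L' = n ∧ sn L' = n ∧ Irr L'})
    {R : Type*} [Ring R] [Algebra ℂ R] (E X : R) (π : R →ₐ[ℂ] Module.End ℂ V) (hE : π E = e)
    (hX : π X = x) {L₀ : List (ℕ × ℕ)} (hL₀ : Finsupp.linearCombination ℂ (wd E X) c = wd E X L₀) :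
    wd e x L₀ v =
      ∑ p ∈ (Finset.HasAntidiagonal.antidiagonal n).filter (fun p : ℕ × ℕ => p.2 ≤ p.1),
        c [(p.1, p.1), (p.2, p.2)] • wd e x [(p.1, p.1), (p.2, p.2)] v := by
  classical
  set s := ((Finset.HasAntidiagonal.antidiagonal n).filter (fun p : ℕ × ℕ => p.2 ≤ p.1)).image
    (fun p : ℕ × ℕ => [(p.1, p.1), (p.2, p.2)]) with hs
  have h1 : wd e x L₀ v = ∑ L ∈ c.support, c L • wd e x L v := by
    rw [← hE, ← hX, ← wd_map, ← hL₀, hE, hX, Finsupp.linearCombination_apply, Finsupp.sum, map_sum, LinearMap.sum_apply]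
    refine Finset.sum_congr rfl fun L _ => ?_
    rw [map_smul, wd_map, hE, hX, LinearMap.smul_apply]
  have h2 : ∑ L ∈ c.support, c L • wd e x L v = ∑ L ∈ c.support ∪ s, c L • wd e x L v := by
    refine Finset.sum_subset Finset.subset_union_left fun L _ hL => ?_
    rw [Finsupp.notMem_support_iff.1 hL, zero_smul]
  have h3 : ∑ L ∈ s, c L • wd e x L v = ∑ L ∈ c.support ∪ s, c L • wd e x L v := by
    refine Finset.sum_subset Finset.subset_union_right fun L hL hLs => ?_
    rcases Finset.mem_union.1 hL with hL | hL
    · obtain ⟨l1, l2, l3, l4⟩ := (Finsupp.mem_supported _ _).1 hc hL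
      rcases irr_two hq0 h hneg hv l1 l2 l3 l4 with h0 | ⟨i, j, hij, hji, rfl⟩
      · rw [h0, smul_zero]
      · exact absurd (Finset.mem_image.2 ⟨(i, j), Finset.mem_filter.2
          ⟨Finset.HasAntidiagonal.mem_antidiagonal.2 hij, hji⟩, rfl⟩) hLs
    · exact absurd hL hLs
  rw [h1, h2, ← h3, hs, Finset.sum_image]
  rintro ⟨i, j⟩ _ ⟨i', j'⟩ _ hp
  simpa using hp

/-- A polynomial that separates the index `(i₀, j₀)` from the other `(i, j)` with `i + j = i₀ + j₀` and
`j ≤ i`. -/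
lemma test_poly (i0 j0 : ℕ) (hj : j0 ≤ i0) (hn : 0 < i0 + j0) : ∃ P : Polynomial ℂ, P.coeff 0 = 1 ∧
    ∀ i j, i + j = i0 + j0 → j ≤ i → P.coeff i * P.coeff j = if i = i0 then 1 else 0 := by
  refine ⟨1 + Polynomial.X ^ i0 + (if j0 = i0 ∨ j0 = 0 then 0 else Polynomial.X ^ j0), ?_, ?_⟩
  · have h1 : i0 ≠ 0 := by omega
    split_ifs with h
    · simp [Polynomial.coeff_one, Polynomial.coeff_X_pow, h1.symm]
    · rw [not_or] at h
      simp [Polynomial.coeff_one, Polynomial.coeff_X_pow, h1.symm, Ne.symm h.2]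
  · intro i j hij hji
    split_ifs with h h' h'
    all_goals
      simp only [Polynomial.coeff_add, Polynomial.coeff_one, Polynomial.coeff_X_pow,
        Polynomial.coeff_zero]
      split_ifs <;> first | omega | norm_num

/-- The operators `e^i x^i` commute on vectors of lowest weight: the straightening of
`e^b x^b e^a x^a` into irreducible words has universal coefficients, and these are read off from
the irreducible tensor products of evaluation modules. -/
theorem S_comm (hq0 : q ≠ 0) (hq : ∀ n : ℕ, 0 < n → q ^ n ≠ 1) {V : Type*} [AddCommGroup V]
    [Module ℂ V] {x e f K0 K1 : Module.End ℂ V}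
    (h : IsUqpRep q x e f K0 K1) {n0 : ℤ} (hneg : ∀ m, m < n0 → ∀ z, IsWt q K0 m z → z = 0)
    {v : V} (hv : IsWt q K0 n0 v) (a b : ℕ) (hba : b ≤ a) (hb : 0 < b) :
    (e ^ b * x ^ b) ((e ^ a * x ^ a) v) = (e ^ a * x ^ a) ((e ^ b * x ^ b) v) := by
  let ι := {S : Multiset ℂ // (0 : ℂ) ∉ S}
  choose N ℓs as _ _ t ht using fun S : ι => exists_good hq0 hq S.1.card S.1 rfl S.2
  -- Straightening in the product of `End V` and the endomorphism rings of all the test modules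
  -- produces the same coefficients for all of them.
  let R := Module.End ℂ V × (∀ S : ι, Module.End ℂ (TPS (ℓs S)))
  let E : R := (e, fun S => tpE1p q (ℓs S))
  let X : R := (x, fun S => tpE0 q (ℓs S) (as S))
  have hEX : Serre q E X := by
    rw [serre_iff q hq0]
    refine Prod.ext ?_ (funext fun S => ?_)
    · exact (serre_iff q hq0 _ _).1 (rep_serre_ex hq0 h)
    · exact (serre_iff q hq0 _ _).1 (rep_serre_ex hq0 (ht S).rep)
  have hXE : Serre q X E := by
    rw [serre_iff q hq0]
    refine Prod.ext ?_ (funext fun S => ?_)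
    · exact (serre_iff q hq0 _ _).1 (rep_serre_xe hq0 h)
    · exact (serre_iff q hq0 _ _).1 (rep_serre_xe hq0 (ht S).rep)
  have hz := zigzag q hq0 hq E X hEX hXE 2 (b + a) (b + a) [(b, b), (a, a)] rfl (by simp [fs])
    (by simp [sn])
  obtain ⟨c, hc, hcz⟩ := (Finsupp.mem_span_image_iff_linearCombination ℂ).1 hz
  -- Testing with Drinfeld polynomials from `test_poly` shows that only the word
  -- `e^a x^a e^b x^b` occurs, with coefficient `1`.
  have hγ : ∀ i0 j0, j0 ≤ i0 → i0 + j0 = b + a →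
      c [(i0, i0), (j0, j0)] = if i0 = a then 1 else 0 := by
    intro i0 j0 hj0 hij0
    obtain ⟨P, hP0, hP⟩ := test_poly i0 j0 hj0 (by omega)
    obtain ⟨S, hS0, rfl, -⟩ := exists_PR P hP0
    have hg := ht ⟨S, hS0⟩
    set π : R →ₐ[ℂ] Module.End ℂ (TPS (ℓs ⟨S, hS0⟩)) :=
      (Pi.evalAlgHom ℂ (fun S : ι => Module.End ℂ (TPS (ℓs S))) ⟨S, hS0⟩).comp (AlgHom.snd ℂ _ _)
    have hex := expand hq0 hg.rep (hg.gr.neg hq0 hq) hg.wt c hc E X π rfl rfl hcz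
    have hS : ∀ i j, wd (tpE1p q (ℓs ⟨S, hS0⟩)) (tpE0 q (ℓs ⟨S, hS0⟩) (as ⟨S, hS0⟩)) [(i, i), (j, j)]
        (t ⟨S, hS0⟩) = (qfac q i ^ 2 * qfac q j ^ 2 * ((PR S).coeff i * (PR S).coeff j)) •
          t ⟨S, hS0⟩ := by
      intro i j
      have hP' := hg.hP
      rw [wd_two, Module.End.mul_apply, Module.End.mul_apply, Module.End.mul_apply, hP', map_smul,
        map_smul, hP', smul_smul]
      congr 1; ring
    rw [Finset.sum_eq_single_of_mem (i0, j0) (Finset.mem_filter.2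
      ⟨Finset.HasAntidiagonal.mem_antidiagonal.2 hij0, hj0⟩)] at hex
    · rw [hS, hS, smul_smul, mul_comm ((PR S).coeff b), hP a b (by omega) hba, hP i0 j0 rfl hj0,
        if_pos rfl, mul_one] at hex
      have hex' := smul_left_injective ℂ hg.ne hex
      have f1 : qfac q i0 ^ 2 * qfac q j0 ^ 2 ≠ 0 :=
        mul_ne_zero (pow_ne_zero 2 (qfac_ne q hq0 hq _)) (pow_ne_zero 2 (qfac_ne q hq0 hq _))
      refine mul_right_cancel₀ f1 ?_
      simp only at hex'
      rw [← hex']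
      by_cases hia : a = i0
      · obtain rfl := hia
        obtain rfl : j0 = b := by omega
        simp; ring
      · rw [if_neg hia, if_neg (Ne.symm hia)]; simp
    · rintro ⟨i, j⟩ hp hne
      obtain ⟨hp1, hp2⟩ := Finset.mem_filter.1 hp
      have hp1' : i + j = b + a := Finset.HasAntidiagonal.mem_antidiagonal.1 hp1
      have hne' : i ≠ i0 := by
        rintro rfl
        exact hne (by congr 1; omega)
      rw [hS, hP i j (by omega) hp2, if_neg hne', mul_zero, zero_smul, smul_zero]
  have hex := expand hq0 h hneg hv c hc E X (AlgHom.fst ℂ _ _) rfl rfl hcz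
  rw [Finset.sum_eq_single_of_mem (a, b) (Finset.mem_filter.2
      ⟨Finset.HasAntidiagonal.mem_antidiagonal.2 (add_comm a b), hba⟩)] at hex
  · rw [hγ a b hba (add_comm a b), if_pos rfl, one_smul] at hex
    rwa [wd_two, wd_two] at hex
  · rintro ⟨i, j⟩ hp hne
    obtain ⟨hp1, hp2⟩ := Finset.mem_filter.1 hp
    have hp1' : i + j = b + a := Finset.HasAntidiagonal.mem_antidiagonal.1 hp1
    rw [hγ i j hp2 hp1', if_neg, zero_smul]
    rintro rfl
    exact hne (by congr 1; omega)

end commute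

/-- A family of operators which commute on a nonzero invariant subspace has a common eigenvector: on a
minimal nonzero invariant subspace each of them is a scalar. -/
lemma common_eigen {V : Type*} [AddCommGroup V] [Module ℂ V] [FiniteDimensional ℂ V] {ι : Type*}
    (T : ι → Module.End ℂ V) (U : Submodule ℂ V) (hU : U ≠ ⊥) (hT : ∀ i, ∀ z ∈ U, T i z ∈ U)
    (hcomm : ∀ i j, ∀ z ∈ U, T i (T j z) = T j (T i z)) :
    ∃ v ∈ U, v ≠ 0 ∧ ∀ i, ∃ μ : ℂ, T i v = μ • v := by
  obtain ⟨N, ⟨hN0, hNU, hNT⟩, hmin⟩ := (wellFounded_lt (α := Submodule ℂ V)).has_min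
    {N | N ≠ ⊥ ∧ N ≤ U ∧ ∀ i, ∀ z ∈ N, T i z ∈ N} ⟨U, hU, le_rfl, hT⟩
  obtain ⟨v, hvN, hv0⟩ := N.exists_mem_ne_zero_of_ne_bot hN0
  refine ⟨v, hNU hvN, hv0, fun i => ?_⟩
  have : Nontrivial N := N.nontrivial_iff_ne_bot.2 hN0
  obtain ⟨μ, hμ⟩ := Module.End.exists_eigenvalue ((T i).restrict (hNT i))
  obtain ⟨w, hw, hw0⟩ := hμ.exists_hasEigenvector
  refine ⟨μ, ?_⟩
  by_contra hne
  refine hmin (N ⊓ Module.End.eigenspace (T i) μ) ⟨?_, inf_le_left.trans hNU, ?_⟩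
    (lt_of_le_of_ne inf_le_left fun heq => ?_)
  · refine (Submodule.ne_bot_iff _).2 ⟨w, ⟨w.2, ?_⟩, fun h0 => hw0 (Subtype.ext h0)⟩
    exact Module.End.mem_eigenspace_iff.2 (congrArg Subtype.val (Module.End.mem_eigenspace_iff.1 hw))
  · rintro j z ⟨hzN, hz⟩
    refine ⟨hNT j z hzN, Module.End.mem_eigenspace_iff.2 ?_⟩
    rw [hcomm i j z (hNU hzN), Module.End.mem_eigenspace_iff.1 hz, map_smul]
  · rw [← heq] at hvN
    exact hne (Module.End.mem_eigenspace_iff.1 hvN.2)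

/-! ### Existence of a common eigenvector -/

lemma PE_zero (q : ℂ) (ℓ : ℕ) : PE q 0 ℓ = 1 := by
  rw [PE_eq, zero_mul]
  induction ℓ with
  | zero => simp [str, PR_zero]
  | succ ℓ ih => rw [str_succ, PR_cons, ih]; simp

/-- The space of lowest weight vectors contains a common eigenvector of the operators `eⁱ xⁱ`, and
the eigenvalues are recorded by a polynomial of degree at most `d`. -/
lemma exists_top {q : ℂ} (hq0 : q ≠ 0) (hq : ∀ n : ℕ, 0 < n → q ^ n ≠ 1) {V : Type*}
    [AddCommGroup V] [Module ℂ V] [FiniteDimensional ℂ V] [Nontrivial V]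
    {x e f K0 K1 : Module.End ℂ V} (h : IsUqpRep q x e f K0 K1) (ht : IsType11 q K0) :
    ∃ d : ℕ, Gr q K0 d ∧ ∃ v, v ≠ 0 ∧ IsWt q K0 (-(d : ℤ)) v ∧
      ∃ P : Polynomial ℂ, P.coeff 0 = 1 ∧ P.natDegree ≤ d ∧ HasP q x e v P := by
  obtain ⟨d, hg, v0, hv0, hw0⟩ := top_data hq0 hq h ht
  have hS : ∀ a b : ℕ, b ≤ a → ∀ z, IsWt q K0 (-(d : ℤ)) z →
      (e ^ b * x ^ b) ((e ^ a * x ^ a) z) = (e ^ a * x ^ a) ((e ^ b * x ^ b) z) := by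
    intro a b hba z hz
    rcases Nat.eq_zero_or_pos b with rfl | hb
    · simp
    · exact S_comm hq0 hq h (hg.neg hq0 hq) hz a b hba hb
  obtain ⟨v, hvU, hvne, hv⟩ := common_eigen (fun i : ℕ => e ^ i * x ^ i)
    (Module.End.eigenspace K0 (q ^ (-(d : ℤ))))
    ((Submodule.ne_bot_iff _).2 ⟨v0, Module.End.mem_eigenspace_iff.2 hw0, hv0⟩)
    (fun i z hz => by
      have hz' : IsWt q K0 (-(d : ℤ)) z := Module.End.mem_eigenspace_iff.1 hz
      have := (hz'.up_pow hq0 h.K0E0 i).down_pow hq0 h.K0E1p i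
      rw [add_sub_cancel_right] at this
      exact Module.End.mem_eigenspace_iff.2 this)
    (fun i j z hz => by
      have hz' : IsWt q K0 (-(d : ℤ)) z := Module.End.mem_eigenspace_iff.1 hz
      rcases le_total i j with hij | hij
      · exact hS j i hij z hz'
      · exact (hS i j hij z hz').symm)
  have hvw : IsWt q K0 (-(d : ℤ)) v := Module.End.mem_eigenspace_iff.1 hvU
  choose σ hσ using hv
  have hbig : ∀ i, d < i → σ i = 0 := by
    intro i hi
    have h1 := hσ i
    rw [Module.End.mul_apply, hg.big hq0 hq _ (by omega) _ (hvw.up_pow hq0 h.K0E0 i), map_zero,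
      eq_comm, smul_eq_zero] at h1
    exact h1.resolve_right hvne
  have h0 : σ 0 = 1 := by
    have h1 := hσ 0
    simp only [pow_zero, mul_one, Module.End.one_apply] at h1
    exact (smul_left_injective ℂ hvne (by simpa using h1)).symm
  have hc : ∀ i, (∑ k ∈ Finset.range (d + 1), Polynomial.monomial k (σ k / qfac q k ^ 2)).coeff i =
      σ i / qfac q i ^ 2 := by
    intro i
    rw [Polynomial.finsetSum_coeff]
    simp only [Polynomial.coeff_monomial]
    rw [Finset.sum_ite_eq']
    split_ifs with hi
    · rfl
    · rw [hbig i (by simpa using hi), zero_div]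
  refine ⟨d, hg, v, hvne, hvw, _, (hc 0).trans (by simp [h0, qfac_zero]), ?_, ?_⟩
  · refine Polynomial.natDegree_le_iff_coeff_eq_zero.2 fun i hi => ?_
    rw [hc, hbig i hi, zero_div]
  · intro i
    rw [hc, mul_div_cancel₀ _ (pow_ne_zero 2 (qfac_ne q hq0 hq i)), ← hσ i]
    rfl

end UqLoop

/-- every finite-dimensional irreducible `U'_q(L(sl₂))`-module of type
`(1,1)` of dimension at least `2` is isomorphic to a tensor product
`V(ℓ) ⊗ V(ℓ₁,a₁) ⊗ ⋯ ⊗ V(ℓₙ,aₙ)` of evaluation modules. -/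
theorem stmt11 (q : ℂ) (hq0 : q ≠ 0) (hq : ∀ n : ℕ, 0 < n → q ^ n ≠ 1)
    {V : Type*} [AddCommGroup V] [Module ℂ V] [FiniteDimensional ℂ V]
    (E0 E1p E1m K0 K1 : Module.End ℂ V) (h : IsUqpRep q E0 E1p E1m K0 K1)
    (hirr : IsIrred E0 E1p E1m K0 K1) (ht : IsType11 q K0)
    (hdim : 2 ≤ Module.finrank ℂ V) :
    ∃ (ℓ n : ℕ) (ℓs : Fin n → ℕ) (as : Fin n → ℂ),
      (∀ i, 1 ≤ ℓs i) ∧ (∀ i, as i ≠ 0) ∧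
      ∃ σ : V ≃ₗ[ℂ] TPS (Fin.cons ℓ ℓs),
        IntertwinesAll σ.toLinearMap E0 E1p E1m K0 K1
          (tpE0 q (Fin.cons ℓ ℓs) (Fin.cons 0 as)) (tpE1p q (Fin.cons ℓ ℓs))
          (tpE1m q (Fin.cons ℓ ℓs)) (tpK0 q (Fin.cons ℓ ℓs)) (tpK1 q (Fin.cons ℓ ℓs)) := by
  have : Nontrivial V := Module.nontrivial_of_finrank_pos (R := ℂ) (by omega)
  obtain ⟨d, hg, v, hvne, hvw, P, hP0, hPd, hP⟩ := UqLoop.exists_top hq0 hq h ht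
  obtain ⟨S, hS0, rfl, hSd⟩ := UqLoop.exists_PR P hP0
  obtain ⟨n, ℓs, as, hℓs, has, t, hgood⟩ := UqLoop.exists_good hq0 hq S.card S rfl hS0
  -- The factor `V(d - deg P)` with parameter `0` adjusts the lowest weight without changing `P`.
  obtain ⟨t', hgood'⟩ := UqLoop.good_cons (a := 0) (ℓ := d - S.card) hq0 hq hgood rfl
    (by rwa [zero_mul]) (by rwa [zero_mul])
  rw [UqLoop.PE_zero, one_mul, Nat.sub_add_cancel (hSd ▸ hPd)] at hgood'
  exact ⟨d - S.card, n, ℓs, as, hℓs, has, UqLoop.uniq hq0 hq h hgood'.rep hirr hgood'.irr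
    (hg.neg hq0 hq) (hgood'.gr.neg hq0 hq) hvw hvne hgood'.wt hgood'.ne hP hgood'.hP⟩

end
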